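/- arXiv:0810.4122 — 4 statements merged into one kernel-verified Lean document; each statement's English description precedes it below -/
import Mathlib

section
/- Let b be a positive integer, C₁, C₂, C₃ ≥ 1 real numbers, and let θ : ℤ₊ → ℝ be non-negative and not identically zero, represented as θ(n) = c·∏_{p^ν ∥ n} A_p(ν) · ∏_{p ∤ n} A_p(0) with c ∈ ℝ and non-negative A_p : ℕ → ℝ (with the convention that an infinite product converges if the partial products of its nonzero factors converge to a nonzero limit, and equals 0 if some factor vanishes), satisfying: (i) for all primes p and all ν ≥ 1, |A_p(ν) − A_p(ν−1)| ≤ C₁ if p^ν | b and |A_p(ν) − A_p(ν−1)| ≤ C₂·p^{−ν} if p^ν ∤ b; and (ii) for all positive integers k, |c·∏_{p ∤ k} A_p(0)| ≤ C₃. Then for every positive integer q and every integer a with gcd(a,q) = 1 there is a constant K depending only on C₂ such that for all t ≥ 0, |∑_{0 < n ≤ t, n ≡ a (mod q)} θ(n) − (t/q)·A(θ,q)| ≤ K·τ(b)·(C₁C₂)^{ω(b)}·C₃·(log(t+2))^{C₂}, where A(θ,q) denotes the value of the convergent infinite product c·∏_{p ∤ q} [ (1 − 1/p)·∑_{ν=0}^∞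 A_p(ν)/p^ν ] · ∏_{p | q} A_p(0). -/
open scoped Classical

/-- The Dirichlet convolution `θ ∗ μ` of a real-valued arithmetic function with the Möbius
function. -/
noncomputable def dconv (θ : ℕ → ℝ) (n : ℕ) : ℝ :=
  ∑ d ∈ n.divisors, (ArithmeticFunction.moebius d : ℝ) * θ (n / d)

/-- `θ` is represented by the constant `c` and the local data `A` in the sense that
`θ(n) = c · ∏_{p^ν ∥ n} A_p(ν) · ∏_{p ∤ n} A_p(0)`, the infinite product over the primes not
dividing `n` being convergent. -/
def EulerRep (θ : ℕ → ℝ) (c : ℝ) (A : ℕ → ℕ → ℝ) : Prop :=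
  (∀ p ν : ℕ, p.Prime → 0 ≤ A p ν) ∧
  (∀ n : ℕ, 0 < n → Multipliable (fun p : {p : ℕ // p.Prime ∧ ¬ p ∣ n} => A p.1 0)) ∧
  (∀ n : ℕ, 0 < n →
    θ n = c * (∏ p ∈ n.primeFactors, A p (n.factorization p)) *
      ∏' p : {p : ℕ // p.Prime ∧ ¬ p ∣ n}, A p.1 0)

/-- The local data `c, A` satisfies the smallness conditions of the set `Θ₂(b, C₁, C₂, C₃)`. -/
def SmallCond (b : ℕ) (C₁ C₂ C₃ c : ℝ) (A : ℕ → ℕ → ℝ) : Prop :=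
  (∀ p ν : ℕ, p.Prime → 1 ≤ ν →
    (p ^ ν ∣ b → |A p ν - A p (ν - 1)| ≤ C₁) ∧
    (¬ p ^ ν ∣ b → |A p ν - A p (ν - 1)| ≤ C₂ / (p : ℝ) ^ ν)) ∧
  (∀ k : ℕ, 0 < k → |c * ∏' p : {p : ℕ // p.Prime ∧ ¬ p ∣ k}, A p.1 0| ≤ C₃)


/-!
With `f = θ ∗ μ`, the local data of `f` are the increments of the local data of `θ`, and the sum is
`∑_d f(d) #{n ≤ t : d ∣ n, n ≡ a (mod q)}`. The inner count is `t / (q d) + O(1)` for `d` coprime to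
`q` and zero otherwise, and it vanishes for `d > t`, so the error is `O((t / d) ^ s)` for every
`0 < s ≤ 1` (Rankin's trick). The smallness conditions majorise `∑_d |f(d)| d^{-s}` by
`C₃ τ(b) C₁^{ω(b)} ζ(1 + s)^{C₂}`, and `ζ(1 + s) ≤ 1 + 1 / s`; the choice `(t + 2) ^ s = 2` gives
the logarithm. The main term is `∑ f(d) / d` over `d` coprime to `q`. Since the local data need not
be `1` at `ν = 0`, each `f(d)` is itself an infinite product; the Euler product of `∑ f(d) / d`
converges because the tails `∏_{p ∉ S} A_p(0)` tend to `1`.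
-/

open Filter Topology

local notation "ℙ" => {p : ℕ // Nat.Prime p}

section ConvergentProducts

variable {ι 𝕜 : Type*} [NormedField 𝕜] {u v : ι → 𝕜}

/-- Classical convergence of an infinite product: up to finitely many factors, the product converges
to a nonzero limit. -/
def IsConvergentProduct (u : ι → 𝕜) : Prop :=
  ∃ w : ι → 𝕜, u =ᶠ[cofinite] w ∧ Multipliable w ∧ ∏' i, w i ≠ 0

lemma IsConvergentProduct.congr (hu : IsConvergentProduct u) (h : v =ᶠ[cofinite] u) :
    IsConvergentProduct v :=
  let ⟨w, huw, hw⟩ := hu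
  ⟨w, h.trans huw, hw⟩

lemma IsConvergentProduct.multipliable (hu : IsConvergentProduct u) : Multipliable u := by
  obtain ⟨w, huw, hw, hw0⟩ := hu
  have hw0 (i : ι) : w i ≠ 0 := fun h => hw0 (tprod_of_exists_eq_zero ⟨i, h⟩)
  have hquot : Multipliable fun i => u i / w i :=
    multipliable_of_hasFiniteMulSupport <| huw.mono fun i hi => by
      simp only [hi, div_self (hw0 i)]
  simpa only [div_mul_cancel₀ _ (hw0 _)] using hquot.mul hw

lemma IsConvergentProduct.ite_mem [DecidableEq ι] (hu : IsConvergentProduct u) (S : Finset ι) :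
    IsConvergentProduct fun i => if i ∈ S then 1 else u i :=
  hu.congr <| (S.finite_toSet.eventually_cofinite_notMem).mono fun _ hi => if_neg hi

lemma IsConvergentProduct.tprod_eq_prod_mul_tprod [DecidableEq ι]
    (hu : IsConvergentProduct u) (S : Finset ι) :
    ∏' i, u i = (∏ i ∈ S, u i) * ∏' i, if i ∈ S then 1 else u i := by
  have hS : HasProd (fun i => if i ∈ S then u i else 1) (∏ i ∈ S, u i) := by
    rw [Finset.prod_congr rfl fun i hi => (if_pos hi : (if i ∈ S then u i else 1) = u i).symm]
    exact hasProd_prod_of_ne_finset_one fun i hi => if_neg hi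
  rw [← (hS.mul (hu.ite_mem S).multipliable.hasProd).tprod_eq]
  exact tprod_congr fun i => by split_ifs <;> simp

lemma IsConvergentProduct.tendsto_tprod_ite_mem [DecidableEq ι] (hu : IsConvergentProduct u) :
    Tendsto (fun S : Finset ι => ∏' i, if i ∈ S then 1 else u i) atTop (𝓝 1) := by
  obtain ⟨w, huw, hw, hw0⟩ := hu
  have hwconv : IsConvergentProduct w := ⟨w, .rfl, hw, hw0⟩
  have hquot : Tendsto (fun S : Finset ι => (∏' i, w i) / ∏ i ∈ S, w i) atTop (𝓝 1) := by
    rw [← div_self hw0]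
    exact tendsto_const_nhds.div hw.hasProd hw0
  refine hquot.congr' ?_
  have hfin : {i | u i ≠ w i}.Finite := huw
  filter_upwards [eventually_ge_atTop hfin.toFinset] with S hS
  have hprod : ∏ i ∈ S, w i ≠ 0 := fun h =>
    hw0 (by rw [hwconv.tprod_eq_prod_mul_tprod S, h, zero_mul])
  rw [div_eq_iff hprod, hwconv.tprod_eq_prod_mul_tprod S, mul_comm]
  congr 1
  refine tprod_congr fun i => ?_
  split_ifs with hi
  · rfl
  · by_contra h
    exact hi (hS (hfin.mem_toFinset.2 (Ne.symm h)))

end ConvergentProducts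

section LocalProducts

variable {𝕜 : Type*} [NormedField 𝕜] {g : ℙ → ℕ → 𝕜} {S : Finset ℙ} {n : ℕ}

/-- The arithmetic function `n ↦ ∏_{p^ν ∥ n} g_p(ν) · ∏_{p ∤ n} g_p(0)` with local data `g`, which
is multiplicative up to a constant if every `g_p(0)` is nonzero. As usual for arithmetic functions,
its value at `0` is set to be `0`. -/
noncomputable def localProduct (g : ℙ → ℕ → 𝕜) (n : ℕ) : 𝕜 :=
  if n = 0 then 0 else ∏' p : ℙ, g p (n.factorization p)

lemma localProduct_zero (g : ℙ → ℕ → 𝕜) : localProduct g 0 = 0 :=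
  if_pos rfl

lemma localProduct_of_ne_zero (g : ℙ → ℕ → 𝕜) (hn : n ≠ 0) :
    localProduct g n = ∏' p : ℙ, g p (n.factorization p) :=
  if_neg hn

/-- The positive integers all of whose prime factors lie in `S`. -/
def factoredBy (S : Finset ℙ) : Set ℕ :=
  Nat.factoredNumbers (S.map (.subtype _))

lemma mem_factoredBy : n ∈ factoredBy S ↔ n ≠ 0 ∧ ∀ p : ℙ, (p : ℕ) ∣ n → p ∈ S := by
  refine and_congr_right fun hn => ⟨fun H p hp => ?_, fun H p hp => ?_⟩
  · obtain ⟨r, hr, hrp⟩ := Finset.mem_map.1 (H p ((Nat.mem_primeFactorsList hn).2 ⟨p.2, hp⟩))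
    exact Subtype.ext hrp ▸ hr
  · have hp := (Nat.mem_primeFactorsList hn).1 hp
    exact Finset.mem_map_of_mem _ (H ⟨p, hp.1⟩ hp.2)

lemma mem_primeFactors_subtype (hn : n ≠ 0) {p : ℙ} :
    p ∈ n.primeFactors.subtype Nat.Prime ↔ (p : ℕ) ∣ n := by
  rw [Finset.mem_subtype, Nat.mem_primeFactors_of_ne_zero hn, and_iff_right p.2]

lemma mem_factoredBy_primeFactors (hn : n ≠ 0) :
    n ∈ factoredBy (n.primeFactors.subtype Nat.Prime) :=
  mem_factoredBy.2 ⟨hn, fun _ => (mem_primeFactors_subtype hn).2⟩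

lemma eventually_mem_factoredBy (hn : n ≠ 0) : ∀ᶠ S in atTop, n ∈ factoredBy S :=
  (eventually_ge_atTop (n.primeFactors.subtype Nat.Prime)).mono fun _ hS =>
    mem_factoredBy.2 ⟨hn, fun _ hp => hS ((mem_primeFactors_subtype hn).2 hp)⟩

lemma factorization_of_notMem (hn : n ∈ factoredBy S) {p : ℙ} (hp : p ∉ S) :
    n.factorization p = 0 :=
  Nat.factorization_eq_zero_of_not_dvd fun h => hp ((mem_factoredBy.1 hn).2 p h)

lemma eventually_factorization_eq_zero (n : ℕ) :
    ∀ᶠ p : ℙ in cofinite, n.factorization p = 0 := by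
  rcases eq_or_ne n 0 with rfl | hn
  · simp
  exact (Finset.finite_toSet _).eventually_cofinite_notMem.mono fun p hp =>
    factorization_of_notMem (mem_factoredBy_primeFactors hn) hp

lemma localProduct_eq_of_mem (hg : IsConvergentProduct (g · 0)) (hn : n ∈ factoredBy S) :
    localProduct g n =
      (∏ p ∈ S, g p (n.factorization p)) * ∏' p, if p ∈ S then 1 else g p 0 := by
  have hconv : IsConvergentProduct fun p : ℙ => g p (n.factorization p) :=
    hg.congr <| (eventually_factorization_eq_zero n).mono fun p hp => by simp only [hp]
  rw [localProduct_of_ne_zero g (mem_factoredBy.1 hn).1, hconv.tprod_eq_prod_mul_tprod S]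
  congr 1
  refine tprod_congr fun p => ?_
  split_ifs with hp
  · rfl
  · rw [factorization_of_notMem hn hp]

lemma factoredBy_empty : factoredBy ∅ = {1} := by
  rw [factoredBy, Finset.map_empty, Nat.factoredNumbers_empty]

/-- Splitting off the exact power of `p` from an integer whose prime factors lie in
`insert p S`. -/
noncomputable def factoredByInsertEquiv {p : ℙ} (hp : p ∉ S) :
    ℕ × factoredBy S ≃ factoredBy (insert p S) :=
  (Nat.equivProdNatFactoredNumbers p.2 (mt (Finset.mem_map' _).1 hp)).trans
    (Equiv.setCongr (by rw [factoredBy, Finset.map_insert, Function.Embedding.subtype_apply]))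

lemma prod_factorization_factoredByInsertEquiv {M : Type*} [CommMonoid M] (g : ℙ → ℕ → M)
    {p : ℙ} (hp : p ∉ S) (x : ℕ × factoredBy S) :
    ∏ r ∈ insert p S, g r ((factoredByInsertEquiv hp x).1.factorization r) =
      g p x.1 * ∏ r ∈ S, g r (x.2.1.factorization r) := by
  have hfac (r : ℙ) : (factoredByInsertEquiv hp x).1.factorization r =
      (if p = r then x.1 else 0) + x.2.1.factorization r := by
    change ((p : ℕ) ^ x.1 * x.2.1).factorization r = _
    rw [Nat.factorization_mul (pow_ne_zero _ p.2.ne_zero) (mem_factoredBy.1 x.2.2).1,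
      p.2.factorization_pow, Finsupp.add_apply, Finsupp.single_apply]
    simp only [Subtype.ext_iff]
  rw [Finset.prod_insert hp]
  congr 1
  · rw [hfac, if_pos rfl, factorization_of_notMem x.2.2 hp, add_zero]
  · refine Finset.prod_congr rfl fun r hr => ?_
    rw [hfac, if_neg (ne_of_mem_of_not_mem hr hp).symm, zero_add]

lemma hasSum_factoredBy [CompleteSpace 𝕜] (hg : ∀ p ∈ S, Summable fun ν => ‖g p ν‖) :
    (Summable fun n : factoredBy S => ‖∏ p ∈ S, g p (n.1.factorization p)‖) ∧
      HasSum (fun n : factoredBy S => ∏ p ∈ S, g p (n.1.factorization p))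
        (∏ p ∈ S, ∑' ν, g p ν) := by
  induction S using Finset.induction with
  | empty =>
    rw [factoredBy_empty]
    simp only [Finset.prod_empty]
    exact ⟨(Set.finite_singleton 1).summable fun _ => ‖(1 : 𝕜)‖,
      hasSum_singleton 1 fun _ => (1 : 𝕜)⟩
  | insert p S hp ih =>
    obtain ⟨ihnorm, ihsum⟩ := ih fun r hr => hg r (Finset.mem_insert_of_mem hr)
    have hgp := hg p (Finset.mem_insert_self p S)
    rw [Finset.prod_insert hp, ← (factoredByInsertEquiv hp).summable_iff,
      ← (factoredByInsertEquiv hp).hasSum_iff]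
    simp only [Function.comp_def, prod_factorization_factoredByInsertEquiv, norm_mul]
    have hmul := summable_mul_of_summable_norm hgp ihnorm
    have hsum := hgp.of_norm.hasSum.mul ihsum hmul
    exact ⟨hgp.mul_of_nonneg ihnorm (fun _ => norm_nonneg _) fun _ => norm_nonneg _, hsum⟩

lemma hasSum_indicator_localProduct [CompleteSpace 𝕜] (hg0 : IsConvergentProduct (g · 0))
    (hg : ∀ p, Summable fun ν => ‖g p ν‖) (S : Finset ℙ) :
    HasSum ((factoredBy S).indicator (localProduct g))
      ((∏ p ∈ S, ∑' ν, g p ν) * ∏' p, if p ∈ S then 1 else g p 0) := by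
  rw [← hasSum_subtype_iff_indicator]
  have hlocal : localProduct g ∘ ((↑) : factoredBy S → ℕ) = fun n =>
      (∏ p ∈ S, g p (n.1.factorization p)) * ∏' p, if p ∈ S then 1 else g p 0 :=
    funext fun n => localProduct_eq_of_mem hg0 n.2
  rw [hlocal]
  exact (hasSum_factoredBy fun p _ => hg p).2.mul_right _

theorem hasProd_tsum_localProduct [CompleteSpace 𝕜] (hg0 : IsConvergentProduct (g · 0))
    (hg : ∀ p, Summable fun ν => ‖g p ν‖) (hsum : Summable fun n => ‖localProduct g n‖) :
    HasProd (fun p => ∑' ν, g p ν) (∑' n, localProduct g n) := by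
  let tail (S : Finset ℙ) : 𝕜 := ∏' p, if p ∈ S then 1 else g p 0
  have htail : Tendsto tail atTop (𝓝 1) := hg0.tendsto_tprod_ite_mem
  have hpartial : Tendsto (fun S => ∑' n, (factoredBy S).indicator (localProduct g) n) atTop
      (𝓝 (∑' n, localProduct g n)) := by
    refine tendsto_tsum_of_dominated_convergence hsum (fun n => ?_)
      (.of_forall fun S n => norm_indicator_le_norm_self _ _)
    rcases eq_or_ne n 0 with rfl | hn
    · simp only [Set.indicator_apply, localProduct_zero, ite_self, tendsto_const_nhds_iff]
    · exact tendsto_const_nhds.congr' <| (eventually_mem_factoredBy hn).mono fun S hS =>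
        (Set.indicator_of_mem hS _).symm
  have hquot : Tendsto (fun S => (∑' n, (factoredBy S).indicator (localProduct g) n) / tail S)
      atTop (𝓝 (∑' n, localProduct g n)) := by
    rw [← div_one (∑' n, localProduct g n)]
    exact hpartial.div htail one_ne_zero
  refine hquot.congr' ((htail.eventually_ne one_ne_zero).mono fun S hS => ?_)
  rw [(hasSum_indicator_localProduct hg0 hg S).tsum_eq, mul_div_cancel_right₀ _ hS]

lemma isConvergentProduct_of_forall_eq_one {ι : Type*} {u : ι → 𝕜} (hu : ∀ i, u i = 1) :
    IsConvergentProduct u :=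
  ⟨1, .of_eq (funext hu), multipliable_one, by simp⟩

lemma summable_localProduct_and_tsum_le {m : ℙ → ℕ → ℝ} {B : ℝ} (hm0 : ∀ p, m p 0 = 1)
    (hm : ∀ p ν, 0 ≤ m p ν) (hsum : ∀ p, Summable (m p))
    (hB : ∀ S : Finset ℙ, ∏ p ∈ S, ∑' ν, m p ν ≤ B) :
    Summable (localProduct m) ∧ ∑' n, localProduct m n ≤ B := by
  have hnonneg (n : ℕ) : 0 ≤ localProduct m n := by
    rw [localProduct]
    split_ifs
    · rfl
    · exact tprod_nonneg fun p => hm p _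
  have hpartial (u : Finset ℕ) : ∑ n ∈ u, localProduct m n ≤ B := by
    obtain ⟨S, hS⟩ := ((Filter.eventually_all_finset u).2 fun n _ =>
      eventually_imp_distrib_left.2 (eventually_mem_factoredBy (n := n))).exists
    have hsumS := hasSum_indicator_localProduct (isConvergentProduct_of_forall_eq_one hm0)
      (fun p => (hsum p).norm) S
    simp only [hm0, ite_self, tprod_one, mul_one] at hsumS
    calc ∑ n ∈ u, localProduct m n
        = ∑ n ∈ u, (factoredBy S).indicator (localProduct m) n := by
          refine Finset.sum_congr rfl fun n hn => ?_
          rcases eq_or_ne n 0 with rfl | hn0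
          · simp only [localProduct_zero, Set.indicator_apply, ite_self]
          · rw [Set.indicator_of_mem (hS n hn hn0)]
      _ ≤ ∏ p ∈ S, ∑' ν, m p ν :=
          sum_le_hasSum u (fun n _ => Set.indicator_nonneg (fun n _ => hnonneg n) n) hsumS
      _ ≤ B := hB S
  exact ⟨summable_of_sum_le hnonneg hpartial, Real.tsum_le_of_sum_le hnonneg hpartial⟩

lemma prod_pow_factorization_of_mem {M : Type*} [CommMonoid M] (χ : ℕ →* M)
    (hn : n ∈ factoredBy S) : ∏ p ∈ S, χ p ^ n.factorization p = χ n := by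
  have hsupp : n.factorization.support ⊆ S.map (.subtype _) := fun p hp => by
    obtain ⟨hprime, hdvd, -⟩ := Nat.mem_primeFactors.1 hp
    exact Finset.mem_map_of_mem (.subtype _) ((mem_factoredBy.1 hn).2 ⟨p, hprime⟩ hdvd)
  conv_rhs => rw [← Nat.prod_factorization_pow_eq_self (mem_factoredBy.1 hn).1]
  rw [Finsupp.prod_of_support_subset _ hsupp _ fun _ _ => pow_zero _, Finset.prod_map, map_prod]
  simp only [map_pow, Function.Embedding.subtype_apply]

lemma localProduct_mul_pow (hg : IsConvergentProduct (g · 0)) (χ : ℕ →* 𝕜) (n : ℕ) :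
    localProduct (fun p ν => g p ν * χ p ^ ν) n = localProduct g n * χ n := by
  rcases eq_or_ne n 0 with rfl | hn
  · rw [localProduct_zero, localProduct_zero, zero_mul]
  have hmem := mem_factoredBy_primeFactors hn
  have hg' : IsConvergentProduct fun p => g p 0 * χ p ^ 0 := by
    simpa only [pow_zero, mul_one] using hg
  rw [localProduct_eq_of_mem hg hmem, localProduct_eq_of_mem hg' hmem, Finset.prod_mul_distrib,
    prod_pow_factorization_of_mem χ hmem]
  simp only [pow_zero, mul_one]
  ring

lemma norm_localProduct_le {m : ℙ → ℕ → ℝ} {B : ℝ} (hg : IsConvergentProduct (g · 0))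
    (hB : ∀ k : ℕ, k ≠ 0 → ‖∏' p : ℙ, if (p : ℕ) ∣ k then 1 else g p 0‖ ≤ B)
    (hm0 : ∀ p, m p 0 = 1) (hm : ∀ p ν, ν ≠ 0 → ‖g p ν‖ ≤ m p ν) (n : ℕ) :
    ‖localProduct g n‖ ≤ B * localProduct m n := by
  rcases eq_or_ne n 0 with rfl | hn
  · rw [localProduct_zero, localProduct_zero, norm_zero, mul_zero]
  have hmem := mem_factoredBy_primeFactors hn
  rw [localProduct_eq_of_mem hg hmem,
    localProduct_eq_of_mem (isConvergentProduct_of_forall_eq_one hm0) hmem, norm_mul, norm_prod,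
    mul_comm]
  simp only [hm0, ite_self, tprod_one, mul_one, mem_primeFactors_subtype hn]
  refine mul_le_mul (hB n hn) (Finset.prod_le_prod (fun _ _ => norm_nonneg _) fun p hp => hm p _ ?_)
    (by positivity) ((norm_nonneg _).trans (hB n hn))
  exact (p.2.factorization_pos_of_dvd hn ((mem_primeFactors_subtype hn).1 hp)).ne'

/-- The local data `g` with the factors at the primes dividing `q` replaced by trivial ones. -/
def awayFrom (q : ℕ) (g : ℙ → ℕ → 𝕜) (p : ℙ) (ν : ℕ) : 𝕜 :=
  if (p : ℕ) ∣ q then (if ν = 0 then 1 else 0) else g p ν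

lemma summable_norm_awayFrom_mul_pow (q : ℕ) {p : ℙ} {z : 𝕜}
    (hg : Summable fun ν => ‖g p ν * z ^ ν‖) :
    Summable fun ν => ‖awayFrom q g p ν * z ^ ν‖ := by
  by_cases hp : (p : ℕ) ∣ q
  · refine summable_of_ne_finset_zero (s := {0}) fun ν hν => ?_
    rw [awayFrom, if_pos hp, if_neg (by simpa using hν), zero_mul, norm_zero]
  · simpa only [awayFrom, if_neg hp] using hg

lemma tsum_awayFrom_mul_pow (q : ℕ) (g : ℙ → ℕ → 𝕜) (p : ℙ) (z : 𝕜) :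
    ∑' ν, awayFrom q g p ν * z ^ ν = if (p : ℕ) ∣ q then 1 else ∑' ν, g p ν * z ^ ν := by
  split_ifs with hp
  · rw [tsum_eq_single 0 fun ν hν => by rw [awayFrom, if_pos hp, if_neg hν, zero_mul], awayFrom,
      if_pos hp, if_pos rfl, pow_zero, mul_one]
  · simp only [awayFrom, if_neg hp]

lemma IsConvergentProduct.awayFrom {q : ℕ} (hg : IsConvergentProduct (g · 0)) (hq : q ≠ 0) :
    IsConvergentProduct (awayFrom q g · 0) :=
  hg.congr <| ((q.primeFactors.subtype Nat.Prime).finite_toSet.eventually_cofinite_notMem).mono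
    fun _ hp => if_neg (mt (mem_primeFactors_subtype hq).2 hp)

lemma localProduct_awayFrom {q : ℕ} (hg : IsConvergentProduct (g · 0)) (hq : q ≠ 0) (n : ℕ) :
    (∏ p ∈ q.primeFactors.subtype Nat.Prime, g p 0) * localProduct (awayFrom q g) n =
      if n.Coprime q then localProduct g n else 0 := by
  rcases eq_or_ne n 0 with rfl | hn
  · simp only [localProduct_zero, mul_zero, ite_self]
  split_ifs with hcop
  · have hconv : IsConvergentProduct fun p : ℙ => g p (n.factorization p) :=
      hg.congr <| (eventually_factorization_eq_zero n).mono fun p hp => by simp only [hp]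
    rw [localProduct_of_ne_zero g hn, localProduct_of_ne_zero _ hn,
      hconv.tprod_eq_prod_mul_tprod (q.primeFactors.subtype Nat.Prime)]
    have hfac {p : ℙ} (hp : (p : ℕ) ∣ q) : n.factorization p = 0 :=
      Nat.factorization_eq_zero_of_not_dvd fun hpn =>
        Nat.not_coprime_of_dvd_of_dvd p.2.one_lt hpn hp hcop
    congr 1
    · exact Finset.prod_congr rfl fun p hp => by rw [hfac ((mem_primeFactors_subtype hq).1 hp)]
    · refine tprod_congr fun p => ?_
      simp only [mem_primeFactors_subtype hq, awayFrom]
      split_ifs with hp hν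
      · rfl
      · exact absurd (hfac hp) hν
      · rfl
  · obtain ⟨p, hp, hpn, hpq⟩ := Nat.Prime.not_coprime_iff_dvd.1 hcop
    rw [localProduct_of_ne_zero _ hn, tprod_of_exists_eq_zero ⟨⟨p, hp⟩, ?_⟩, mul_zero]
    rw [awayFrom, if_pos hpq, if_neg (hp.factorization_pos_of_dvd hn hpn).ne']

end LocalProducts

section Increments

/-- The sequence `u 0, u 1 - u 0, u 2 - u 1, …` of which `u` is the sequence of partial sums. -/
def increment {G : Type*} [AddCommGroup G] (u : ℕ → G) : ℕ → G
  | 0 => u 0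
  | ν + 1 => u (ν + 1) - u ν

lemma sum_range_succ_increment {G : Type*} [AddCommGroup G] (u : ℕ → G) (n : ℕ) :
    ∑ ν ∈ Finset.range (n + 1), increment u ν = u n := by
  rw [Finset.sum_range_succ']
  simp only [increment, Finset.sum_range_sub, sub_add_cancel]

theorem localProduct_eq_sum_divisors {𝕜 : Type*} [NormedField 𝕜] [CompleteSpace 𝕜]
    {u : ℙ → ℕ → 𝕜} (hu : IsConvergentProduct (u · 0)) {n : ℕ} (hn : n ≠ 0) :
    localProduct u n = ∑ d ∈ n.divisors, localProduct (fun p => increment (u p)) d := by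
  let g (p : ℙ) (ν : ℕ) : 𝕜 := if (p : ℕ) ^ ν ∣ n then increment (u p) ν else 0
  have hg (p : ℙ) (ν : ℕ) (hν : ν ∉ Finset.range (n.factorization p + 1)) : g p ν = 0 := by
    rw [Finset.mem_range, Nat.lt_succ_iff, ← p.2.pow_dvd_iff_le_factorization hn] at hν
    exact if_neg hν
  have hg0 (p : ℙ) : g p 0 = u p 0 := if_pos (by rw [pow_zero]; exact one_dvd n)
  have hlocal (d : ℕ) (hd : d ∉ n.divisors) : localProduct g d = 0 := by
    rcases eq_or_ne d 0 with rfl | hd0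
    · exact localProduct_zero g
    have hdvd : ¬d ∣ n := fun h => hd (Nat.mem_divisors.2 ⟨h, hn⟩)
    rw [← Nat.factorization_prime_le_iff_dvd hd0 hn] at hdvd
    push Not at hdvd
    obtain ⟨p, hp, hlt⟩ := hdvd
    rw [localProduct_of_ne_zero g hd0]
    exact tprod_of_exists_eq_zero ⟨⟨p, hp⟩, hg ⟨p, hp⟩ _ (by simpa using hlt)⟩
  have hlocal' (d : ℕ) (hd : d ∈ n.divisors) :
      localProduct g d = localProduct (fun p => increment (u p)) d := by
    have hdvd := Nat.dvd_of_mem_divisors hd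
    have hd0 : d ≠ 0 := ne_zero_of_dvd_ne_zero hn hdvd
    rw [localProduct_of_ne_zero _ hd0, localProduct_of_ne_zero _ hd0]
    exact tprod_congr fun p => if_pos ((Nat.ordProj_dvd d p).trans hdvd)
  have hprod := hasProd_tsum_localProduct (g := g) (by simpa only [hg0] using hu)
    (fun p => summable_of_ne_finset_zero fun ν hν => by rw [hg p ν hν, norm_zero])
    (summable_of_ne_finset_zero fun d hd => by rw [hlocal d hd, norm_zero])
  rw [← Finset.sum_congr rfl hlocal', ← tsum_eq_sum (L := .unconditional ℕ) hlocal,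
    ← hprod.tprod_eq, localProduct_of_ne_zero u hn]
  refine tprod_congr fun p => ?_
  rw [tsum_eq_sum (hg p), ← sum_range_succ_increment (u p)]
  refine Finset.sum_congr rfl fun ν hν => (if_pos ?_).symm
  rwa [Finset.mem_range, Nat.lt_succ_iff, ← p.2.pow_dvd_iff_le_factorization hn] at hν

theorem one_sub_mul_tsum_mul_pow {𝕜 : Type*} [NormedField 𝕜] [CompleteSpace 𝕜] {u : ℕ → 𝕜} {z : 𝕜}
    (hz : ‖z‖ < 1) (hu : Summable fun ν => ‖increment u ν * z ^ ν‖) :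
    (Summable fun ν => u ν * z ^ ν) ∧
      (1 - z) * ∑' ν, u ν * z ^ ν = ∑' ν, increment u ν * z ^ ν := by
  have hgeom : Summable fun ν => ‖z ^ ν‖ := summable_norm_geometric_of_norm_lt_one hz
  have hcauchy : HasSum (fun ν => u ν * z ^ ν) ((∑' ν, increment u ν * z ^ ν) * ∑' ν, z ^ ν) := by
    refine (hasSum_sum_range_mul_of_summable_norm hu hgeom).congr_fun fun n => ?_
    rw [← sum_range_succ_increment u n, Finset.sum_mul]
    refine Finset.sum_congr rfl fun ν hν => ?_
    rw [mul_assoc, ← pow_add, Nat.add_sub_cancel' (Finset.mem_range_succ_iff.1 hν)]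
  have hz1 : 1 - z ≠ 0 := sub_ne_zero.2 fun h => by simp [← h] at hz
  refine ⟨hcauchy.summable, ?_⟩
  rw [hcauchy.tsum_eq, tsum_geometric_of_norm_lt_one hz, mul_comm, inv_mul_cancel_right₀ hz1]

end Increments

section Majorant

/-- The completely multiplicative function `n ↦ n ^ r`. -/
noncomputable def natRpow (r : ℝ) : ℕ →* ℝ where
  toFun n := (n : ℝ) ^ r
  map_one' := by rw [Nat.cast_one, Real.one_rpow]
  map_mul' m n := by rw [Nat.cast_mul, Real.mul_rpow m.cast_nonneg n.cast_nonneg]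

lemma natRpow_apply (r : ℝ) (n : ℕ) : natRpow r n = (n : ℝ) ^ r :=
  rfl

lemma natRpow_nonneg (r : ℝ) (n : ℕ) : 0 ≤ natRpow r n :=
  Real.rpow_nonneg n.cast_nonneg r

lemma inv_le_natRpow_neg {s : ℝ} (hs : s ≤ 1) (n : ℕ) : (n : ℝ)⁻¹ ≤ natRpow (-s) n := by
  rcases n.eq_zero_or_pos with rfl | hn
  · simpa only [Nat.cast_zero, inv_zero] using natRpow_nonneg (-s) 0
  · rw [natRpow_apply, ← Real.rpow_neg_one]
    exact Real.rpow_le_rpow_of_exponent_le (mod_cast hn) (neg_le_neg hs)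

lemma summable_natRpow_neg {s : ℝ} (hs : 1 < s) : Summable (natRpow (-s)) :=
  Real.summable_nat_rpow.2 (neg_lt_neg hs)

lemma tsum_natRpow_neg_le {s : ℝ} (hs : 1 < s) : ∑' n, natRpow (-s) n ≤ 1 + 1 / (s - 1) := by
  have hterm : 0 ≤ ZetaAsymptotics.termTSum s :=
    tsum_nonneg fun n => ZetaAsymptotics.term_nonneg (n + 1) s
  have hzero : natRpow (-s) 0 = 0 := by
    rw [natRpow_apply, Nat.cast_zero, Real.zero_rpow (by linarith)]
  have hsucc (n : ℕ) : natRpow (-s) (n + 1) = 1 / (n + 1 : ℝ) ^ s := by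
    rw [natRpow_apply, Real.rpow_neg (Nat.cast_nonneg _), Nat.cast_add_one, one_div]
  rw [(summable_natRpow_neg hs).tsum_eq_zero_add, hzero, zero_add, tsum_congr hsucc]
  have hzeta := ZetaAsymptotics.zeta_limit_aux1 hs
  nlinarith

lemma prod_inv_one_sub_natRpow_neg_le {s : ℝ} (hs : 1 < s) (S : Finset ℙ) :
    ∏ p ∈ S, (1 - natRpow (-s) p)⁻¹ ≤ 1 + 1 / (s - 1) := by
  have hsum := summable_natRpow_neg hs
  have hprod := EulerProduct.prod_filter_prime_geometric_eq_tsum_factoredNumbers hsum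
    (S.map (.subtype _))
  rw [Finset.filter_true_of_mem fun p hp => Finset.property_of_mem_map_subtype S hp,
    Finset.prod_map] at hprod
  calc ∏ p ∈ S, (1 - natRpow (-s) p)⁻¹ = ∑' n : factoredBy S, natRpow (-s) n := hprod
    _ ≤ ∑' n, natRpow (-s) n :=
        hsum.tsum_subtype_le _ _ (natRpow_nonneg (-s))
    _ ≤ 1 + 1 / (s - 1) := tsum_natRpow_neg_le hs

/-- The bound which the smallness conditions impose on the increments of the local data at `p`,
normalised to be `1` at `ν = 0`. -/
noncomputable def incrementMajorant (b : ℕ) (C₁ C₂ : ℝ) (p : ℙ) (ν : ℕ) : ℝ :=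
  if ν = 0 then 1 else if (p : ℕ) ^ ν ∣ b then C₁ else C₂ / (p : ℝ) ^ ν

variable {b : ℕ} {C₁ C₂ : ℝ}

lemma incrementMajorant_nonneg (hC₁ : 0 ≤ C₁) (hC₂ : 0 ≤ C₂) (p : ℙ) (ν : ℕ) :
    0 ≤ incrementMajorant b C₁ C₂ p ν := by
  rw [incrementMajorant]
  split_ifs <;> positivity

/-- The size of the part of the Euler factor of `incrementMajorant` at `p` that comes from the
powers of `p` dividing `b`. -/
noncomputable def dividingPart (b : ℕ) (C₁ : ℝ) (p : ℙ) : ℝ :=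
  (b.factorization p + 1) * if (p : ℕ) ∣ b then C₁ else 1

lemma one_le_dividingPart (hC₁ : 1 ≤ C₁) (p : ℙ) : 1 ≤ dividingPart b C₁ p := by
  have hρ : 1 ≤ if (p : ℕ) ∣ b then C₁ else 1 := by split_ifs <;> linarith
  exact one_le_mul_of_one_le_of_one_le (by simp) hρ

lemma prod_dividingPart_le (hb : b ≠ 0) (hC₁ : 1 ≤ C₁) (S : Finset ℙ) :
    ∏ p ∈ S, dividingPart b C₁ p ≤ b.divisors.card * C₁ ^ b.primeFactors.card := by
  let P : Finset ℙ := b.primeFactors.subtype Nat.Prime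
  have hP (p : ℙ) : p ∈ P ↔ (p : ℕ) ∣ b := mem_primeFactors_subtype hb
  have htrivial (p : ℙ) (hp : p ∉ P) : dividingPart b C₁ p = 1 := by
    rw [hP] at hp
    rw [dividingPart, Nat.factorization_eq_zero_of_not_dvd hp, if_neg hp, Nat.cast_zero, zero_add,
      mul_one]
  calc ∏ p ∈ S, dividingPart b C₁ p
      ≤ ∏ p ∈ S ∪ P, dividingPart b C₁ p :=
        Finset.prod_le_prod_of_subset_of_one_le Finset.subset_union_left
          (fun p _ => zero_le_one.trans (one_le_dividingPart hC₁ p))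
          fun p _ _ => one_le_dividingPart hC₁ p
    _ = ∏ p ∈ P, dividingPart b C₁ p :=
        (Finset.prod_subset Finset.subset_union_right fun p _ => htrivial p).symm
    _ = ∏ p ∈ P, ((b.factorization p + 1) * C₁ : ℝ) :=
        Finset.prod_congr rfl fun p hp => by rw [dividingPart, if_pos ((hP p).1 hp)]
    _ = ∏ p ∈ b.primeFactors, ((b.factorization p + 1) * C₁ : ℝ) :=
        Finset.prod_subtype_of_mem (fun p : ℕ => ((b.factorization p + 1) * C₁ : ℝ))
          fun p => Nat.prime_of_mem_primeFactors
    _ = b.divisors.card * C₁ ^ b.primeFactors.card := by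
        rw [Finset.prod_mul_distrib, Finset.prod_const, Nat.card_divisors hb]
        push_cast
        rfl

lemma incrementMajorant_mul_pow_le (hb : b ≠ 0) (hC₁ : 1 ≤ C₁) (hC₂ : 0 ≤ C₂) (p : ℙ) {y : ℝ}
    (hy0 : 0 ≤ y) (hy1 : y ≤ 1) (ν : ℕ) :
    incrementMajorant b C₁ C₂ p ν * y ^ ν ≤
      (if ν ∈ Finset.range (b.factorization p + 1) then if (p : ℕ) ∣ b then C₁ else 1 else 0) +
        C₂ * (((p : ℝ)⁻¹ * y) ^ ν - if ν = 0 then 1 else 0) := by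
  have hx : 0 ≤ C₂ * ((p : ℝ)⁻¹ * y) ^ ν := by positivity
  have hpow : y ^ ν ≤ 1 := pow_le_one₀ hy0 hy1
  rcases eq_or_ne ν 0 with rfl | hν
  · simp only [incrementMajorant, if_true, pow_zero, Finset.mem_range, Nat.succ_pos, sub_self,
      mul_zero, add_zero, mul_one]
    split_ifs <;> linarith
  simp only [incrementMajorant, if_neg hν, sub_zero, Finset.mem_range, Nat.lt_succ_iff,
    ← p.2.pow_dvd_iff_le_factorization hb]
  by_cases hdvd : (p : ℕ) ^ ν ∣ b
  · rw [if_pos hdvd, if_pos hdvd, if_pos ((dvd_pow_self _ hν).trans hdvd)]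
    nlinarith
  · rw [if_neg hdvd, if_neg hdvd, zero_add, mul_pow, inv_pow, ← mul_assoc, div_eq_mul_inv]

lemma tsum_incrementMajorant_mul_pow_le (hb : b ≠ 0) (hC₁ : 1 ≤ C₁) (hC₂ : 1 ≤ C₂) (p : ℙ) {y : ℝ}
    (hy0 : 0 ≤ y) (hy1 : y ≤ 1) :
    (Summable fun ν => incrementMajorant b C₁ C₂ p ν * y ^ ν) ∧
      ∑' ν, incrementMajorant b C₁ C₂ p ν * y ^ ν ≤
        dividingPart b C₁ p * ((1 - (p : ℝ)⁻¹ * y)⁻¹) ^ C₂ := by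
  have hp : (p : ℝ)⁻¹ < 1 := inv_lt_one_of_one_lt₀ (mod_cast p.2.one_lt)
  have hx0 : 0 ≤ (p : ℝ)⁻¹ * y := by positivity
  have hx1 : (p : ℝ)⁻¹ * y < 1 := (mul_le_of_le_one_right (by positivity) hy1).trans_lt hp
  have hdiv := hasSum_sum_of_ne_finset_zero (L := .unconditional ℕ)
    (s := Finset.range (b.factorization p + 1))
    (f := fun ν => if ν ∈ Finset.range (b.factorization p + 1) then
      if (p : ℕ) ∣ b then C₁ else 1 else 0) fun ν hν => if_neg hν
  rw [Finset.sum_ite_mem, Finset.inter_self, Finset.sum_const, Finset.card_range, nsmul_eq_mul,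
    Nat.cast_add_one, ← dividingPart] at hdiv
  have hmajor := hdiv.add <|
    ((hasSum_geometric_of_lt_one hx0 hx1).sub (hasSum_ite_eq 0 (1 : ℝ))).mul_left C₂
  have hle := incrementMajorant_mul_pow_le hb hC₁ (zero_le_one.trans hC₂) p hy0 hy1
  have hnonneg (ν : ℕ) : 0 ≤ incrementMajorant b C₁ C₂ p ν * y ^ ν :=
    mul_nonneg (incrementMajorant_nonneg (by linarith) (by linarith) p ν) (by positivity)
  have hsum : Summable fun ν => incrementMajorant b C₁ C₂ p ν * y ^ ν :=
    .of_nonneg_of_le hnonneg hle hmajor.summable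
  refine ⟨hsum, (hasSum_le hle hsum.hasSum hmajor).trans ?_⟩
  set Y : ℝ := (1 - (p : ℝ)⁻¹ * y)⁻¹ - 1
  have hY : 0 ≤ Y := sub_nonneg.2 ((one_le_inv₀ (by linarith)).2 (by linarith))
  have hD := one_le_dividingPart (b := b) hC₁ p
  calc dividingPart b C₁ p + C₂ * Y
      ≤ dividingPart b C₁ p * (1 + C₂ * Y) := by nlinarith [mul_nonneg (by linarith : 0 ≤ C₂) hY]
    _ ≤ dividingPart b C₁ p * (1 + Y) ^ C₂ := by
        gcongr
        exact one_add_mul_self_le_rpow_one_add (by linarith) hC₂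
    _ = _ := by rw [add_sub_cancel]

theorem tsum_localProduct_incrementMajorant_le (hb : b ≠ 0) (hC₁ : 1 ≤ C₁) (hC₂ : 1 ≤ C₂) {s : ℝ}
    (hs : 0 < s) :
    (Summable fun n => localProduct (incrementMajorant b C₁ C₂) n * natRpow (-s) n) ∧
      ∑' n, localProduct (incrementMajorant b C₁ C₂) n * natRpow (-s) n ≤
        b.divisors.card * C₁ ^ b.primeFactors.card * (1 + 1 / s) ^ C₂ := by
  have hlocal (p : ℙ) := tsum_incrementMajorant_mul_pow_le hb hC₁ hC₂ p (natRpow_nonneg (-s) p)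
    (Real.rpow_le_one_of_one_le_of_nonpos (mod_cast p.2.one_le) (by linarith))
  have hp (p : ℙ) : (p : ℝ)⁻¹ * natRpow (-s) p = natRpow (-(1 + s)) p := by
    rw [natRpow_apply, natRpow_apply, neg_add, Real.rpow_add (mod_cast p.2.pos), Real.rpow_neg_one]
  simp only [hp] at hlocal
  have hterm_nonneg (p : ℙ) (ν : ℕ) :
      0 ≤ incrementMajorant b C₁ C₂ p ν * natRpow (-s) p ^ ν :=
    mul_nonneg (incrementMajorant_nonneg (by linarith) (by linarith) p ν)
      (pow_nonneg (natRpow_nonneg _ p) ν)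
  have hgeom_nonneg (p : ℙ) : 0 ≤ (1 - natRpow (-(1 + s)) p)⁻¹ :=
    inv_nonneg.2 <| sub_nonneg.2 <|
      Real.rpow_le_one_of_one_le_of_nonpos (mod_cast p.2.one_le) (by linarith)
  simp only [← localProduct_mul_pow (g := incrementMajorant b C₁ C₂)
    (isConvergentProduct_of_forall_eq_one fun _ => if_pos rfl)]
  refine summable_localProduct_and_tsum_le
    (fun p => by simp only [incrementMajorant, if_true, pow_zero, mul_one])
    hterm_nonneg (fun p => (hlocal p).1) fun S => ?_
  calc ∏ p ∈ S, ∑' ν, incrementMajorant b C₁ C₂ p ν * natRpow (-s) p ^ ν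
      ≤ ∏ p ∈ S, dividingPart b C₁ p * ((1 - natRpow (-(1 + s)) p)⁻¹) ^ C₂ :=
        Finset.prod_le_prod (fun p _ => tsum_nonneg (hterm_nonneg p)) fun p _ => (hlocal p).2
    _ = (∏ p ∈ S, dividingPart b C₁ p) * (∏ p ∈ S, (1 - natRpow (-(1 + s)) p)⁻¹) ^ C₂ := by
        rw [Finset.prod_mul_distrib, Real.finsetProd_rpow _ _ fun p _ => hgeom_nonneg p]
    _ ≤ b.divisors.card * C₁ ^ b.primeFactors.card * (1 + 1 / s) ^ C₂ := by
        have hzeta := prod_inv_one_sub_natRpow_neg_le (by linarith : 1 < 1 + s) S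
        rw [add_sub_cancel_left] at hzeta
        have hprod_nonneg := Finset.prod_nonneg (s := S) fun p _ => hgeom_nonneg p
        exact mul_le_mul (prod_dividingPart_le hb hC₁ S)
          (Real.rpow_le_rpow hprod_nonneg hzeta (by linarith)) (Real.rpow_nonneg hprod_nonneg _)
          (by positivity)

end Majorant

section ResidueClasses

lemma abs_card_modEq_sub_le {r : ℕ} (hr : 0 < r) (v N : ℕ) :
    |(((Finset.Icc 1 N).filter (· ≡ v [MOD r])).card : ℝ) - N / r| ≤ 1 := by
  have hcount := Nat.Ioc_filter_modEq_card 0 N hr v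
  set x : ℚ := ((N : ℚ) - v) / r
  set y : ℚ := ((0 : ℕ) - (v : ℚ)) / r
  have hxy : x - y = (N : ℚ) / r := by
    simp only [x, y]
    ring
  have hnonneg : 0 ≤ x - y := by
    rw [hxy]
    positivity
  rw [max_eq_left (sub_nonneg.2 (Int.floor_le_floor (sub_nonneg.1 hnonneg)))] at hcount
  have hcountℚ : (((Finset.Icc 1 N).filter (· ≡ v [MOD r])).card : ℚ) = ⌊x⌋ - ⌊y⌋ := mod_cast hcount
  have hℚ : |(((Finset.Icc 1 N).filter (· ≡ v [MOD r])).card : ℚ) - N / r| ≤ 1 := by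
    rw [hcountℚ, ← hxy, abs_le]
    constructor <;>
      linarith [Int.floor_le x, Int.lt_floor_add_one x, Int.floor_le y, Int.lt_floor_add_one y]
  simpa using (Rat.cast_le (K := ℝ)).2 hℚ

/-- The positive integers `n ≤ t` with `n ≡ a (mod q)`. -/
noncomputable def residueClassUpTo (q : ℕ) (a : ℤ) (t : ℝ) : Finset ℕ :=
  (Finset.Icc 1 ⌊t⌋₊).filter fun n : ℕ => (n : ℤ) % (q : ℤ) = a % (q : ℤ)

variable {q d n : ℕ} {a : ℤ} {t : ℝ}

lemma mem_residueClassUpTo :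
    n ∈ residueClassUpTo q a t ↔ n ∈ Finset.Icc 1 ⌊t⌋₊ ∧ (n : ℤ) ≡ a [ZMOD q] :=
  Finset.mem_filter

lemma pos_of_mem_residueClassUpTo (hn : n ∈ residueClassUpTo q a t) : 0 < n :=
  (Finset.mem_Icc.1 (mem_residueClassUpTo.1 hn).1).1

lemma coprime_of_mem_residueClassUpTo (ha : Int.gcd a q = 1) (hn : n ∈ residueClassUpTo q a t) :
    n.Coprime q := by
  have hmod : (n : ℤ) % q = a % q := (mem_residueClassUpTo.1 hn).2
  rw [← Int.gcd_emod, ← hmod, Int.gcd_emod] at ha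
  exact ha

lemma filter_dvd_residueClassUpTo_eq (hq : 0 < q) (hcop : d.Coprime q) :
    ∃ v : ℕ, (residueClassUpTo q a t).filter (d ∣ ·) =
      (Finset.Icc 1 ⌊t⌋₊).filter (· ≡ v [MOD d * q]) := by
  lift a % q to ℕ using Int.emod_nonneg a (mod_cast hq.ne') with a' ha'
  obtain ⟨v, hv⟩ : ∃ v, v ≡ 0 [MOD d] ∧ v ≡ a' [MOD q] :=
    ⟨_, (Nat.chineseRemainder hcop 0 a').2⟩
  refine ⟨v, Finset.ext fun n => ?_⟩
  have hmod : (n : ℤ) ≡ a [ZMOD q] ↔ n ≡ a' [MOD q] := by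
    rw [← Int.natCast_modEq_iff, ha']
    exact ⟨fun h => h.trans (Int.mod_modEq a q).symm, fun h => h.trans (Int.mod_modEq a q)⟩
  rw [Finset.mem_filter, mem_residueClassUpTo, Finset.mem_filter, and_assoc, hmod,
    ← Nat.modEq_and_modEq_iff_modEq_mul hcop, ← Nat.modEq_zero_iff_dvd,
    and_comm (a := n ≡ a' [MOD q])]
  exact and_congr_right fun _ => and_congr ⟨(·.trans hv.1.symm), (·.trans hv.1)⟩
    ⟨(·.trans hv.2.symm), (·.trans hv.2)⟩

lemma abs_card_dvd_sub_le (hq : 0 < q) (hd : 0 < d) (hcop : d.Coprime q) (ht : 0 ≤ t) :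
    |(((residueClassUpTo q a t).filter (d ∣ ·)).card : ℝ) - t / q / d| ≤ 2 := by
  obtain ⟨v, hv⟩ := filter_dvd_residueClassUpTo_eq (a := a) (t := t) hq hcop
  have hr : (1 : ℝ) ≤ (d * q : ℕ) := mod_cast Nat.mul_pos hd hq
  have hfloor : |(⌊t⌋₊ : ℝ) / (d * q : ℕ) - t / (d * q : ℕ)| ≤ 1 := by
    rw [← sub_div, abs_div, abs_of_pos (a := ((d * q : ℕ) : ℝ)) (by linarith)]
    exact div_le_one_of_le₀ ((Nat.abs_floor_sub_le ht).trans hr) (by linarith)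
  rw [hv, div_div, mul_comm (q : ℝ), ← Nat.cast_mul]
  refine (abs_sub_le _ ((⌊t⌋₊ : ℝ) / (d * q : ℕ)) _).trans ?_
  linarith [abs_card_modEq_sub_le (Nat.mul_pos hd hq) v ⌊t⌋₊]

lemma abs_card_dvd_sub_le_rpow (hq : 0 < q) (ha : Int.gcd a q = 1) (ht : 0 ≤ t) {s : ℝ}
    (hs0 : 0 < s) (hs1 : s ≤ 1) (d : ℕ) :
    |(((residueClassUpTo q a t).filter (d ∣ ·)).card : ℝ) -
      if d.Coprime q then t / q / d else 0| ≤ 2 * (t / d) ^ s := by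
  have hempty (h : ∀ n ∈ residueClassUpTo q a t, ¬d ∣ n) :
      (((residueClassUpTo q a t).filter (d ∣ ·)).card : ℝ) = 0 := by
    rw [Finset.filter_eq_empty_iff.2 h, Finset.card_empty, Nat.cast_zero]
  by_cases hcop : d.Coprime q
  swap
  · rw [if_neg hcop, sub_zero, hempty fun n hn hdn =>
      hcop ((coprime_of_mem_residueClassUpTo ha hn).coprime_dvd_left hdn), abs_zero]
    positivity
  rw [if_pos hcop]
  rcases d.eq_zero_or_pos with rfl | hd
  · rw [hempty fun n hn h0n => (pos_of_mem_residueClassUpTo hn).ne' (zero_dvd_iff.1 h0n),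
      Nat.cast_zero, div_zero, sub_zero, abs_zero]
    positivity
  have hd0 : (0 : ℝ) < d := mod_cast hd
  rcases le_or_gt (d : ℝ) t with hdt | hdt
  · have hone : 1 ≤ (t / d) ^ s := Real.one_le_rpow ((one_le_div hd0).2 hdt) hs0.le
    linarith [abs_card_dvd_sub_le (a := a) hq hd hcop ht]
  · have hndvd (n : ℕ) (hn : n ∈ residueClassUpTo q a t) (hdn : d ∣ n) : False := by
      have hnt := (Nat.le_floor_iff ht).1 (Finset.mem_Icc.1 (mem_residueClassUpTo.1 hn).1).2
      have hdn : (d : ℝ) ≤ n := mod_cast Nat.le_of_dvd (pos_of_mem_residueClassUpTo hn) hdn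
      linarith
    rw [hempty hndvd, zero_sub, abs_neg, abs_of_nonneg (by positivity)]
    calc t / q / d ≤ t / d := by
          gcongr
          exact div_le_self ht (mod_cast hq)
      _ ≤ (t / d) ^ s :=
          Real.self_le_rpow_of_le_one (by positivity) ((div_le_one hd0).2 hdt.le) hs1
      _ ≤ 2 * (t / d) ^ s := le_mul_of_one_le_left (by positivity) one_le_two

theorem norm_sum_residueClass_sub_le {E : Type*} [NormedAddCommGroup E] [NormedSpace ℝ E]
    [CompleteSpace E] (hq : 0 < q) (ha : Int.gcd a q = 1) (ht : 0 ≤ t) {s : ℝ} (hs0 : 0 < s)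
    (hs1 : s ≤ 1) {f : ℕ → E} (hf : Summable fun d => ‖f d‖ * natRpow (-s) d) :
    ‖∑ n ∈ residueClassUpTo q a t, ∑ d ∈ n.divisors, f d -
        (t / q) • ∑' d : ℕ, if d.Coprime q then (d : ℝ)⁻¹ • f d else 0‖ ≤
      2 * t ^ s * ∑' d, ‖f d‖ * natRpow (-s) d := by
  have hdivisors (n : ℕ) (hn : n ∈ residueClassUpTo q a t) :
      HasSum (fun d => if d ∣ n then f d else 0) (∑ d ∈ n.divisors, f d) := by
    have hn0 := (pos_of_mem_residueClassUpTo hn).ne'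
    rw [← Finset.sum_congr rfl fun d hd => if_pos (Nat.dvd_of_mem_divisors hd)]
    exact hasSum_sum_of_ne_finset_zero fun d hd =>
      if_neg fun h => hd (Nat.mem_divisors.2 ⟨h, hn0⟩)
  have hmain : Summable fun d : ℕ => if d.Coprime q then (d : ℝ)⁻¹ • f d else 0 := by
    refine .of_norm_bounded hf fun d => ?_
    split_ifs
    · rw [norm_smul, norm_inv, RCLike.norm_natCast, mul_comm]
      exact mul_le_mul_of_nonneg_left (inv_le_natRpow_neg hs1 d) (norm_nonneg _)
    · rw [norm_zero]
      exact mul_nonneg (norm_nonneg _) (natRpow_nonneg _ d)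
  refine (((hasSum_sum hdivisors).sub (hmain.hasSum.const_smul (t / (q : ℝ)))).norm_le_of_bounded
    (hf.hasSum.mul_left (2 * t ^ s)) fun d => ?_)
  have hterm : ((∑ n ∈ residueClassUpTo q a t, if d ∣ n then f d else 0) -
      (t / (q : ℝ)) • if d.Coprime q then (d : ℝ)⁻¹ • f d else 0) =
      ((((residueClassUpTo q a t).filter (d ∣ ·)).card : ℝ) -
        if d.Coprime q then t / q / d else 0) • f d := by
    rw [← Finset.sum_filter, Finset.sum_const, sub_smul, Nat.cast_smul_eq_nsmul, ite_smul,
      zero_smul, smul_ite, smul_zero, smul_smul, ← div_eq_mul_inv]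
  rw [hterm, norm_smul, Real.norm_eq_abs]
  calc _ ≤ 2 * (t / d) ^ s * ‖f d‖ := by
        gcongr
        exact abs_card_dvd_sub_le_rpow hq ha ht hs0 hs1 d
    _ = 2 * t ^ s * (‖f d‖ * natRpow (-s) d) := by
        rw [natRpow_apply, Real.div_rpow ht d.cast_nonneg, Real.rpow_neg d.cast_nonneg]
        ring

end ResidueClasses

section MeanValue

variable {𝕜 : Type*} [RCLike 𝕜] {u : ℙ → ℕ → 𝕜} {b q : ℕ} {B C₁ C₂ : ℝ}

lemma summable_norm_increment_mul_pow (hb : b ≠ 0) (hC₁ : 1 ≤ C₁) (hC₂ : 1 ≤ C₂) {p : ℙ}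
    (hinc : ∀ ν, ν ≠ 0 → ‖increment (u p) ν‖ ≤ incrementMajorant b C₁ C₂ p ν) :
    Summable fun ν => ‖increment (u p) ν * (p : 𝕜)⁻¹ ^ ν‖ := by
  have hp : (p : ℝ)⁻¹ ≤ 1 := inv_le_one_of_one_le₀ (mod_cast p.2.one_le)
  refine .of_norm_bounded_eventually_nat
    (tsum_incrementMajorant_mul_pow_le hb hC₁ hC₂ p (by positivity) hp).1 ?_
  filter_upwards [eventually_ne_atTop 0] with ν hν
  rw [norm_norm, norm_mul, norm_pow, norm_inv, RCLike.norm_natCast]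
  gcongr
  exact hinc ν hν

lemma summable_and_one_sub_mul_tsum_div_pow (hb : b ≠ 0) (hC₁ : 1 ≤ C₁) (hC₂ : 1 ≤ C₂) {p : ℙ}
    (hinc : ∀ ν, ν ≠ 0 → ‖increment (u p) ν‖ ≤ incrementMajorant b C₁ C₂ p ν) :
    (Summable fun ν => u p ν / (p : 𝕜) ^ ν) ∧
      (1 - 1 / (p : 𝕜)) * ∑' ν, u p ν / (p : 𝕜) ^ ν =
        ∑' ν, increment (u p) ν * (p : 𝕜)⁻¹ ^ ν := by
  have hp : ‖(p : 𝕜)⁻¹‖ < 1 := by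
    rw [norm_inv, RCLike.norm_natCast]
    exact inv_lt_one_of_one_lt₀ (mod_cast p.2.one_lt)
  simpa only [one_div, div_eq_mul_inv, one_mul, inv_pow] using
    one_sub_mul_tsum_mul_pow hp (summable_norm_increment_mul_pow hb hC₁ hC₂ hinc)

lemma norm_localProduct_awayFrom_increment_le (hu : IsConvergentProduct (u · 0))
    (htail : ∀ k : ℕ, k ≠ 0 → ‖∏' p : ℙ, if (p : ℕ) ∣ k then 1 else u p 0‖ ≤ B)
    (hC₁ : 0 ≤ C₁) (hC₂ : 0 ≤ C₂)
    (hinc : ∀ p ν, ν ≠ 0 → ‖increment (u p) ν‖ ≤ incrementMajorant b C₁ C₂ p ν)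
    (hq : q ≠ 0) (n : ℕ) :
    ‖localProduct (awayFrom q fun p => increment (u p)) n‖ ≤
      B * localProduct (incrementMajorant b C₁ C₂) n := by
  refine norm_localProduct_le (IsConvergentProduct.awayFrom (g := fun p => increment (u p)) hu hq)
    (fun k hk => ?_) (fun p => if_pos rfl) (fun p ν hν => ?_) n
  · have hfactor (p : ℙ) : (if (p : ℕ) ∣ k then 1 else awayFrom q (fun p => increment (u p)) p 0) =
        if (p : ℕ) ∣ k * q then 1 else u p 0 := by
      simp only [awayFrom, if_true, increment, p.2.dvd_mul]
      split_ifs <;> tauto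
    simpa only [hfactor] using htail (k * q) (mul_ne_zero hk hq)
  · rw [awayFrom, if_neg hν]
    split_ifs
    · rw [norm_zero]
      exact incrementMajorant_nonneg hC₁ hC₂ p ν
    · exact hinc p ν hν

theorem hasProd_tsum_inv_smul_localProduct (hu : IsConvergentProduct (u · 0))
    (htail : ∀ k : ℕ, k ≠ 0 → ‖∏' p : ℙ, if (p : ℕ) ∣ k then 1 else u p 0‖ ≤ B)
    (hb : b ≠ 0) (hC₁ : 1 ≤ C₁) (hC₂ : 1 ≤ C₂)
    (hinc : ∀ p ν, ν ≠ 0 → ‖increment (u p) ν‖ ≤ incrementMajorant b C₁ C₂ p ν) (hq : q ≠ 0) :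
    HasProd (fun p : ℙ => if (p : ℕ) ∣ q then 1 else
        (1 - 1 / (p : 𝕜)) * ∑' ν, u p ν / (p : 𝕜) ^ ν)
      (∑' n : ℕ, (n : ℝ)⁻¹ • localProduct (awayFrom q fun p => increment (u p)) n) := by
  let χ : ℕ →* 𝕜 := (invMonoidWithZeroHom (G₀ := 𝕜) : 𝕜 →* 𝕜).comp (Nat.castRingHom 𝕜 : ℕ →* 𝕜)
  have hχ (n : ℕ) : χ n = (n : 𝕜)⁻¹ := rfl
  let g (p : ℙ) : ℕ → 𝕜 := increment (u p)
  have hg : IsConvergentProduct (awayFrom q g · 0) := IsConvergentProduct.awayFrom (g := g) hu hq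
  have hprod (n : ℕ) : localProduct (fun p ν => awayFrom q g p ν * (p : 𝕜)⁻¹ ^ ν) n =
      (n : ℝ)⁻¹ • localProduct (awayFrom q g) n := by
    simp only [← hχ]
    rw [localProduct_mul_pow hg, hχ, RCLike.real_smul_eq_coe_mul, mul_comm]
    push_cast
    rfl
  have hfactor (p : ℙ) : ∑' ν, awayFrom q g p ν * (p : 𝕜)⁻¹ ^ ν = if (p : ℕ) ∣ q then 1 else
      (1 - 1 / (p : 𝕜)) * ∑' ν, u p ν / (p : 𝕜) ^ ν := by
    rw [tsum_awayFrom_mul_pow, (summable_and_one_sub_mul_tsum_div_pow hb hC₁ hC₂ (hinc p)).2]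
  have hsum : Summable fun n : ℕ => ‖(n : ℝ)⁻¹ • localProduct (awayFrom q g) n‖ := by
    refine .of_norm_bounded
      ((tsum_localProduct_incrementMajorant_le hb hC₁ hC₂ one_pos).1.mul_left B) fun n => ?_
    rw [norm_norm, norm_smul, norm_inv, RCLike.norm_natCast, natRpow_apply, Real.rpow_neg_one,
      ← mul_assoc, mul_comm]
    gcongr
    exact norm_localProduct_awayFrom_increment_le hu htail (by linarith) (by linarith) hinc hq n
  simpa only [hfactor, hprod] using hasProd_tsum_localProduct
    (g := fun p ν => awayFrom q g p ν * (p : 𝕜)⁻¹ ^ ν)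
    (by simpa only [pow_zero, mul_one] using hg)
    (fun p => summable_norm_awayFrom_mul_pow q
      (summable_norm_increment_mul_pow hb hC₁ hC₂ (hinc p)))
    (by simpa only [hprod] using hsum)

lemma prod_mul_tprod_eq_tsum_coprime (hu : IsConvergentProduct (u · 0))
    (htail : ∀ k : ℕ, k ≠ 0 → ‖∏' p : ℙ, if (p : ℕ) ∣ k then 1 else u p 0‖ ≤ B)
    (hb : b ≠ 0) (hC₁ : 1 ≤ C₁) (hC₂ : 1 ≤ C₂)
    (hinc : ∀ p ν, ν ≠ 0 → ‖increment (u p) ν‖ ≤ incrementMajorant b C₁ C₂ p ν) (hq : q ≠ 0) :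
    (∏ p ∈ q.primeFactors.subtype Nat.Prime, u p 0) *
        ∏' p : ℙ, (if (p : ℕ) ∣ q then 1 else (1 - 1 / (p : 𝕜)) * ∑' ν, u p ν / (p : 𝕜) ^ ν) =
      ∑' d : ℕ,
        if d.Coprime q then (d : ℝ)⁻¹ • localProduct (fun p => increment (u p)) d else 0 := by
  rw [(hasProd_tsum_inv_smul_localProduct hu htail hb hC₁ hC₂ hinc hq).tprod_eq, ← tsum_mul_left]
  refine tsum_congr fun d => ?_
  rw [mul_smul_comm, ← smul_ite_zero, ← localProduct_awayFrom (g := fun p => increment (u p)) hu hq]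
  rfl

lemma exists_rpow_eq_two {x : ℝ} (hx : 2 ≤ x) :
    ∃ s, 0 < s ∧ s ≤ 1 ∧ x ^ s = 2 ∧ 1 + 1 / s ≤ 2 / Real.log 2 * Real.log x := by
  have h2 : 0 < Real.log 2 := Real.log_pos one_lt_two
  have hlog : Real.log 2 ≤ Real.log x := Real.log_le_log two_pos hx
  have hx0 : 0 < Real.log x := h2.trans_le hlog
  refine ⟨Real.log 2 / Real.log x, by positivity, (div_le_one hx0).2 hlog, ?_, ?_⟩
  · rw [Real.rpow_def_of_pos (by linarith), mul_div_cancel₀ _ hx0.ne', Real.exp_log two_pos]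
  · rw [one_div_div]
    calc 1 + Real.log x / Real.log 2 ≤ Real.log x / Real.log 2 + Real.log x / Real.log 2 := by
          gcongr
          exact (one_le_div h2).2 hlog
      _ = 2 / Real.log 2 * Real.log x := by ring

theorem norm_sum_localProduct_residueClass_sub_le (hu : IsConvergentProduct (u · 0))
    (htail : ∀ k : ℕ, k ≠ 0 → ‖∏' p : ℙ, if (p : ℕ) ∣ k then 1 else u p 0‖ ≤ B)
    (hb : b ≠ 0) (hC₁ : 1 ≤ C₁) (hC₂ : 1 ≤ C₂)
    (hinc : ∀ p ν, ν ≠ 0 → ‖increment (u p) ν‖ ≤ incrementMajorant b C₁ C₂ p ν)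
    (hq : 0 < q) {a : ℤ} (ha : Int.gcd a q = 1) {t : ℝ} (ht : 0 ≤ t) :
    ‖∑ n ∈ residueClassUpTo q a t, localProduct u n -
        (t / q) • ((∏ p ∈ q.primeFactors.subtype Nat.Prime, u p 0) *
          ∏' p : ℙ, (if (p : ℕ) ∣ q then 1 else
            (1 - 1 / (p : 𝕜)) * ∑' ν, u p ν / (p : 𝕜) ^ ν))‖ ≤
      4 * (2 / Real.log 2) ^ C₂ * b.divisors.card * C₁ ^ b.primeFactors.card * B *
        Real.log (t + 2) ^ C₂ := by
  obtain ⟨s, hs0, hs1, hs, hsC⟩ := exists_rpow_eq_two (by linarith : 2 ≤ t + 2)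
  obtain ⟨hsum, hle⟩ := tsum_localProduct_incrementMajorant_le hb hC₁ hC₂ hs0
  set f : ℕ → 𝕜 := localProduct fun p => increment (u p)
  have hB : 0 ≤ B := (norm_nonneg _).trans (htail 1 one_ne_zero)
  have hlog : 0 ≤ Real.log (t + 2) := Real.log_nonneg (by linarith)
  have hf (d : ℕ) : ‖f d‖ * natRpow (-s) d ≤
      B * (localProduct (incrementMajorant b C₁ C₂) d * natRpow (-s) d) := by
    rw [← mul_assoc]
    exact mul_le_mul_of_nonneg_right
      (norm_localProduct_le (g := fun p => increment (u p)) hu htail (fun p => if_pos rfl) hinc d)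
      (natRpow_nonneg _ d)
  have hf_summable : Summable fun d => ‖f d‖ * natRpow (-s) d :=
    .of_nonneg_of_le (fun d => mul_nonneg (norm_nonneg _) (natRpow_nonneg _ d)) hf
      (hsum.mul_left B)
  rw [prod_mul_tprod_eq_tsum_coprime hu htail hb hC₁ hC₂ hinc hq.ne',
    Finset.sum_congr rfl fun n hn =>
      localProduct_eq_sum_divisors hu (pos_of_mem_residueClassUpTo hn).ne']
  calc _ ≤ 2 * t ^ s * ∑' d, ‖f d‖ * natRpow (-s) d :=
        norm_sum_residueClass_sub_le hq ha ht hs0 hs1 hf_summable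
    _ ≤ 2 * (t + 2) ^ s *
          (B * (b.divisors.card * C₁ ^ b.primeFactors.card * (1 + 1 / s) ^ C₂)) := by
        gcongr
        · exact tsum_nonneg fun d => mul_nonneg (norm_nonneg _) (natRpow_nonneg _ d)
        · linarith
        · exact (hf_summable.tsum_le_tsum hf (hsum.mul_left B)).trans <| by
            rw [tsum_mul_left]
            exact mul_le_mul_of_nonneg_left hle hB
    _ ≤ 2 * 2 * (B * (b.divisors.card * C₁ ^ b.primeFactors.card *
          (2 / Real.log 2 * Real.log (t + 2)) ^ C₂)) := by
        rw [hs]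
        gcongr
    _ = _ := by
        rw [Real.mul_rpow (by positivity) hlog]
        ring

end MeanValue

section PrimesNotDividing

variable {M : Type*} [CommMonoid M] (k : ℕ) (f : ℕ → M)

lemma mulIndicator_prime_and_not_dvd :
    {p : ℕ | p.Prime ∧ ¬p ∣ k}.mulIndicator f =
      {p : ℕ | p.Prime}.mulIndicator fun p => if p ∣ k then 1 else f p := by
  ext p
  simp only [Set.mulIndicator_apply, Set.mem_ofPred_eq]
  split_ifs <;> tauto

variable [TopologicalSpace M]

lemma multipliable_prime_and_not_dvd_iff :
    Multipliable (fun p : {p : ℕ // p.Prime ∧ ¬p ∣ k} => f p) ↔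
      Multipliable fun p : ℙ => if (p : ℕ) ∣ k then 1 else f p := by
  change Multipliable (f ∘ (Subtype.val : {p : ℕ | p.Prime ∧ ¬p ∣ k} → ℕ)) ↔ Multipliable
    ((fun p => if p ∣ k then 1 else f p) ∘ (Subtype.val : {p : ℕ | p.Prime} → ℕ))
  rw [multipliable_subtype_iff_mulIndicator, mulIndicator_prime_and_not_dvd,
    multipliable_subtype_iff_mulIndicator]

lemma tprod_prime_and_not_dvd [T2Space M] :
    ∏' p : {p : ℕ // p.Prime ∧ ¬p ∣ k}, f p = ∏' p : ℙ, if (p : ℕ) ∣ k then 1 else f p :=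
  calc _ = ∏' p, {p : ℕ | p.Prime ∧ ¬p ∣ k}.mulIndicator f p := tprod_subtype _ f
    _ = ∏' p, {p : ℕ | p.Prime}.mulIndicator (fun p => if p ∣ k then 1 else f p) p := by
        rw [mulIndicator_prime_and_not_dvd]
    _ = _ := (tprod_subtype {p : ℕ | p.Prime} _).symm

end PrimesNotDividing

section Representation

variable {𝕜 : Type*} [RCLike 𝕜] {θ : ℕ → 𝕜} {c : 𝕜} {A : ℕ → ℕ → 𝕜}

lemma isConvergentProduct_of_tprod_ne_zero {n : ℕ} (hn : n ≠ 0)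
    (hmul : Multipliable fun p : {p : ℕ // p.Prime ∧ ¬p ∣ n} => A p 0)
    (hne : ∏' p : {p : ℕ // p.Prime ∧ ¬p ∣ n}, A p 0 ≠ 0) :
    IsConvergentProduct fun p : ℙ => A p 0 := by
  refine ⟨fun p => if (p : ℕ) ∣ n then 1 else A p 0, ?_,
    (multipliable_prime_and_not_dvd_iff n (A · 0)).1 hmul,
    (tprod_prime_and_not_dvd n (A · 0)).symm.trans_ne hne⟩
  filter_upwards [(n.primeFactors.subtype Nat.Prime).finite_toSet.eventually_cofinite_notMem]
    with p hp
  rw [if_neg fun h => hp ((mem_primeFactors_subtype hn).2 h)]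

lemma localProduct_eq_prod_mul_tprod_not_dvd (hA : IsConvergentProduct fun p : ℙ => A p 0) {n : ℕ}
    (hn : n ≠ 0) :
    localProduct (fun p => A p) n = (∏ p ∈ n.primeFactors, A p (n.factorization p)) *
      ∏' p : {p : ℕ // p.Prime ∧ ¬p ∣ n}, A p 0 := by
  rw [localProduct_eq_of_mem (g := fun p => A p) hA (mem_factoredBy_primeFactors hn),
    tprod_prime_and_not_dvd n (A · 0),
    Finset.prod_subtype_of_mem (fun p => A p (n.factorization p))
      fun p => Nat.prime_of_mem_primeFactors]
  simp only [mem_primeFactors_subtype hn]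

lemma norm_increment_le_incrementMajorant {b : ℕ} {C₁ C₂ : ℝ}
    (hA : ∀ p ν : ℕ, p.Prime → 1 ≤ ν →
      (p ^ ν ∣ b → ‖A p ν - A p (ν - 1)‖ ≤ C₁) ∧
      (¬p ^ ν ∣ b → ‖A p ν - A p (ν - 1)‖ ≤ C₂ / (p : ℝ) ^ ν))
    (p : ℙ) (ν : ℕ) (hν : ν ≠ 0) : ‖increment (A p) ν‖ ≤ incrementMajorant b C₁ C₂ p ν := by
  obtain ⟨ν, rfl⟩ := Nat.exists_eq_succ_of_ne_zero hν
  rw [incrementMajorant, if_neg hν]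
  split_ifs with hdvd
  · exact (hA p _ p.2 ν.succ_pos).1 hdvd
  · exact (hA p _ p.2 ν.succ_pos).2 hdvd

end Representation

theorem sum_theta_residue_class_general (𝕜 : Type*) [RCLike 𝕜] (C₂ : ℝ) (hC₂ : 1 ≤ C₂) :
    ∃ K : ℝ, 0 < K ∧
      ∀ (b : ℕ) (C₁ C₃ : ℝ) (θ : ℕ → 𝕜) (c : 𝕜) (A : ℕ → ℕ → 𝕜),
        0 < b → 1 ≤ C₁ →
        (∃ n : ℕ, 0 < n ∧ θ n ≠ 0) →
        (∀ n : ℕ, 0 < n → Multipliable fun p : {p : ℕ // p.Prime ∧ ¬p ∣ n} => A p 0) →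
        (∀ n : ℕ, 0 < n → θ n = c * (∏ p ∈ n.primeFactors, A p (n.factorization p)) *
          ∏' p : {p : ℕ // p.Prime ∧ ¬p ∣ n}, A p 0) →
        (∀ p ν : ℕ, p.Prime → 1 ≤ ν →
          (p ^ ν ∣ b → ‖A p ν - A p (ν - 1)‖ ≤ C₁) ∧
          (¬p ^ ν ∣ b → ‖A p ν - A p (ν - 1)‖ ≤ C₂ / (p : ℝ) ^ ν)) →
        (∀ k : ℕ, 0 < k → ‖c * ∏' p : {p : ℕ // p.Prime ∧ ¬p ∣ k}, A p 0‖ ≤ C₃) →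
        ∀ (q : ℕ) (a : ℤ), 0 < q → Int.gcd a q = 1 →
          (∀ p : ℕ, p.Prime → ¬p ∣ q → Summable fun ν : ℕ => A p ν / (p : 𝕜) ^ ν) ∧
          Multipliable (fun p : {p : ℕ // p.Prime ∧ ¬p ∣ q} =>
            (1 - 1 / (p : 𝕜)) * ∑' ν : ℕ, A p ν / (p : 𝕜) ^ ν) ∧
          ∀ t : ℝ, 0 ≤ t →
            ‖∑ n ∈ residueClassUpTo q a t, θ n -
                (t / q) • (c * (∏' p : {p : ℕ // p.Prime ∧ ¬p ∣ q},
                    (1 - 1 / (p : 𝕜)) * ∑' ν : ℕ, A p ν / (p : 𝕜) ^ ν) *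
                  ∏ p ∈ q.primeFactors, A p 0)‖ ≤
              K * b.divisors.card * (C₁ * C₂) ^ b.primeFactors.card * C₃ *
                Real.log (t + 2) ^ C₂ := by
  refine ⟨4 * (2 / Real.log 2) ^ C₂, by positivity, ?_⟩
  intro b C₁ C₃ θ c A hb hC₁ ⟨n₀, hn₀, hne⟩ hmul hθ hincr hC₃ q a hq ha
  rw [hθ n₀ hn₀] at hne
  have hc : c ≠ 0 := left_ne_zero_of_mul (left_ne_zero_of_mul hne)
  have hu := isConvergentProduct_of_tprod_ne_zero hn₀.ne' (hmul n₀ hn₀) (right_ne_zero_of_mul hne)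
  have htail (k : ℕ) (hk : k ≠ 0) : ‖∏' p : ℙ, if (p : ℕ) ∣ k then 1 else A p 0‖ ≤ C₃ / ‖c‖ := by
    rw [← tprod_prime_and_not_dvd k (A · 0), le_div_iff₀' (norm_pos_iff.2 hc), ← norm_mul]
    exact hC₃ k (Nat.pos_of_ne_zero hk)
  have hinc := norm_increment_le_incrementMajorant hincr
  have hprod := hasProd_tsum_inv_smul_localProduct hu htail hb.ne' hC₁ hC₂ hinc hq.ne'
  let E (p : ℕ) : 𝕜 := (1 - 1 / (p : 𝕜)) * ∑' ν : ℕ, A p ν / (p : 𝕜) ^ ν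
  refine ⟨fun p hp _ => (summable_and_one_sub_mul_tsum_div_pow (u := fun p => A p) hb.ne' hC₁ hC₂
    (hinc ⟨p, hp⟩)).1,
    (multipliable_prime_and_not_dvd_iff q E).2 hprod.multipliable, fun t ht => ?_⟩
  have hlocal (n : ℕ) (hn : n ∈ residueClassUpTo q a t) :
      θ n = c * localProduct (fun p => A p) n := by
    have hn := pos_of_mem_residueClassUpTo hn
    rw [hθ n hn, localProduct_eq_prod_mul_tprod_not_dvd hu hn.ne', mul_assoc]
  rw [Finset.sum_congr rfl hlocal, ← Finset.mul_sum, tprod_prime_and_not_dvd q E,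
    ← Finset.prod_subtype_of_mem (A · 0) fun p => Nat.prime_of_mem_primeFactors, mul_assoc c,
    mul_comm (∏' p, _), ← mul_smul_comm, ← mul_sub, norm_mul]
  have hC₃0 : 0 ≤ C₃ := (norm_nonneg _).trans (hC₃ 1 one_pos)
  have hlog : 0 ≤ Real.log (t + 2) := Real.log_nonneg (by linarith)
  have hc0 : ‖c‖ ≠ 0 := norm_ne_zero_iff.2 hc
  calc _ ≤ ‖c‖ * (4 * (2 / Real.log 2) ^ C₂ * b.divisors.card * C₁ ^ b.primeFactors.card *
          (C₃ / ‖c‖) * Real.log (t + 2) ^ C₂) := by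
        gcongr
        exact norm_sum_localProduct_residueClass_sub_le hu htail hb.ne' hC₁ hC₂ hinc hq ha ht
    _ = 4 * (2 / Real.log 2) ^ C₂ * b.divisors.card * C₁ ^ b.primeFactors.card * C₃ *
          Real.log (t + 2) ^ C₂ := by field_simp
    _ ≤ _ := by
        gcongr
        exact le_mul_of_one_le_right (by linarith) hC₂

/-- The average of a non-trivial `θ ∈ Θ₂(b, C₁, C₂, C₃)` over a residue class `a (mod q)`
with `gcd(a, q) = 1`:
`∑_{0 < n ≤ t, n ≡ a mod q} θ(n) = (t/q)·A(θ,q) + O_{C₂}(τ(b)(C₁C₂)^{ω(b)} C₃ (log(t+2))^{C₂})`,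
where `A(θ,q)` is the value of the convergent product
`c ∏_{p ∤ q} [(1 - 1/p) ∑_ν A_p(ν)/p^ν] ∏_{p | q} A_p(0)`. -/
theorem sum_theta_residue_class (C₂ : ℝ) (hC₂ : 1 ≤ C₂) :
    ∃ K : ℝ, 0 < K ∧
      ∀ (b : ℕ) (C₁ C₃ : ℝ) (θ : ℕ → ℝ) (c : ℝ) (A : ℕ → ℕ → ℝ),
        0 < b → 1 ≤ C₁ → 1 ≤ C₃ →
        (∀ n : ℕ, 0 ≤ θ n) →
        (∃ n : ℕ, 0 < n ∧ θ n ≠ 0) →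
        EulerRep θ c A →
        SmallCond b C₁ C₂ C₃ c A →
        ∀ (q : ℕ) (a : ℤ), 0 < q → Int.gcd a q = 1 →
          (∀ p : ℕ, p.Prime → ¬ p ∣ q → Summable (fun ν : ℕ => A p ν / (p : ℝ) ^ ν)) ∧
          Multipliable (fun p : {p : ℕ // p.Prime ∧ ¬ p ∣ q} =>
            (1 - 1 / (p.1 : ℝ)) * ∑' ν : ℕ, A p.1 ν / (p.1 : ℝ) ^ ν) ∧
          ∀ t : ℝ, 0 ≤ t →
            |(∑ n ∈ (Finset.Icc 1 ⌊t⌋₊).filter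
                  (fun n : ℕ => (n : ℤ) % (q : ℤ) = a % (q : ℤ)), θ n) -
                (t / q) * (c * (∏' p : {p : ℕ // p.Prime ∧ ¬ p ∣ q},
                    (1 - 1 / (p.1 : ℝ)) * ∑' ν : ℕ, A p.1 ν / (p.1 : ℝ) ^ ν) *
                  ∏ p ∈ q.primeFactors, A p 0)| ≤
              K * b.divisors.card * (C₁ * C₂) ^ b.primeFactors.card * C₃ *
                Real.log (t + 2) ^ C₂ :=
  let ⟨K, hK, h⟩ := sum_theta_residue_class_general ℝ C₂ hC₂
  ⟨K, hK, fun b C₁ C₃ θ c A hb hC₁ _ _ hne hrep hsmall =>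
    h b C₁ C₃ θ c A hb hC₁ hne hrep.2.1 hrep.2.2 hsmall.1 hsmall.2⟩
end

section
/- Let r ≥ 2 be an integer, C ≥ 1 real, and for each prime p let θ_p : ℕ^r → ℝ be a non-negative function satisfying: (a) for all k, k' ∈ ℕ^r that differ only in the i-th coordinate with k_i = k'_i + 1, one has |θ_p(k) − θ_p(k')| ≤ C if k_i = 1 and #supp(k) ≥ 2, and |θ_p(k) − θ_p(k')| ≤ C·p^{−k_i} otherwise; and (b) θ_p(0,…,0) ≤ 1 + C·p^{−2}, and θ_p(k) ≤ 1 + #supp(k)·C·p^{−1} for all k ≠ (0,…,0), where supp(k) = {i : k_i ≠ 0}. For each prime p define θ'_p : ℕ^{r−1} → ℝ by θ'_p(k) = (1 − 1/p)·∑_{m=0}^∞ θ_p(k,m)/p^m (the series converges). Then the family (θ'_p) satisfies conditions (a) and (b) above on ℕ^{r−1} with the constant C replaced by 3C. -/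
/-!
The averaged function is a weighted mean with weights `(1 - 1/q) q⁻ⁿ`, of total mass one; the index
`n = 0` carries mass `1 - 1/q` and the indices `n ≥ 1` together carry mass `1/q`. Hence a sequence
bounded by `A` at `0` and by `B` afterwards has mean at most `(1 - 1/q) A + B / q`. Since
`#supp(k, n)` is `#supp(k)` for `n = 0` and `#supp(k) + 1` otherwise, applying this with `q = p` to
`θ_p(k, ·)` and to `θ_p(k, ·) - θ_p(k', ·)` reduces everything to inequalities between the bounds in
(a) and (b).

The loss is at most a factor `2`, in the cases where an extra nonzero coordinate weakens the bound.
If `k_i = 1` and `#supp(k) = 1`, the differences are at most `C / p` for `n = 0` and at most `C`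
for `n ≥ 1`, with mean at most `2C / p`. If `k = 0`, the excess over `1` is at most `C / p²` for
`n = 0` and `C / p` for `n ≥ 1`, with mean at most `2C / p²`. If `k ≠ 0`, the excess over `1` grows
from `#supp(k) C / p` to at most `(#supp(k) + 1) C / p`.
-/

/-- The number of nonzero coordinates of `k`, i.e. `#supp(k)`. -/
def suppCard {r : ℕ} (k : Fin r → ℕ) : ℕ := (Finset.univ.filter fun i => k i ≠ 0).card

/-- The local conditions of the set `Θ₄,ᵣ(C)`: each `θ_p` is non-negative, and satisfies the
difference conditions (a) and the size conditions (b). -/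
def LocCond (r : ℕ) (C : ℝ) (θ : ℕ → (Fin r → ℕ) → ℝ) : Prop :=
  ∀ p : ℕ, p.Prime →
    (∀ k : Fin r → ℕ, 0 ≤ θ p k) ∧
    (∀ k k' : Fin r → ℕ, ∀ i : Fin r, k i = k' i + 1 → (∀ j : Fin r, j ≠ i → k j = k' j) →
      ((k i = 1 ∧ 2 ≤ suppCard k) → |θ p k - θ p k'| ≤ C) ∧
      (¬(k i = 1 ∧ 2 ≤ suppCard k) → |θ p k - θ p k'| ≤ C / (p : ℝ) ^ (k i))) ∧
    (θ p (fun _ => 0) ≤ 1 + C / (p : ℝ) ^ 2) ∧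
    (∀ k : Fin r → ℕ, k ≠ (fun _ => 0) → θ p k ≤ 1 + (suppCard k : ℝ) * C / (p : ℝ))

section GeomAverage

variable {q A B : ℝ} {g h : ℕ → ℝ}

/-- The mean of `g` under the geometric distribution giving `n` the mass `(1 - 1/q) q⁻ⁿ`. This is
the operation applied to the last variable; for `1 < q` it is meaningful when the series converges,
and otherwise `tsum` makes it `0`. -/
noncomputable def geomAverage (q : ℝ) (g : ℕ → ℝ) : ℝ := (1 - 1 / q) * ∑' n, g n / q ^ n

theorem geomAverage_nonneg (hq : 1 ≤ q) (hg : ∀ n, 0 ≤ g n) : 0 ≤ geomAverage q g := by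
  have hq₁ : 1 / q ≤ 1 := by simpa using inv_le_one_of_one_le₀ hq
  exact mul_nonneg (sub_nonneg.2 hq₁) (tsum_nonneg fun n => div_nonneg (hg n) (by positivity))

theorem geomAverage_sub (hg : Summable fun n => g n / q ^ n) (hh : Summable fun n => h n / q ^ n) :
    geomAverage q (fun n => g n - h n) = geomAverage q g - geomAverage q h := by
  simp only [geomAverage, sub_div, hg.tsum_sub hh, mul_sub]

theorem hasSum_const_div_pow_succ (hq : 1 < q) (B : ℝ) :
    HasSum (fun n : ℕ => B / q ^ (n + 1)) (B / (q - 1)) := by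
  have hgeom := (hasSum_geometric_of_lt_one (by positivity) (inv_lt_one_of_one_lt₀ hq)).mul_left
    (B / q)
  have hterm (n : ℕ) : B / q * q⁻¹ ^ n = B / q ^ (n + 1) := by
    rw [inv_pow, pow_succ']
    field_simp
  have hsum : B / q * (1 - q⁻¹)⁻¹ = B / (q - 1) := by
    rw [← div_eq_mul_inv, div_div, mul_sub, mul_one, mul_inv_cancel₀ (by positivity)]
  simpa only [hterm, hsum] using hgeom

theorem norm_div_pow_le (hq : 0 < q) {a : ℝ} (ha : |a| ≤ B) (n : ℕ) : ‖a / q ^ n‖ ≤ B / q ^ n := by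
  have hqn : 0 < q ^ n := by positivity
  rw [Real.norm_eq_abs, abs_div, abs_of_pos hqn]
  gcongr

theorem summable_div_pow (hq : 1 < q) (hg : ∀ n, |g (n + 1)| ≤ B) :
    Summable fun n => g n / q ^ n :=
  (summable_nat_add_iff 1).1 <| (hasSum_const_div_pow_succ hq B).summable.of_norm_bounded
    fun n => norm_div_pow_le (by positivity) (hg n) (n + 1)

theorem abs_geomAverage_le (hq : 1 < q) (hg₀ : |g 0| ≤ A) (hg : ∀ n, |g (n + 1)| ≤ B) :
    |geomAverage q g| ≤ (1 - 1 / q) * A + B / q := by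
  have hq₁ : 0 < q - 1 := sub_pos.2 hq
  have hmass : 0 < 1 - 1 / q := by
    rw [one_sub_div (by positivity)]
    positivity
  have htail : |∑' n, g (n + 1) / q ^ (n + 1)| ≤ B / (q - 1) :=
    tsum_of_norm_bounded (hasSum_const_div_pow_succ hq B)
      fun n => norm_div_pow_le (by positivity) (hg n) (n + 1)
  calc |geomAverage q g| = (1 - 1 / q) * |g 0 + ∑' n, g (n + 1) / q ^ (n + 1)| := by
        rw [geomAverage, abs_mul, abs_of_pos hmass, (summable_div_pow hq hg).tsum_eq_zero_add,
          pow_zero, div_one]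
    _ ≤ (1 - 1 / q) * (A + B / (q - 1)) := by
        gcongr
        exact (abs_add_le _ _).trans (add_le_add hg₀ htail)
    _ = (1 - 1 / q) * A + B / q := by field_simp

end GeomAverage

section SuppCard

variable {r : ℕ} (k : Fin r → ℕ)

theorem suppCard_eq_zero_iff : suppCard k = 0 ↔ k = 0 := by
  simp [suppCard, Finset.filter_eq_empty_iff, funext_iff]

theorem suppCard_snoc (n : ℕ) :
    suppCard (Fin.snoc k n : Fin (r + 1) → ℕ) = suppCard k + if n ≠ 0 then 1 else 0 := by
  simp only [suppCard, Finset.card_filter, Fin.sum_univ_castSucc, Fin.snoc_castSucc, Fin.snoc_last]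

theorem suppCard_snoc_zero : suppCard (Fin.snoc k 0 : Fin (r + 1) → ℕ) = suppCard k := by
  simp [suppCard_snoc]

theorem suppCard_snoc_succ (n : ℕ) :
    suppCard (Fin.snoc k (n + 1) : Fin (r + 1) → ℕ) = suppCard k + 1 := by
  simp [suppCard_snoc]

end SuppCard

section Bounds

variable {C D q : ℝ}

/-- The bound of condition (a) on `|θ_p(k) - θ_p(k')|`, for `p = q`, `k_i = a` and
`#supp(k) = s`. -/
noncomputable def stepBound (C q : ℝ) (a s : ℕ) : ℝ := if a = 1 ∧ 2 ≤ s then C else C / q ^ a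

/-- The bound of condition (b) on `θ_p(k)`, for `p = q` and `#supp(k) = s`; the case `k = 0` is
encoded as `s = 0`. -/
noncomputable def sizeBound (C q : ℝ) (s : ℕ) : ℝ := if s = 0 then 1 + C / q ^ 2 else 1 + s * C / q

theorem stepBound_mono (hq : 0 < q) (hCD : C ≤ D) (a s : ℕ) :
    stepBound C q a s ≤ stepBound D q a s := by
  unfold stepBound
  split_ifs
  · exact hCD
  · gcongr

theorem sizeBound_mono (hq : 0 < q) (hCD : C ≤ D) (s : ℕ) : sizeBound C q s ≤ sizeBound D q s := by
  unfold sizeBound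
  split_ifs <;> gcongr

theorem average_stepBound_le (hC : 0 ≤ C) (hq : 0 < q) (a s : ℕ) :
    (1 - 1 / q) * stepBound C q a s + stepBound C q a (s + 1) / q ≤ stepBound (2 * C) q a s := by
  have average_self_le (b : ℝ) (hb : 0 ≤ b) : (1 - 1 / q) * b + b / q ≤ 2 * b := by
    linarith [show (1 - 1 / q) * b + b / q = b by ring]
  have hpow : 0 ≤ C / q ^ a := by positivity
  by_cases ha : a = 1
  · subst ha
    rcases lt_trichotomy s 1 with hs | rfl | hs
    · simpa [stepBound, show ¬2 ≤ s by lia, show ¬1 ≤ s by lia, mul_div_assoc]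
        using average_self_le _ hpow
    · have hloss : 0 ≤ C / q ^ 2 := by positivity
      calc (1 - 1 / q) * stepBound C q 1 1 + stepBound C q 1 (1 + 1) / q
          = 2 * C / q - C / q ^ 2 := by simp [stepBound]; ring
        _ ≤ stepBound (2 * C) q 1 1 := by simpa [stepBound] using hloss
    · simpa [stepBound, show 2 ≤ s from hs, hs.le] using average_self_le C hC
  · simpa [stepBound, ha, mul_div_assoc] using average_self_le _ hpow

theorem average_sizeBound_le (hC : 0 ≤ C) (hq : 1 ≤ q) (s : ℕ) :
    (1 - 1 / q) * sizeBound C q s + sizeBound C q (s + 1) / q ≤ sizeBound (2 * C) q s := by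
  rcases s.eq_zero_or_pos with rfl | hs
  · have hloss : 0 ≤ C / q ^ 3 := by positivity
    calc (1 - 1 / q) * sizeBound C q 0 + sizeBound C q (0 + 1) / q
        = 1 + 2 * C / q ^ 2 - C / q ^ 3 := by simp [sizeBound]; ring
      _ ≤ sizeBound (2 * C) q 0 := by simpa [sizeBound] using hloss
  · have hs₁ : (1 : ℝ) ≤ s := by exact_mod_cast hs
    have hexcess : C / q / q ≤ s * (C / q) :=
      calc C / q / q ≤ C / q := div_le_self (by positivity) hq
        _ ≤ s * (C / q) := le_mul_of_one_le_left (by positivity) hs₁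
    calc (1 - 1 / q) * sizeBound C q s + sizeBound C q (s + 1) / q
        = 1 + s * (C / q) + C / q / q := by simp [sizeBound, hs.ne']; ring
      _ ≤ 1 + s * (C / q) + s * (C / q) := by gcongr
      _ = sizeBound (2 * C) q s := by simp [sizeBound, hs.ne']; ring

end Bounds

/-- The conditions of `LocCond` on a single function `f = θ_p`, with the prime `p` replaced by a
real number `q`. -/
structure LocCondAt {r : ℕ} (C q : ℝ) (f : (Fin r → ℕ) → ℝ) : Prop where
  nonneg : ∀ k, 0 ≤ f k
  abs_sub_le : ∀ (k k' : Fin r → ℕ) (i : Fin r), k i = k' i + 1 → (∀ j, j ≠ i → k j = k' j) →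
    |f k - f k'| ≤ stepBound C q (k i) (suppCard k)
  le_sizeBound : ∀ k, f k ≤ sizeBound C q (suppCard k)

theorem locCond_iff {r : ℕ} {C : ℝ} {θ : ℕ → (Fin r → ℕ) → ℝ} :
    LocCond r C θ ↔ ∀ p : ℕ, p.Prime → LocCondAt C p (θ p) := by
  refine forall₂_congr fun p _ => ⟨fun ⟨hnonneg, hstep, hzero, hsize⟩ => ⟨hnonneg, ?_, ?_⟩,
    fun h => ⟨h.nonneg, fun k k' i hi hj => ?_, ?_, fun k hk => ?_⟩⟩
  · intro k k' i hi hj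
    unfold stepBound
    split_ifs with hki
    · exact (hstep k k' i hi hj).1 hki
    · exact (hstep k k' i hi hj).2 hki
  · intro k
    unfold sizeBound
    split_ifs with hk
    · exact (suppCard_eq_zero_iff k).1 hk ▸ hzero
    · exact hsize k (mt (suppCard_eq_zero_iff k).2 hk)
  · have hkk' := h.abs_sub_le k k' i hi hj
    exact ⟨fun hki => by rwa [stepBound, if_pos hki] at hkk',
      fun hki => by rwa [stepBound, if_neg hki] at hkk'⟩
  · have hsize := h.le_sizeBound 0
    rwa [sizeBound, if_pos ((suppCard_eq_zero_iff _).2 rfl)] at hsize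
  · simpa only [sizeBound, if_neg (mt (suppCard_eq_zero_iff k).1 hk)] using h.le_sizeBound k

theorem LocCond.mono {r : ℕ} {C D : ℝ} {θ : ℕ → (Fin r → ℕ) → ℝ} (hθ : LocCond r C θ)
    (hCD : C ≤ D) : LocCond r D θ :=
  locCond_iff.2 fun p hp =>
    have hp₀ : (0 : ℝ) < p := by exact_mod_cast hp.pos
    have h := locCond_iff.1 hθ p hp
    { nonneg := h.nonneg
      abs_sub_le := fun k k' i hi hj =>
        (h.abs_sub_le k k' i hi hj).trans (stepBound_mono hp₀ hCD _ _)
      le_sizeBound := fun k => (h.le_sizeBound k).trans (sizeBound_mono hp₀ hCD _) }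

namespace LocCondAt

variable {r : ℕ} {C q : ℝ} {f : (Fin (r + 1) → ℕ) → ℝ}

theorem const_nonneg (hf : LocCondAt C q f) (hq : 0 < q) : 0 ≤ C := by
  have hstep := (abs_nonneg _).trans
    (hf.abs_sub_le (Pi.single 0 1) 0 0 (by simp) fun j hj => by simp [hj])
  unfold stepBound at hstep
  split_ifs at hstep
  · exact hstep
  · simpa using (le_div_iff₀ (by positivity)).1 hstep

theorem abs_snoc_zero_le (hf : LocCondAt C q f) (k : Fin r → ℕ) :
    |f (Fin.snoc k 0)| ≤ sizeBound C q (suppCard k) := by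
  rw [abs_of_nonneg (hf.nonneg _), ← suppCard_snoc_zero k]
  exact hf.le_sizeBound _

theorem abs_snoc_succ_le (hf : LocCondAt C q f) (k : Fin r → ℕ) (n : ℕ) :
    |f (Fin.snoc k (n + 1))| ≤ sizeBound C q (suppCard k + 1) := by
  rw [abs_of_nonneg (hf.nonneg _), ← suppCard_snoc_succ k n]
  exact hf.le_sizeBound _

theorem summable_snoc_div_pow (hf : LocCondAt C q f) (hq : 1 < q) (k : Fin r → ℕ) :
    Summable fun n => f (Fin.snoc k n) / q ^ n :=
  summable_div_pow hq (hf.abs_snoc_succ_le k)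

theorem abs_sub_snoc_le (hf : LocCondAt C q f) {k k' : Fin r → ℕ} {i : Fin r}
    (hi : k i = k' i + 1) (hj : ∀ j, j ≠ i → k j = k' j) (n : ℕ) :
    |f (Fin.snoc k n) - f (Fin.snoc k' n)| ≤
      stepBound C q (k i) (suppCard (Fin.snoc k n : Fin (r + 1) → ℕ)) := by
  have hj' (j : Fin (r + 1)) (hne : j ≠ i.castSucc) :
      (Fin.snoc k n : Fin (r + 1) → ℕ) j = (Fin.snoc k' n : Fin (r + 1) → ℕ) j := by
    cases j using Fin.lastCases with
    | last => simp
    | cast j => simpa using hj j (ne_of_apply_ne Fin.castSucc hne)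
  simpa using hf.abs_sub_le (Fin.snoc k n) (Fin.snoc k' n) i.castSucc (by simpa using hi) hj'

theorem geomAverage_snoc (hf : LocCondAt C q f) (hq : 1 < q) :
    LocCondAt (2 * C) q fun k : Fin r → ℕ => geomAverage q fun n => f (Fin.snoc k n) where
  nonneg k := geomAverage_nonneg hq.le fun n => hf.nonneg _
  abs_sub_le k k' i hi hj := by
    have hstep := hf.abs_sub_snoc_le hi hj
    have hzero := hstep 0
    have hsucc (n : ℕ) := hstep (n + 1)
    simp only [suppCard_snoc_zero] at hzero
    simp only [suppCard_snoc_succ] at hsucc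
    rw [← geomAverage_sub (hf.summable_snoc_div_pow hq k) (hf.summable_snoc_div_pow hq k')]
    exact (abs_geomAverage_le hq hzero hsucc).trans
      (average_stepBound_le (hf.const_nonneg (by positivity)) (by positivity) _ _)
  le_sizeBound k :=
    calc geomAverage q (fun n => f (Fin.snoc k n))
        ≤ |geomAverage q fun n => f (Fin.snoc k n)| := le_abs_self _
      _ ≤ (1 - 1 / q) * sizeBound C q (suppCard k) + sizeBound C q (suppCard k + 1) / q :=
          abs_geomAverage_le hq (hf.abs_snoc_zero_le k) (hf.abs_snoc_succ_le k)
      _ ≤ sizeBound (2 * C) q (suppCard k) :=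
          average_sizeBound_le (hf.const_nonneg (by positivity)) hq.le _

end LocCondAt

theorem locCond_average_general {r : ℕ} {C : ℝ} {θ : ℕ → (Fin (r + 1) → ℕ) → ℝ}
    (hθ : LocCond (r + 1) C θ) :
    (∀ p : ℕ, p.Prime → ∀ k : Fin r → ℕ,
      Summable (fun n : ℕ => θ p (Fin.snoc k n) / (p : ℝ) ^ n)) ∧
    LocCond r (2 * C)
      (fun p k => (1 - 1 / (p : ℝ)) * ∑' n : ℕ, θ p (Fin.snoc k n) / (p : ℝ) ^ n) := by
  have hθ' := locCond_iff.1 hθ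
  have one_lt_cast {p : ℕ} (hp : p.Prime) : (1 : ℝ) < p := by exact_mod_cast hp.one_lt
  exact ⟨fun p hp => (hθ' p hp).summable_snoc_div_pow (one_lt_cast hp),
    locCond_iff.2 fun p hp => (hθ' p hp).geomAverage_snoc (one_lt_cast hp)⟩

/-- Averaging a family in `Θ₄,ᵣ(C)` (here `r = m + 2 ≥ 2`) over its last variable: the series
`∑_m θ_p(k, m)/p^m` converges, and `θ'_p(k) = (1 − 1/p) ∑_m θ_p(k, m)/p^m` defines a family in
`Θ₄,ᵣ₋₁(3C)`. -/
theorem locCond_average (m : ℕ) (C : ℝ) (hC : 1 ≤ C)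
    (θ : ℕ → (Fin (m + 2) → ℕ) → ℝ) (hθ : LocCond (m + 2) C θ) :
    (∀ p : ℕ, p.Prime → ∀ k : Fin (m + 1) → ℕ,
      Summable (fun n : ℕ => θ p (Fin.snoc k n) / (p : ℝ) ^ n)) ∧
    LocCond (m + 1) (3 * C)
      (fun p k => (1 - 1 / (p : ℝ)) * ∑' n : ℕ, θ p (Fin.snoc k n) / (p : ℝ) ^ n) := by
  obtain ⟨hsummable, haverage⟩ := locCond_average_general hθ
  exact ⟨hsummable, haverage.mono (by linarith)⟩
end

section
/- Let ψ : ℤ⁹ → ℤ⁵ be given by ψ(η₁,…,η₉) = (η₂η₃η₄η₅η₆η₇η₈, η₁²η₂²η₃³η₄²η₆, η₁η₂η₃²η₄²η₅²η₆²η₇, η₃η₄²η₅⁴η₆³η₇², η₇η₈η₉). Let E = {{1,3},{2,3},{4,3},{1,9},{2,8},{7,5},{5,6},{6,4},{9,7},{9,8},{8,7}}. For B ≥ 3 let T₀(B) be the set of (η₁,…,η₉) ∈ ℤ⁹ with η₁,…,η₆ ≥ 1, η₇ ≠ 0, satisfying: η₁η₉ + η₂η₈ + η₄η₅³η₆²η₇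 = 0; max_{0 ≤ i ≤ 4} |ψ(η)_i| ≤ B; and gcd(η_i, η_j) = 1 for every pair {i,j} ⊂ {1,…,9} with i ≠ j and {i,j} ∉ E. Let S ⊂ P⁴_ℚ be the surface defined by x₀² + x₀x₃ + x₂x₄ = 0 and x₁x₃ − x₂² = 0, let U be the complement in S of the three lines {x₀=x₁=x₂=0}, {x₀+x₃=x₁=x₂=0}, {x₀=x₂=x₃=0}, and let H(x) = max{|x₀|,…,|x₄|} where (x₀,…,x₄) are coprime integer coordinates of x. Then η ↦ ψ(η), viewed as a point of P⁴(ℚ), defines a bijection between T₀(B) and {x ∈ U(ℚ) : H(x) ≤ B}. -/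
/-!
The map is inverted by successive greatest common divisors. On `U` one has `x₂ ≠ 0`, so `x₁` and
`x₃` have the same sign, and after a change of sign of the whole vector
`(x₁, x₂, x₃) = (g s², g s t, g t²)` with `g, s > 0` and `gcd(s, t) = 1`. In terms of the torsor
coordinates, `g = η₃η₄²η₆`, `s = η₁η₂η₃`, `t = η₅²η₆η₇`, and the coprimality conditions give

* `η₆ = gcd(η₆ · η₃η₄², η₆ · η₇η₅²) = gcd(g, t)`,
* `η₃ = gcd(η₃ · η₄², η₃ · η₁η₂) = gcd(g / η₆, s)`,
* `|η₇| = gcd(η₇ · η₅², η₇ · η₈η₉) = gcd(t / η₆, x₄)`, the sign of `η₇` being that of `t`,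
* `η₂ = gcd(η₂ · η₁, η₂ · η₈) = gcd(s / η₃, x₀ / (η₃η₄η₅η₆η₇))`,

and the torsor equation determines `η₉`. Hence `ψ` is injective. Conversely, extract the same gcds
from a point of `U`. Once `η₃, η₆, η₇` are split off, the first quadric becomes monic in
`x₀ / (η₃η₆η₇)`, which is therefore an integer `z`; coprimality then forces the remaining parts of
`g` and `t` to be squares `η₄²`, `η₅²` with `η₄η₅ ∣ z`, and one last gcd produces
`η₁, η₂, η₈, η₉` together with the torsor equation.
-/

/-- The map `ψ` from the universal torsor to `P⁴`, in coordinates `η₁, …, η₉` (zero-indexed):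
`ψ(η) = (η₂η₃η₄η₅η₆η₇η₈, η₁²η₂²η₃³η₄²η₆, η₁η₂η₃²η₄²η₅²η₆²η₇, η₃η₄²η₅⁴η₆³η₇², η₇η₈η₉)`. -/
def psiMap (η : Fin 9 → ℤ) : Fin 5 → ℤ :=
  ![η 1 * η 2 * η 3 * η 4 * η 5 * η 6 * η 7,
    η 0 ^ 2 * η 1 ^ 2 * η 2 ^ 3 * η 3 ^ 2 * η 5,
    η 0 * η 1 * η 2 ^ 2 * η 3 ^ 2 * η 4 ^ 2 * η 5 ^ 2 * η 6,
    η 2 * η 3 ^ 2 * η 4 ^ 4 * η 5 ^ 3 * η 6 ^ 2,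
    η 6 * η 7 * η 8]

/-- The edges of the extended Dynkin diagram (zero-indexed pairs), i.e. the pairs of
coordinates that are *not* required to be coprime. -/
def edgeSet : Set (Finset (Fin 9)) :=
  {{0, 2}, {1, 2}, {3, 2}, {0, 8}, {1, 7}, {6, 4}, {4, 5}, {5, 3}, {8, 6}, {8, 7}, {7, 6}}

/-- The set `T₀(B)` of integral points on the universal torsor: positivity/nonvanishing
conditions, the torsor equation, the height conditions and the coprimality conditions. -/
def T0 (B : ℝ) : Set (Fin 9 → ℤ) :=
  {η | (∀ i : Fin 9, i.val ≤ 5 → 1 ≤ η i) ∧ η 6 ≠ 0 ∧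
    η 0 * η 8 + η 1 * η 7 + η 3 * η 4 ^ 3 * η 5 ^ 2 * η 6 = 0 ∧
    (∀ j : Fin 5, (|psiMap η j| : ℝ) ≤ B) ∧
    (∀ i j : Fin 9, i ≠ j → ({i, j} : Finset (Fin 9)) ∉ edgeSet →
      Int.gcd (η i) (η j) = 1)}

/-- `v` is a primitive integral vector: the gcd of its coordinates is `1`. -/
def Primitive (v : Fin 5 → ℤ) : Prop := Finset.univ.gcd v = 1

/-- `v` satisfies the equations of the quartic del Pezzo surface
`x₀² + x₀x₃ + x₂x₄ = x₁x₃ − x₂² = 0` and lies on none of its three lines. -/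
def OnU (v : Fin 5 → ℤ) : Prop :=
  v 0 ^ 2 + v 0 * v 3 + v 2 * v 4 = 0 ∧ v 1 * v 3 - v 2 ^ 2 = 0 ∧
  ¬(v 0 = 0 ∧ v 1 = 0 ∧ v 2 = 0) ∧
  ¬(v 0 + v 3 = 0 ∧ v 1 = 0 ∧ v 2 = 0) ∧
  ¬(v 0 = 0 ∧ v 2 = 0 ∧ v 3 = 0)

/-! ### Greatest common divisors and squares of integers -/

theorem exists_gcd_factor {x : ℤ} (y : ℤ) (hx : x ≠ 0) :
    ∃ f a b : ℤ, 0 < f ∧ x = f * a ∧ y = f * b ∧ IsCoprime a b := by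
  have hpos : 0 < Int.gcd x y := Int.gcd_pos_of_ne_zero_left y hx
  obtain ⟨a, b, hab, hxa, hyb⟩ := Int.exists_gcd_one hpos
  exact ⟨Int.gcd x y, a, b, mod_cast hpos, by rwa [mul_comm], by rwa [mul_comm],
    Int.isCoprime_iff_gcd_eq_one.2 hab⟩

theorem exists_gcd_factor_pos_left {x : ℤ} (y : ℤ) (hx : x ≠ 0) :
    ∃ f a b : ℤ, f ≠ 0 ∧ 0 < a ∧ x = f * a ∧ y = f * b ∧ IsCoprime a b := by
  obtain ⟨f, a, b, hf, rfl, rfl, hab⟩ := exists_gcd_factor y hx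
  rcases (right_ne_zero_of_mul hx).lt_or_gt with ha | ha
  · exact ⟨-f, -a, -b, by omega, by omega, by ring, by ring, hab.neg_neg⟩
  · exact ⟨f, a, b, hf.ne', ha, rfl, rfl, hab⟩

theorem gcd_factor_unique {f a b f' a' b' : ℤ} (hff' : 0 < f * f') (hab : IsCoprime a b)
    (hab' : IsCoprime a' b') (ha : f * a = f' * a') (hb : f * b = f' * b') :
    f = f' ∧ a = a' ∧ b = b' := by
  rw [Int.isCoprime_iff_gcd_eq_one] at hab hab'
  have habs : f.natAbs = f'.natAbs := by
    simpa [Int.gcd_mul_left, hab, hab'] using congrArg₂ Int.gcd ha hb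
  obtain rfl : f = f' := by
    rcases Int.natAbs_eq_natAbs_iff.1 habs with h | rfl
    · exact h
    · nlinarith [sq_nonneg f']
  have hf : f ≠ 0 := by rintro rfl; simp at hff'
  exact ⟨rfl, mul_left_cancel₀ hf ha, mul_left_cancel₀ hf hb⟩

theorem exists_pos_eq_sq_of_isCoprime {a b c : ℤ} (ha : 0 < a) (hab : IsCoprime a b)
    (h : a * b = c ^ 2) : ∃ r : ℤ, 0 < r ∧ a = r ^ 2 := by
  obtain ⟨r, rfl | rfl⟩ := Int.sq_of_isCoprime hab h
  · exact ⟨|r|, abs_pos.2 (sq_pos_iff.1 ha), (sq_abs r).symm⟩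
  · nlinarith [sq_nonneg r]

/-! ### The conic `x z = y²` -/

theorem exists_conic_param {x y z : ℤ} (hx : 0 < x) (h : x * z = y ^ 2) :
    ∃ g s t : ℤ, 0 < g ∧ 0 < s ∧ IsCoprime s t ∧
      x = g * s ^ 2 ∧ y = g * s * t ∧ z = g * t ^ 2 := by
  obtain ⟨g, a, c, hg, rfl, rfl, hac⟩ := exists_gcd_factor z hx.ne'
  obtain ⟨b, rfl⟩ : g ∣ y :=
    (Int.pow_dvd_pow_iff two_ne_zero).1 ⟨a * c, by linear_combination -h⟩
  have hb : a * c = b ^ 2 := by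
    apply mul_left_cancel₀ (pow_ne_zero 2 hg.ne')
    linear_combination h
  obtain ⟨s, hs, rfl⟩ := exists_pos_eq_sq_of_isCoprime (pos_of_mul_pos_right hx hg.le) hac hb
  obtain ⟨t, rfl⟩ : s ∣ b := (Int.pow_dvd_pow_iff two_ne_zero).1 ⟨c, hb.symm⟩
  obtain rfl : c = t ^ 2 := by
    apply mul_left_cancel₀ (pow_ne_zero 2 hs.ne')
    linear_combination hb
  exact ⟨g, s, t, hg, hs, (IsCoprime.pow_iff two_pos two_pos).1 hac, rfl, by ring, rfl⟩

theorem conic_param_unique {g s t g' s' t' : ℤ} (hg : 0 < g) (hg' : 0 < g') (hs : 0 < s)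
    (hs' : 0 < s') (hst : IsCoprime s t) (hst' : IsCoprime s' t')
    (hx : g * s ^ 2 = g' * s' ^ 2) (hy : g * s * t = g' * s' * t')
    (hz : g * t ^ 2 = g' * t' ^ 2) : g = g' ∧ s = s' ∧ t = t' := by
  obtain ⟨rfl, hss, -⟩ := gcd_factor_unique (mul_pos hg hg') hst.pow hst'.pow hx hz
  obtain rfl : s = s' := (sq_eq_sq₀ hs.le hs'.le).1 hss
  exact ⟨rfl, rfl, mul_left_cancel₀ (mul_pos hg hs).ne' hy⟩

/-! ### Integral roots of monic quadratic polynomials -/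

theorem exists_root_of_scaled_quadratic {x u b e : ℤ} (hu : u ≠ 0)
    (h : x ^ 2 + x * (u * b) + u ^ 2 * e = 0) :
    ∃ z : ℤ, x = u * z ∧ z ^ 2 + z * b + e = 0 := by
  obtain ⟨z, rfl⟩ : u ∣ x := by
    obtain ⟨f, v, y, hf, rfl, rfl, hvy⟩ := exists_gcd_factor x hu
    have h' : y ^ 2 + y * (v * b) + v ^ 2 * e = 0 := by
      apply mul_left_cancel₀ (pow_ne_zero 2 hf.ne')
      linear_combination h
    have hdvd : v ∣ y ^ 2 := ⟨-(y * b + v * e), by linear_combination h'⟩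
    exact mul_dvd_mul_left f (hvy.pow_right.isUnit_of_dvd' dvd_rfl hdvd).dvd
  refine ⟨z, rfl, mul_left_cancel₀ (pow_ne_zero 2 hu) ?_⟩
  linear_combination h

theorem exists_eq_sq_of_quadratic {n z b e : ℤ} (hn : 0 < n) (hne : IsCoprime n e)
    (h : z ^ 2 + z * (n * b) + n * e = 0) : ∃ r : ℤ, 0 < r ∧ n = r ^ 2 := by
  refine exists_pos_eq_sq_of_isCoprime (b := -(z * b + e)) (c := z) hn ?_
    (by linear_combination -h)
  refine isCoprime_of_prime_dvd (fun h0 => hn.ne' h0.1) fun p hp hpn hpc => ?_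
  have hpz : p ∣ z := hp.dvd_of_dvd_pow (n := 2)
    (hpn.trans ⟨-(z * b + e), by linear_combination h⟩)
  have hpe : p ∣ e := (dvd_add_right (hpz.mul_right b)).1 (dvd_neg.1 hpc)
  exact hp.not_isUnit (hne.isUnit_of_dvd' hpn hpe)

theorem exists_sq_factors_of_quadratic {m n z b e : ℤ} (hm : 0 < m) (hn : 0 < n)
    (hmn : IsCoprime m n) (he : IsCoprime (m * n) e)
    (h : z ^ 2 + z * (m * n * b) + m * n * e = 0) :
    ∃ r s w : ℤ, 0 < r ∧ 0 < s ∧ m = r ^ 2 ∧ n = s ^ 2 ∧ z = r * s * w ∧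
      w ^ 2 + w * (r * s * b) + e = 0 := by
  obtain ⟨c, -, hc⟩ := exists_eq_sq_of_quadratic (mul_pos hm hn) he h
  obtain ⟨r, hr, rfl⟩ := exists_pos_eq_sq_of_isCoprime hm hmn hc
  obtain ⟨s, hs, rfl⟩ := exists_pos_eq_sq_of_isCoprime hn hmn.symm (by rwa [mul_comm])
  obtain ⟨w, rfl, hw⟩ := exists_root_of_scaled_quadratic (x := z) (b := r * s * b) (e := e)
    (mul_pos hr hs).ne' (by linear_combination h)
  exact ⟨r, s, w, hr, hs, rfl, rfl, rfl, hw⟩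

theorem exists_factor_of_quadratic {s w e y : ℤ} (hs : s ≠ 0) (hw : w ^ 2 + w * e + s * y = 0) :
    ∃ h k q m : ℤ, 0 < h ∧ s = h * k ∧ w = h * q ∧ y = q * m ∧ IsCoprime k q ∧
      k * m + h * q + e = 0 := by
  obtain ⟨h, k, q, hh, rfl, rfl, hkq⟩ := exists_gcd_factor w hs
  have hq : q * (h * q + e) = k * -y := by
    apply mul_left_cancel₀ hh.ne'
    linear_combination hw
  obtain ⟨m, hm⟩ : k ∣ h * q + e := hkq.dvd_of_dvd_mul_left ⟨-y, hq⟩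
  refine ⟨h, k, q, -m, hh, rfl, rfl, ?_, hkq, by linear_combination hm⟩
  apply mul_left_cancel₀ (right_ne_zero_of_mul hs)
  linear_combination hq - q * hm

/-! ### Primitive vectors and points of `U` -/

theorem primitive_iff_forall_prime (v : Fin 5 → ℤ) :
    Primitive v ↔ ∀ p : ℤ, Prime p → ¬ ∀ i, p ∣ v i := by
  rw [Primitive]
  constructor
  · intro h p hp hd
    exact hp.not_isUnit (isUnit_of_dvd_one (h ▸ Finset.dvd_gcd fun i _ => hd i))
  · intro h
    by_contra hne
    have hnat : (Finset.univ.gcd v).natAbs ≠ 1 := fun hone => hne <| by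
      rw [← Finset.normalize_gcd, normalize_eq_one, Int.isUnit_iff_natAbs_eq, hone]
    obtain ⟨p, hp, hpd⟩ := Int.exists_prime_and_dvd hnat
    exact h p hp fun i => hpd.trans (Finset.gcd_dvd (Finset.mem_univ i))

theorem Primitive.neg {v : Fin 5 → ℤ} (hv : Primitive v) : Primitive (-v) := by
  rw [primitive_iff_forall_prime] at hv ⊢
  simpa using hv

namespace OnU

variable {v : Fin 5 → ℤ}

theorem neg (hv : OnU v) : OnU (-v) := by
  simp only [OnU, Pi.neg_apply, ← neg_add, neg_eq_zero] at hv ⊢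
  obtain ⟨h₁, h₂, hL⟩ := hv
  exact ⟨by linear_combination h₁, by linear_combination h₂, hL⟩

theorem apply_two_ne_zero (hv : OnU v) : v 2 ≠ 0 := by
  obtain ⟨e₁, e₂, l₁, l₂, l₃⟩ := hv
  intro h₂
  have h₀₃ : v 0 * (v 0 + v 3) = 0 := by linear_combination e₁ - v 4 * h₂
  have h₁₃ : v 1 * v 3 = 0 := by linear_combination e₂ + v 2 * h₂
  rcases mul_eq_zero.1 h₁₃ with h₁ | h₃
  · rcases mul_eq_zero.1 h₀₃ with h₀ | h₀
    · exact l₁ ⟨h₀, h₁, h₂⟩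
    · exact l₂ ⟨h₀, h₁, h₂⟩
  · rw [h₃, add_zero, mul_self_eq_zero] at h₀₃
    exact l₃ ⟨h₀₃, h₂, h₃⟩

theorem apply_one_ne_zero (hv : OnU v) : v 1 ≠ 0 := by
  intro h₁
  refine pow_ne_zero 2 hv.apply_two_ne_zero ?_
  linear_combination v 3 * h₁ - hv.2.1

end OnU

/-! ### Torsor points -/

/-- The conditions on `η` in the definition of `T₀(B)` other than the height bound. -/
structure IsTorsorPoint (η : Fin 9 → ℤ) : Prop where
  pos : ∀ i : Fin 9, i.val ≤ 5 → 0 < η i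
  six_ne_zero : η 6 ≠ 0
  equation : η 0 * η 8 + η 1 * η 7 + η 3 * η 4 ^ 3 * η 5 ^ 2 * η 6 = 0
  pairwise_isCoprime : ∀ i j : Fin 9, i ≠ j → ({i, j} : Finset (Fin 9)) ∉ edgeSet →
    IsCoprime (η i) (η j)

theorem mem_T0_iff {B : ℝ} {η : Fin 9 → ℤ} :
    η ∈ T0 B ↔ IsTorsorPoint η ∧ ∀ j : Fin 5, (|psiMap η j| : ℝ) ≤ B := by
  simp only [T0, Set.mem_ofPred_eq, ← Int.isCoprime_iff_gcd_eq_one]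
  exact ⟨fun ⟨hpos, h6, he, hB, hc⟩ => ⟨⟨hpos, h6, he, hc⟩, hB⟩,
    fun ⟨⟨hpos, h6, he, hc⟩, hB⟩ => ⟨hpos, h6, he, hB, hc⟩⟩

instance decidableMemEdgeSet (e : Finset (Fin 9)) : Decidable (e ∈ edgeSet) := by
  unfold edgeSet
  infer_instance

/-- The common factor `g` in `ψ(η) = (x₀, g s², g s t, g t², x₄)`. -/
def conicFactor (η : Fin 9 → ℤ) : ℤ := η 2 * η 3 ^ 2 * η 5

/-- The parameter `s` in `ψ(η) = (x₀, g s², g s t, g t², x₄)`. -/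
def conicFst (η : Fin 9 → ℤ) : ℤ := η 0 * η 1 * η 2

/-- The parameter `t` in `ψ(η) = (x₀, g s², g s t, g t², x₄)`. -/
def conicSnd (η : Fin 9 → ℤ) : ℤ := η 4 ^ 2 * η 5 * η 6

theorem psiMap_apply_one (η : Fin 9 → ℤ) : psiMap η 1 = conicFactor η * conicFst η ^ 2 := by
  simp only [psiMap, conicFactor, conicFst, Matrix.cons_val]
  ring

theorem psiMap_apply_two (η : Fin 9 → ℤ) :
    psiMap η 2 = conicFactor η * conicFst η * conicSnd η := by
  simp only [psiMap, conicFactor, conicFst, conicSnd, Matrix.cons_val]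
  ring

theorem psiMap_apply_three (η : Fin 9 → ℤ) : psiMap η 3 = conicFactor η * conicSnd η ^ 2 := by
  simp only [psiMap, conicFactor, conicSnd, Matrix.cons_val]
  ring

/-- The torsor equation supplies the coprimality of `η 1` with `η 0` and `η 8`. -/
theorem IsTorsorPoint.of_isCoprime {η : Fin 9 → ℤ} (hpos : ∀ i : Fin 9, i.val ≤ 5 → 0 < η i)
    (h6 : η 6 ≠ 0) (heq : η 0 * η 8 + η 1 * η 7 + η 3 * η 4 ^ 3 * η 5 ^ 2 * η 6 = 0)
    (hst : IsCoprime (conicFst η) (conicSnd η)) (hg : IsCoprime (conicFactor η) (psiMap η 4))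
    (h34 : IsCoprime (η 3) (η 4)) (h3 : IsCoprime (η 3) (η 0 * η 1))
    (h4 : IsCoprime (η 4) (η 7 * η 8)) (h07 : IsCoprime (η 0) (η 7)) : IsTorsorPoint η := by
  simp only [conicFst, conicSnd, conicFactor, psiMap, Matrix.cons_val, IsCoprime.mul_left_iff,
    IsCoprime.mul_right_iff, IsCoprime.pow_left_iff two_pos,
    IsCoprime.pow_right_iff two_pos] at hst hg h3 h4
  have h1 : IsCoprime (η 1) (η 0 * η 8) := by
    have h1_last : IsCoprime (η 1) (η 3 * η 4 ^ 3 * η 5 ^ 2 * η 6) := by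
      simp only [IsCoprime.mul_right_iff, IsCoprime.pow_right_iff two_pos,
        IsCoprime.pow_right_iff three_pos, hst, h3.2.symm, and_self]
    have h08 : η 0 * η 8 = -(η 3 * η 4 ^ 3 * η 5 ^ 2 * η 6) + η 1 * -η 7 := by
      linear_combination heq
    exact h08 ▸ h1_last.neg_right.add_mul_left_right _
  rw [IsCoprime.mul_right_iff] at h1
  refine ⟨hpos, h6, heq, fun i j => ?_⟩
  wlog hij : i < j generalizing i j
  · intro hne hE
    exact (this j i (by omega) hne.symm (by rwa [Finset.pair_comm])).symm
  -- `decide` discards the pairs in `edgeSet`; 25 conditions `IsCoprime (η i) (η j)` remain.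
  revert i j
  simp +decide only [Fin.forall_fin_succ, IsEmpty.forall_iff, true_implies]
  have := h1.1.symm
  tauto

namespace IsTorsorPoint

variable {η : Fin 9 → ℤ}

theorem isCoprime (hη : IsTorsorPoint η) (i j : Fin 9)
    (h : i ≠ j ∧ ({i, j} : Finset (Fin 9)) ∉ edgeSet := by decide) : IsCoprime (η i) (η j) :=
  hη.pairwise_isCoprime i j h.1 h.2

theorem isCoprime_conicFst_conicSnd (hη : IsTorsorPoint η) :
    IsCoprime (conicFst η) (conicSnd η) := by
  simp only [conicFst, conicSnd, IsCoprime.mul_left_iff, IsCoprime.mul_right_iff,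
    IsCoprime.pow_right_iff two_pos]
  and_intros <;> exact hη.isCoprime _ _

theorem isCoprime_conicFactor (hη : IsTorsorPoint η) :
    IsCoprime (conicFactor η) (psiMap η 4) := by
  simp only [conicFactor, psiMap, Matrix.cons_val, IsCoprime.mul_left_iff,
    IsCoprime.mul_right_iff, IsCoprime.pow_left_iff two_pos]
  and_intros <;> exact hη.isCoprime _ _

theorem conicFactor_pos (hη : IsTorsorPoint η) : 0 < conicFactor η :=
  mul_pos (mul_pos (hη.pos 2 (by decide)) (pow_pos (hη.pos 3 (by decide)) 2))
    (hη.pos 5 (by decide))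

theorem conicFst_pos (hη : IsTorsorPoint η) : 0 < conicFst η :=
  mul_pos (mul_pos (hη.pos 0 (by decide)) (hη.pos 1 (by decide))) (hη.pos 2 (by decide))

theorem conicSnd_ne_zero (hη : IsTorsorPoint η) : conicSnd η ≠ 0 :=
  mul_ne_zero (mul_pos (pow_pos (hη.pos 4 (by decide)) 2) (hη.pos 5 (by decide))).ne'
    hη.six_ne_zero

theorem psiMap_apply_one_pos (hη : IsTorsorPoint η) : 0 < psiMap η 1 :=
  psiMap_apply_one η ▸ mul_pos hη.conicFactor_pos (pow_pos hη.conicFst_pos 2)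

theorem primitive_psiMap (hη : IsTorsorPoint η) : Primitive (psiMap η) := by
  refine (primitive_iff_forall_prime _).2 fun p hp hd => ?_
  have not_dvd_factor : ¬ p ∣ conicFactor η := fun hpg =>
    hp.not_isUnit (hη.isCoprime_conicFactor.isUnit_of_dvd' hpg (hd 4))
  have dvd_fst : p ∣ conicFst η :=
    hp.dvd_of_dvd_pow ((hp.dvd_or_dvd (psiMap_apply_one η ▸ hd 1)).resolve_left not_dvd_factor)
  have dvd_snd : p ∣ conicSnd η :=
    hp.dvd_of_dvd_pow ((hp.dvd_or_dvd (psiMap_apply_three η ▸ hd 3)).resolve_left not_dvd_factor)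
  exact hp.not_isUnit (hη.isCoprime_conicFst_conicSnd.isUnit_of_dvd' dvd_fst dvd_snd)

theorem onU_psiMap (hη : IsTorsorPoint η) : OnU (psiMap η) := by
  have h₃ : psiMap η 3 ≠ 0 :=
    psiMap_apply_three η ▸ mul_ne_zero hη.conicFactor_pos.ne' (pow_ne_zero 2 hη.conicSnd_ne_zero)
  refine ⟨?_, ?_, fun h => hη.psiMap_apply_one_pos.ne' h.2.1,
    fun h => hη.psiMap_apply_one_pos.ne' h.2.1, fun h => h₃ h.2.2⟩
  · simp only [psiMap, Matrix.cons_val]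
    linear_combination
      (η 1 * η 2 ^ 2 * η 3 ^ 2 * η 4 ^ 2 * η 5 ^ 2 * η 6 ^ 2 * η 7) * hη.equation
  · rw [psiMap_apply_one, psiMap_apply_two, psiMap_apply_three]
    ring

end IsTorsorPoint

/-! ### Injectivity -/

namespace IsTorsorPoint

variable {η θ : Fin 9 → ℤ}

theorem conic_param_eq (hη : IsTorsorPoint η) (hθ : IsTorsorPoint θ)
    (h : psiMap η = psiMap θ) :
    conicFactor η = conicFactor θ ∧ conicFst η = conicFst θ ∧ conicSnd η = conicSnd θ :=
  conic_param_unique hη.conicFactor_pos hθ.conicFactor_pos hη.conicFst_pos hθ.conicFst_pos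
    hη.isCoprime_conicFst_conicSnd hθ.isCoprime_conicFst_conicSnd
    (by rw [← psiMap_apply_one, h, psiMap_apply_one])
    (by rw [← psiMap_apply_two, h, psiMap_apply_two])
    (by rw [← psiMap_apply_three, h, psiMap_apply_three])

theorem eq_of_conicFactor_eq (hη : IsTorsorPoint η) (hθ : IsTorsorPoint θ)
    (hg : conicFactor η = conicFactor θ) (hs : conicFst η = conicFst θ)
    (ht : conicSnd η = conicSnd θ) :
    η 2 = θ 2 ∧ η 3 = θ 3 ∧ η 5 = θ 5 ∧ η 0 * η 1 = θ 0 * θ 1 ∧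
      η 6 * η 4 ^ 2 = θ 6 * θ 4 ^ 2 := by
  simp only [conicFactor, conicFst, conicSnd] at hg hs ht
  have isCoprime₅ : ∀ {ξ}, IsTorsorPoint ξ → IsCoprime (ξ 2 * ξ 3 ^ 2) (ξ 6 * ξ 4 ^ 2) := fun hξ =>
    ((hξ.isCoprime 2 6).mul_right (hξ.isCoprime 2 4).pow_right).mul_left
      ((hξ.isCoprime 3 6).mul_right (hξ.isCoprime 3 4).pow_right).pow_left
  obtain ⟨h₅, h₂₃, h₆₄⟩ := gcd_factor_unique
    (mul_pos (hη.pos 5 (by decide)) (hθ.pos 5 (by decide))) (isCoprime₅ hη) (isCoprime₅ hθ)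
    (by linear_combination hg) (by linear_combination ht)
  have isCoprime₂ : ∀ {ξ}, IsTorsorPoint ξ → IsCoprime (ξ 3 ^ 2) (ξ 0 * ξ 1) := fun hξ =>
    ((hξ.isCoprime 3 0).mul_right (hξ.isCoprime 3 1)).pow_left
  obtain ⟨h₂, h₃, h₀₁⟩ := gcd_factor_unique
    (mul_pos (hη.pos 2 (by decide)) (hθ.pos 2 (by decide))) (isCoprime₂ hη) (isCoprime₂ hθ)
    h₂₃ (by linear_combination hs)
  exact ⟨h₂, (sq_eq_sq₀ (hη.pos 3 (by decide)).le (hθ.pos 3 (by decide)).le).1 h₃, h₅, h₀₁, h₆₄⟩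

theorem eq_of_mul_sq_eq (hη : IsTorsorPoint η) (hθ : IsTorsorPoint θ)
    (h₆₄ : η 6 * η 4 ^ 2 = θ 6 * θ 4 ^ 2) (hψ : psiMap η 4 = psiMap θ 4) :
    η 4 = θ 4 ∧ η 6 = θ 6 := by
  simp only [psiMap, Matrix.cons_val] at hψ
  have p₄ := hη.pos 4 (by decide)
  have q₄ := hθ.pos 4 (by decide)
  have same_sign : 0 < η 6 * θ 6 := by
    have hsq : 0 < η 6 * θ 6 * (η 4 * θ 4) ^ 2 := by
      calc 0 < (η 6 * η 4 ^ 2) ^ 2 := by have := hη.six_ne_zero; positivity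
        _ = η 6 * θ 6 * (η 4 * θ 4) ^ 2 := by linear_combination η 6 * η 4 ^ 2 * h₆₄
    exact pos_of_mul_pos_left hsq (sq_nonneg _)
  have isCoprime₆ : ∀ {ξ}, IsTorsorPoint ξ → IsCoprime (ξ 4 ^ 2) (ξ 7 * ξ 8) := fun hξ =>
    ((hξ.isCoprime 4 7).mul_right (hξ.isCoprime 4 8)).pow_left
  obtain ⟨h₆, h₄, -⟩ := gcd_factor_unique same_sign (isCoprime₆ hη) (isCoprime₆ hθ) h₆₄
    (by linear_combination hψ)
  exact ⟨(sq_eq_sq₀ p₄.le q₄.le).1 h₄, h₆⟩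

theorem eq_of_psiMap_eq (hη : IsTorsorPoint η) (hθ : IsTorsorPoint θ)
    (h : psiMap η = psiMap θ) : η = θ := by
  obtain ⟨hg, hs, ht⟩ := hη.conic_param_eq hθ h
  obtain ⟨h₂, h₃, h₅, h₀₁, h₆₄⟩ := hη.eq_of_conicFactor_eq hθ hg hs ht
  obtain ⟨h₄, h₆⟩ := hη.eq_of_mul_sq_eq hθ h₆₄ (congrFun h 4)
  have h₁₇ : η 1 * η 7 = θ 1 * θ 7 := by
    have hψ := congrFun h 0
    simp only [psiMap, Matrix.cons_val, ← h₂, ← h₃, ← h₄, ← h₅, ← h₆] at hψ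
    have hne : η 2 * η 3 * η 4 * η 5 * η 6 ≠ 0 := by
      have := hη.pos 2 (by decide)
      have := hη.pos 3 (by decide)
      have := hη.pos 4 (by decide)
      have := hη.pos 5 (by decide)
      have := hη.six_ne_zero
      positivity
    apply mul_left_cancel₀ hne
    linear_combination hψ
  obtain ⟨h₁, h₀, h₇⟩ := gcd_factor_unique
    (mul_pos (hη.pos 1 (by decide)) (hθ.pos 1 (by decide))) (hη.isCoprime 0 7) (hθ.isCoprime 0 7)
    (by linear_combination h₀₁) h₁₇
  have h₈ : η 8 = θ 8 := by
    have eη := hη.equation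
    rw [h₀, h₁, h₃, h₄, h₅, h₆, h₇] at eη
    apply mul_left_cancel₀ (hθ.pos 0 (by decide)).ne'
    linear_combination eη - hθ.equation
  ext i
  fin_cases i <;> assumption

end IsTorsorPoint

/-! ### Surjectivity -/

theorem exists_common_factors {g s t : ℤ} (y : ℤ) (hg : 0 < g) (hs : 0 < s) (ht : t ≠ 0) :
    ∃ f c d a b u v : ℤ, 0 < f ∧ 0 < c ∧ d ≠ 0 ∧ 0 < a ∧ 0 < b ∧ 0 < u ∧
      g = f * (c * a) ∧ s = c * u ∧ t = f * (d * b) ∧ y = d * v ∧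
      IsCoprime (c * a) (d * b) ∧ IsCoprime a u ∧ IsCoprime b v := by
  obtain ⟨f, g', t', hf, rfl, rfl, hgt⟩ := exists_gcd_factor t hg.ne'
  have hg' : 0 < g' := pos_of_mul_pos_right hg hf.le
  obtain ⟨c, a, u, hc, rfl, rfl, hau⟩ := exists_gcd_factor s hg'.ne'
  obtain ⟨d, b, v, hd, hb, rfl, rfl, hbv⟩ :=
    exists_gcd_factor_pos_left y (right_ne_zero_of_mul ht)
  exact ⟨f, c, d, a, b, u, v, hf, hc, hd, pos_of_mul_pos_right hg' hc.le, hb,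
    pos_of_mul_pos_right hs hc.le, rfl, rfl, rfl, rfl, hgt, hau, hbv⟩

theorem exists_isTorsorPoint_of_conic_param {g s t x y : ℤ} (hg : 0 < g) (hs : 0 < s) (ht : t ≠ 0)
    (hst : IsCoprime s t) (hgy : IsCoprime g y)
    (h : x ^ 2 + x * (g * t ^ 2) + g * s * t * y = 0) :
    ∃ η, IsTorsorPoint η ∧ conicFactor η = g ∧ conicFst η = s ∧ conicSnd η = t ∧
      psiMap η 0 = x ∧ psiMap η 4 = y := by
  obtain ⟨η₆, η₃, η₇, g₂, t₂, s₁, y₁, p₆, p₃, h₇, hg₂, ht₂, hs₁, rfl, rfl, rfl, rfl,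
    hgt, hgs, hty⟩ := exists_common_factors y hg hs ht
  obtain ⟨z, rfl, hz⟩ : ∃ z, x = η₃ * η₆ * η₇ * z ∧
      z ^ 2 + z * (g₂ * t₂ * (η₆ ^ 2 * η₇ * t₂)) + g₂ * t₂ * (s₁ * y₁) = 0 :=
    exists_root_of_scaled_quadratic (by positivity) (by linear_combination h)
  have hgt₂ : IsCoprime g₂ t₂ := hgt.of_mul_left_right.of_mul_right_right
  have hgy₁ : IsCoprime g₂ y₁ := hgy.of_mul_left_right.of_mul_left_right.of_mul_right_right
  have hst₂ : IsCoprime s₁ t₂ := hst.of_mul_left_right.of_mul_right_right.of_mul_right_right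
  obtain ⟨η₄, η₅, w, p₄, p₅, rfl, rfl, rfl, hw⟩ := exists_sq_factors_of_quadratic hg₂ ht₂ hgt₂
    ((hgs.mul_right hgy₁).mul_left (hst₂.symm.mul_right hty)) hz
  obtain ⟨η₂, η₁, η₈, η₉, p₂, rfl, rfl, rfl, h₁₈, heq⟩ := exists_factor_of_quadratic hs₁.ne' hw
  have p₁ : 0 < η₁ := pos_of_mul_pos_right hs₁ p₂.le
  rw [IsCoprime.pow_left_iff two_pos] at hgs hty
  refine ⟨![η₁, η₂, η₃, η₄, η₅, η₆, η₇, η₈, η₉], .of_isCoprime ?_ h₇ ?_ ?_ ?_ ?_ ?_ hty h₁₈,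
    ?_, ?_, ?_, ?_, ?_⟩
  · intro i hi
    fin_cases i
    exacts [p₁, p₂, p₃, p₄, p₅, p₆, absurd hi (by decide), absurd hi (by decide),
      absurd hi (by decide)]
  · simp only [Matrix.cons_val]
    linear_combination heq
  · convert hst using 1 <;> simp only [conicFst, conicSnd, Matrix.cons_val] <;> ring
  · convert hgy using 1 <;> simp only [conicFactor, psiMap, Matrix.cons_val] <;> ring
  · exact (IsCoprime.pow_iff two_pos two_pos).1 hgt₂
  · simpa only [Matrix.cons_val, mul_comm η₁] using hgs
  all_goals
    simp only [conicFactor, conicFst, conicSnd, psiMap, Matrix.cons_val]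
    ring

theorem Primitive.exists_isTorsorPoint {v : Fin 5 → ℤ} (hv : Primitive v) (hU : OnU v)
    (h1 : 0 < v 1) : ∃ η, IsTorsorPoint η ∧ psiMap η = v := by
  obtain ⟨g, s, t, hg, hs, hst, hv1, hv2, hv3⟩ :=
    exists_conic_param h1 (sub_eq_zero.1 hU.2.1)
  have ht : t ≠ 0 := right_ne_zero_of_mul (hv2 ▸ hU.apply_two_ne_zero)
  have hquad : v 0 ^ 2 + v 0 * (g * t ^ 2) + g * s * t * v 4 = 0 := by
    rw [← hv2, ← hv3]
    exact hU.1
  have hg4 : IsCoprime g (v 4) := by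
    refine isCoprime_of_prime_dvd (fun h => hg.ne' h.1) fun p hp hpg hp4 => ?_
    have hp0 : p ∣ v 0 := hp.dvd_of_dvd_pow (n := 2)
      (hpg.trans ⟨-(v 0 * t ^ 2 + s * t * v 4), by linear_combination hquad⟩)
    refine (primitive_iff_forall_prime v).1 hv p hp fun i => ?_
    fin_cases i
    exacts [hp0, hv1 ▸ hpg.mul_right _, hv2 ▸ (hpg.mul_right _).mul_right _,
      hv3 ▸ hpg.mul_right _, hp4]
  obtain ⟨η, hη, rfl, rfl, rfl, h0, h4⟩ :=
    exists_isTorsorPoint_of_conic_param hg hs ht hst hg4 hquad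
  refine ⟨η, hη, funext fun i => ?_⟩
  fin_cases i
  exacts [h0, (psiMap_apply_one η).trans hv1.symm, (psiMap_apply_two η).trans hv2.symm,
    (psiMap_apply_three η).trans hv3.symm, h4]

/-! ### The bijection -/

theorem psiMap_bijOn : Set.BijOn psiMap {η | IsTorsorPoint η}
    {v | Primitive v ∧ OnU v ∧ 0 < v 1} :=
  ⟨fun _ hη => ⟨hη.primitive_psiMap, hη.onU_psiMap, hη.psiMap_apply_one_pos⟩,
    fun _ hη _ hθ h => hη.eq_of_psiMap_eq hθ h,
    fun _ ⟨hv, hU, h1⟩ => hv.exists_isTorsorPoint hU h1⟩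

theorem torsor_bijection_general (B : ℝ) :
    (∀ η ∈ T0 B, Primitive (psiMap η) ∧ OnU (psiMap η) ∧
        ∀ j : Fin 5, (|psiMap η j| : ℝ) ≤ B) ∧
    (∀ η₁ ∈ T0 B, ∀ η₂ ∈ T0 B,
        (psiMap η₁ = psiMap η₂ ∨ psiMap η₁ = -psiMap η₂) → η₁ = η₂) ∧
    (∀ v : Fin 5 → ℤ, Primitive v → OnU v → (∀ j : Fin 5, (|v j| : ℝ) ≤ B) →
        ∃ η ∈ T0 B, psiMap η = v ∨ psiMap η = -v) := by
  simp only [mem_T0_iff]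
  refine ⟨fun η ⟨hη, hB⟩ => ⟨hη.primitive_psiMap, hη.onU_psiMap, hB⟩, ?_, ?_⟩
  · rintro η ⟨hη, -⟩ θ ⟨hθ, -⟩ (h | h)
    · exact psiMap_bijOn.injOn hη hθ h
    · have hneg : psiMap η 1 = -psiMap θ 1 := congrFun h 1
      linarith [hη.psiMap_apply_one_pos, hθ.psiMap_apply_one_pos]
  · intro v hv hU hB
    rcases hU.apply_one_ne_zero.lt_or_gt with h1 | h1
    · obtain ⟨η, hη, hψ⟩ := psiMap_bijOn.surjOn ⟨hv.neg, hU.neg, neg_pos.2 h1⟩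
      exact ⟨η, ⟨hη, by simpa [hψ] using hB⟩, .inr hψ⟩
    · obtain ⟨η, hη, rfl⟩ := psiMap_bijOn.surjOn ⟨hv, hU, h1⟩
      exact ⟨η, ⟨hη, hB⟩, .inl rfl⟩

/-- The torsor parameterization: `η ↦ ψ(η)` defines a bijection between `T₀(B)` and the
rational points of height at most `B` on the complement `U` of the lines, a point of `P⁴(ℚ)`
being identified with a primitive integral vector, unique up to sign. -/
theorem torsor_bijection (B : ℝ) (hB : 3 ≤ B) :
    (∀ η ∈ T0 B, Primitive (psiMap η) ∧ OnU (psiMap η) ∧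
        ∀ j : Fin 5, (|psiMap η j| : ℝ) ≤ B) ∧
    (∀ η₁ ∈ T0 B, ∀ η₂ ∈ T0 B,
        (psiMap η₁ = psiMap η₂ ∨ psiMap η₁ = -psiMap η₂) → η₁ = η₂) ∧
    (∀ v : Fin 5 → ℤ, Primitive v → OnU v → (∀ j : Fin 5, (|v j| : ℝ) ≤ B) →
        ∃ η ∈ T0 B, psiMap η = v ∨ psiMap η = -v) :=
  torsor_bijection_general B
end

section
/- For B ≥ 3, define h(η₁,…,η₈;B) = B^{−1}·max{ |η₂η₃η₄η₅η₆η₇η₈|, η₁²η₂²η₃³η₄²η₆, |η₁η₂η₃²η₄²η₅²η₆²η₇|, η₃η₄²η₅⁴η₆³η₇², |η₁^{−1}(η₂η₇η₈² + η₄η₅³η₆²η₇²η₈)| }. Let R(B) = {(η₁,…,η₈) : η₁,…,η₆ ∈ [1,∞), η₇ ∈ (−∞,−1] ∪ [1,∞), η₈ ∈ ℝ, h(η;B) ≤ 1} and V₀(B) = ∫_{R(B)} η₁^{−1} dη₁⋯dη₈. Let R'(B) = {(η₁,…,η₈) : η₁,…,η₅ ∈ [1,∞), η₁²η₂²η₃³η₄²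 ≤ B, η₁³η₂³η₃⁴η₄²η₅^{−2} ≥ B, η₆ ∈ [0,∞), η₇ ∈ ℝ, η₈ ∈ ℝ, h(η;B) ≤ 1} and V₀'(B) = ∫_{R'(B)} η₁^{−1} dη₁⋯dη₈. Then there is a constant K such that |V₀(B) − V₀'(B)| ≤ K·B·(log B)⁴ for all B ≥ 3. -/
/-!
Fix all coordinates except `η₈`. The last term of the height says that a quadratic polynomial in
`η₈` without constant term and with leading coefficient `η₂η₇` is at most `η₁B` in absolute value,
so `η₈` lies within `√(η₁B / |η₂η₇|)` of one of its two roots. Hence integrating `η₁⁻¹` over `η₈`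
gives at most `4 √(B / (η₁η₂)) |η₇| ^ (-1/2)`. This is integrable at `η₇ = 0`, so integrating over
`|η₇| ≤ M` gives `O(√(B / (η₁η₂)) M ^ (1/2))`. The fourth term of the height allows
`M = √(Q / η₆³)` with `Q = B / (η₃η₄²η₅⁴)`, which is again integrable at `η₆ = 0`, and integrating
over `η₆ ≤ N` gives `O(√(B / (η₁η₂)) Q ^ (1/4) N ^ (1/4))`.

A point of only one of the two regions either lies in `R(B)` and has
`η₅ > √(η₁³η₂³η₃⁴η₄² / B)`, or lies in `R'(B)` and has `|η₇| ≤ 1` or `η₆ ≤ 1`. In the first case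
`N = Q ^ (1/3)`, and the tail integral of `η₅ ^ (-4/3)` leaves `O(B / (η₁η₂η₃η₄))`. In the second
case `M = 1`, and the lengths of the ranges of `η₅` and `η₆` again leave `O(B / (η₁η₂η₃η₄))`. In
the third case `N = 1`, the integral of `η₅⁻¹` contributes `log B`, and the integral of
`η₄ ^ (-1/2)` up to `√(B / (η₁²η₂²η₃³))` leaves `O(B log B / (η₁η₂η₃))`. Each remaining coordinate
runs over `[1, B]` and contributes one more logarithm.
-/

open MeasureTheory

/-- The height function `h(η₁,…,η₈; B)` (zero-indexed), obtained from the anticanonical height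
after eliminating `η₉` via the torsor equation. -/
noncomputable def hFun (η : Fin 8 → ℝ) (B : ℝ) : ℝ :=
  B⁻¹ * max (|η 1 * η 2 * η 3 * η 4 * η 5 * η 6 * η 7|)
    (max (η 0 ^ 2 * η 1 ^ 2 * η 2 ^ 3 * η 3 ^ 2 * η 5)
      (max (|η 0 * η 1 * η 2 ^ 2 * η 3 ^ 2 * η 4 ^ 2 * η 5 ^ 2 * η 6|)
        (max (η 2 * η 3 ^ 2 * η 4 ^ 4 * η 5 ^ 3 * η 6 ^ 2)
          (|(η 0)⁻¹ * (η 1 * η 6 * η 7 ^ 2 + η 3 * η 4 ^ 3 * η 5 ^ 2 * η 6 ^ 2 * η 7)|))))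

/-- The region `R(B)`: `η₁,…,η₆ ≥ 1`, `|η₇| ≥ 1`, `η₈ ∈ ℝ` and `h(η; B) ≤ 1`. -/
def RSet (B : ℝ) : Set (Fin 8 → ℝ) :=
  {η | (∀ i : Fin 8, i.val ≤ 5 → 1 ≤ η i) ∧ 1 ≤ |η 6| ∧ hFun η B ≤ 1}

/-- The modified region `R'(B)`: `η₁,…,η₅ ≥ 1`, `η₁²η₂²η₃³η₄² ≤ B`,
`η₁³η₂³η₃⁴η₄²η₅⁻² ≥ B`, `η₆ ≥ 0`, `η₇, η₈ ∈ ℝ` and `h(η; B) ≤ 1`. -/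
def RSet' (B : ℝ) : Set (Fin 8 → ℝ) :=
  {η | (∀ i : Fin 8, i.val ≤ 4 → 1 ≤ η i) ∧
    η 0 ^ 2 * η 1 ^ 2 * η 2 ^ 3 * η 3 ^ 2 ≤ B ∧
    B ≤ η 0 ^ 3 * η 1 ^ 3 * η 2 ^ 4 * η 3 ^ 2 * (η 4 ^ 2)⁻¹ ∧
    0 ≤ η 5 ∧ hFun η B ≤ 1}

/-- `V₀(B) = ∫_{R(B)} η₁⁻¹ dη₁⋯dη₈`. -/
noncomputable def V0 (B : ℝ) : ℝ := ∫ η in RSet B, (η 0)⁻¹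

/-- `V₀'(B) = ∫_{R'(B)} η₁⁻¹ dη₁⋯dη₈`. -/
noncomputable def V0' (B : ℝ) : ℝ := ∫ η in RSet' B, (η 0)⁻¹

open Set
open scoped ENNReal symmDiff

/-! ### Integrals over symmetric differences -/

section SymmDiff

variable {α G : Type*} [MeasurableSpace α] [NormedAddCommGroup G] {μ : Measure α}
  {f : α → G} {s t : Set α}

lemma enorm_setIntegral_sub_setIntegral_le [NormedSpace ℝ G] (hs : MeasurableSet s)
    (ht : MeasurableSet t) (hfs : IntegrableOn f s μ) (hft : IntegrableOn f t μ) :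
    ‖∫ x in s, f x ∂μ - ∫ x in t, f x ∂μ‖ₑ ≤ ∫⁻ x in s ∆ t, ‖f x‖ₑ ∂μ := by
  rw [← integral_indicator hs, ← integral_indicator ht,
    ← integral_sub (hfs.integrable_indicator hs) (hft.integrable_indicator ht),
    ← lintegral_indicator (hs.symmDiff ht)]
  refine (enorm_integral_le_lintegral_enorm _).trans_eq (lintegral_congr fun x => ?_)
  rw [← apply_indicator_symmDiff (fun y => enorm_neg y), enorm_indicator_eq_indicator_enorm]

lemma integrableOn_of_lintegral_symmDiff_lt_top (hm : AEStronglyMeasurable f μ)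
    (hfs : IntegrableOn f s μ) (h : ∫⁻ x in s ∆ t, ‖f x‖ₑ ∂μ < ∞) : IntegrableOn f t μ := by
  have hst : t ⊆ s ∪ s ∆ t := fun x hx => by
    by_cases hxs : x ∈ s
    · exact Or.inl hxs
    · exact Or.inr (Or.inr ⟨hx, hxs⟩)
  exact (hfs.union ⟨hm.restrict, h⟩).mono_set hst

end SymmDiff

/-! ### Integrating out the first coordinate -/

local notation:67 x:68 "∷" y:67 => Matrix.vecCons x y

lemma lintegral_le_lintegral_vecCons {n : ℕ} (F : (Fin (n + 1) → ℝ) → ℝ≥0∞) :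
    ∫⁻ η, F η ≤ ∫⁻ t : ℝ, ∫⁻ y : Fin n → ℝ, F (t∷y) := by
  rw [← (volume_preserving_piFinSuccAbove (fun _ => ℝ) 0).symm.lintegral_comp_emb
    (MeasurableEquiv.measurableEmbedding _)]
  refine (lintegral_prod_le _).trans_eq ?_
  simp only [MeasurableEquiv.piFinSuccAbove_symm_apply, Fin.insertNthEquiv_zero]
  rfl

lemma lintegral_le_setLIntegral_vecCons {n : ℕ} {F : (Fin (n + 1) → ℝ) → ℝ≥0∞} {S : Set ℝ}
    (hS : MeasurableSet S) {φ : ℝ → ℝ≥0∞} (hF : ∀ t y, F (t∷y) ≠ 0 → t ∈ S)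
    (hφ : ∀ᵐ t, t ∈ S → ∫⁻ y, F (t∷y) ≤ φ t) : ∫⁻ η, F η ≤ ∫⁻ t in S, φ t := by
  rw [← lintegral_indicator hS]
  refine (lintegral_le_lintegral_vecCons F).trans (lintegral_mono_ae ?_)
  filter_upwards [hφ] with t ht
  by_cases htS : t ∈ S
  · simpa only [indicator_of_mem htS] using ht htS
  · have hzero : ∀ y, F (t∷y) = 0 := fun y => not_not.1 fun h => htS (hF t y h)
    simp only [hzero, lintegral_zero, zero_le]

lemma lintegral_le_mul_volume_vecCons {n : ℕ} {F : (Fin (n + 1) → ℝ) → ℝ≥0∞} {S : Set ℝ}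
    (hS : MeasurableSet S) {k : ℝ≥0∞} (hF : ∀ t y, F (t∷y) ≠ 0 → t ∈ S)
    (hk : ∀ t ∈ S, ∫⁻ y, F (t∷y) ≤ k) : ∫⁻ η, F η ≤ k * volume S := by
  simpa only [setLIntegral_const] using lintegral_le_setLIntegral_vecCons hS hF (.of_forall hk)

/-! ### One-dimensional integrals -/

lemma setLIntegral_Icc_zero_rpow {p k M : ℝ} (hp : -1 < p) (hk : 0 ≤ k) (hM : 0 ≤ M) :
    ∫⁻ t in Icc 0 M, ENNReal.ofReal (k * t ^ p) =
      ENNReal.ofReal (k * (M ^ (p + 1) / (p + 1))) := by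
  rw [← restrict_Ioc_eq_restrict_Icc, ← ofReal_integral_eq_lintegral_ofReal, integral_const_mul,
    ← intervalIntegral.integral_of_le hM, integral_rpow (Or.inl hp),
    Real.zero_rpow (by linarith), sub_zero]
  · exact ((intervalIntegrable_iff_integrableOn_Ioc_of_le hM).1
      (intervalIntegral.intervalIntegrable_rpow' hp)).const_mul k
  · filter_upwards [ae_restrict_mem measurableSet_Ioc] with t ht
    exact mul_nonneg hk (Real.rpow_nonneg ht.1.le p)

lemma setLIntegral_Ioi_rpow {p k m : ℝ} (hp : p < -1) (hk : 0 ≤ k) (hm : 0 < m) :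
    ∫⁻ t in Ioi m, ENNReal.ofReal (k * t ^ p) =
      ENNReal.ofReal (k * (-m ^ (p + 1) / (p + 1))) := by
  rw [← ofReal_integral_eq_lintegral_ofReal, integral_const_mul, integral_Ioi_rpow_of_lt hp hm]
  · exact (integrableOn_Ioi_rpow_of_lt hp hm).const_mul k
  · filter_upwards [ae_restrict_mem measurableSet_Ioi] with t ht
    exact mul_nonneg hk (Real.rpow_nonneg (hm.trans ht).le p)

lemma setLIntegral_Icc_div {k m M : ℝ} (hk : 0 ≤ k) (hm : 0 < m) (hmM : m ≤ M) :
    ∫⁻ t in Icc m M, ENNReal.ofReal (k / t) = ENNReal.ofReal (k * Real.log (M / m)) := by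
  have hint : IntegrableOn (fun t : ℝ => t⁻¹) (Ioc m M) := by
    rw [← intervalIntegrable_iff_integrableOn_Ioc_of_le hmM, intervalIntegrable_inv_iff]
    exact Or.inr (notMem_uIcc_of_lt hm (hm.trans_le hmM))
  simp only [div_eq_mul_inv k]
  rw [← restrict_Ioc_eq_restrict_Icc, ← ofReal_integral_eq_lintegral_ofReal (hint.const_mul k),
    integral_const_mul, ← intervalIntegral.integral_of_le hmM,
    integral_inv_of_pos hm (hm.trans_le hmM)]
  filter_upwards [ae_restrict_mem measurableSet_Ioc] with t ht
  exact mul_nonneg hk (inv_nonneg.2 (hm.trans ht.1).le)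

lemma setLIntegral_Icc_neg_comp_abs_le (h : ℝ → ℝ≥0∞) (M : ℝ) :
    ∫⁻ t in Icc (-M) M, h |t| ≤ 2 * ∫⁻ t in Icc 0 M, h t := by
  have hpos : ∫⁻ t in Icc 0 M, h |t| = ∫⁻ t in Icc 0 M, h t :=
    setLIntegral_congr_fun measurableSet_Icc fun t ht => by rw [abs_of_nonneg ht.1]
  have hneg : ∫⁻ t in Icc (-M) 0, h |t| = ∫⁻ t in Icc 0 M, h |t| := by
    simpa using (Measure.measurePreserving_neg (volume : Measure ℝ)).setLIntegral_comp_emb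
      (MeasurableEquiv.neg ℝ).measurableEmbedding (fun t => h |t|) (Icc (-M) 0)
  calc ∫⁻ t in Icc (-M) M, h |t|
      ≤ ∫⁻ t in Icc (-M) 0 ∪ Icc 0 M, h |t| := lintegral_mono_set Icc_subset_Icc_union_Icc
    _ ≤ _ := lintegral_union_le _ _ _
    _ = 2 * ∫⁻ t in Icc 0 M, h t := by rw [hneg, hpos, two_mul]

lemma volume_abs_sub_mul_abs_sub_le (u v : ℝ) {r : ℝ} (hr : 0 ≤ r) :
    volume {x : ℝ | |x - u| * |x - v| ≤ r ^ 2} ≤ ENNReal.ofReal (4 * r) := by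
  have hsub : {x : ℝ | |x - u| * |x - v| ≤ r ^ 2} ⊆
      Metric.closedBall u r ∪ Metric.closedBall v r := by
    intro x hx
    by_contra! hfar
    simp only [mem_union, Metric.mem_closedBall, Real.dist_eq, not_or, not_le] at hfar
    have hlt : r * r < |x - u| * |x - v| := mul_lt_mul'' hfar.1 hfar.2 hr hr
    exact (pow_two r ▸ hlt).not_ge hx
  calc volume {x : ℝ | |x - u| * |x - v| ≤ r ^ 2}
      ≤ volume (Metric.closedBall u r) + volume (Metric.closedBall v r) :=
        (measure_mono hsub).trans (measure_union_le _ _)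
    _ = ENNReal.ofReal (4 * r) := by
        rw [Real.volume_closedBall, Real.volume_closedBall,
          ← ENNReal.ofReal_add (by positivity) (by positivity)]
        congr 1; ring

lemma volume_abs_quadratic_le {p q T : ℝ} (hp : p ≠ 0) (hT : 0 ≤ T) :
    volume {x : ℝ | |p * x ^ 2 + q * x| ≤ T} ≤ ENNReal.ofReal (4 * √(T / |p|)) := by
  have hset : {x : ℝ | |p * x ^ 2 + q * x| ≤ T} =
      {x : ℝ | |x - 0| * |x - -(q / p)| ≤ √(T / |p|) ^ 2} := by
    ext x
    have hfactor : p * x ^ 2 + q * x = (x - 0) * (x - -(q / p)) * p := by field_simp; ring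
    rw [mem_ofPred, mem_ofPred, hfactor, abs_mul, abs_mul, Real.sq_sqrt (by positivity),
      le_div_iff₀ (abs_pos.2 hp)]
  rw [hset]
  exact volume_abs_sub_mul_abs_sub_le _ _ (Real.sqrt_nonneg _)

lemma lintegral_le_ofReal_mul_log {n : ℕ} {F : (Fin (n + 1) → ℝ) → ℝ≥0∞} {k B : ℝ} (hk : 0 ≤ k)
    (hB : 1 ≤ B) (hF : ∀ t y, F (t∷y) ≠ 0 → t ∈ Icc 1 B)
    (h : ∀ t ∈ Icc 1 B, ∫⁻ y, F (t∷y) ≤ ENNReal.ofReal (k / t)) :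
    ∫⁻ η, F η ≤ ENNReal.ofReal (k * Real.log B) := by
  simpa only [setLIntegral_Icc_div hk one_pos hB, div_one] using
    lintegral_le_setLIntegral_vecCons measurableSet_Icc hF (.of_forall h)

/-! ### Monomials -/

lemma le_prod_pow {ι R : Type*} [Fintype ι] [CommSemiring R] [PartialOrder R] [IsOrderedRing R]
    {x : ι → R} {n : ι → ℕ} (hx : ∀ j, n j ≠ 0 → 1 ≤ x j) {i : ι} (hi : n i ≠ 0) :
    x i ≤ ∏ j, x j ^ n j := by
  have hpow : ∀ j, 1 ≤ x j ^ n j := fun j => by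
    rcases eq_or_ne (n j) 0 with hj | hj
    · rw [hj, pow_zero]
    · exact one_le_pow₀ (hx j hj)
  calc x i ≤ x i ^ n i := le_self_pow₀ (hx i hi) hi
    _ = ∏ j ∈ {i}, x j ^ n j := (Finset.prod_singleton _ _).symm
    _ ≤ ∏ j, x j ^ n j := Finset.prod_mono_set_of_one_le hpow (Finset.subset_univ _)

section Monomials

variable {B a b c d : ℝ}

lemma sqrt_mul_rpow_mul_sqrt_rpow_eq (hB : 0 < B) (ha : 0 < a) (hb : 0 < b) (hc : 0 < c)
    (hd : 0 < d) :
    √(B / (a * b)) * (B / (c * d ^ 2)) ^ (1 / 3 : ℝ) *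
      √(a ^ 3 * b ^ 3 * c ^ 4 * d ^ 2 / B) ^ (-(1 / 3) : ℝ) = B / (a * b * c * d) := by
  have hP : √(B / (a * b)) ^ 6 = (B / (a * b)) ^ 3 := by
    rw [pow_mul _ 2 3, Real.sq_sqrt (by positivity)]
  have hS : ((B / (c * d ^ 2)) ^ (1 / 3 : ℝ)) ^ 6 = (B / (c * d ^ 2)) ^ 2 := by
    rw [← Real.rpow_mul_natCast (by positivity), ← Real.rpow_natCast]
    norm_num
  have hT : (√(a ^ 3 * b ^ 3 * c ^ 4 * d ^ 2 / B) ^ (-(1 / 3) : ℝ)) ^ 6 =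
      B / (a ^ 3 * b ^ 3 * c ^ 4 * d ^ 2) := by
    rw [← Real.rpow_mul_natCast (by positivity), Real.sqrt_eq_rpow, ← Real.rpow_mul (by positivity),
      ← inv_div _ B, ← Real.rpow_neg_one]
    norm_num
  rw [← pow_left_inj₀ (by positivity) (by positivity) (by norm_num : 6 ≠ 0), mul_pow, mul_pow,
    hP, hS, hT]
  field

lemma sqrt_mul_sqrt_eq (hB : 0 < B) (ha : 0 < a) (hb : 0 < b) (hc : 0 < c) (hd : 0 < d) :
    √(B / (a * b)) * √(a ^ 3 * b ^ 3 * c ^ 4 * d ^ 2 / B) = a * b * c ^ 2 * d := by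
  rw [← Real.sqrt_mul (by positivity), ← Real.sqrt_sq (by positivity : 0 ≤ a * b * c ^ 2 * d)]
  congr 1
  field

lemma sqrt_mul_rpow_mul_sqrt_sqrt_eq (hB : 0 < B) (ha : 0 < a) (hb : 0 < b) (hc : 0 < c) :
    √(B / (a * b)) * (B / c) ^ (1 / 4 : ℝ) * √√(B / (a ^ 2 * b ^ 2 * c ^ 3)) =
      B / (a * b * c) := by
  have hP : √(B / (a * b)) ^ 4 = (B / (a * b)) ^ 2 := by
    rw [pow_mul _ 2 2, Real.sq_sqrt (by positivity)]
  have hQ : ((B / c) ^ (1 / 4 : ℝ)) ^ 4 = B / c := by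
    rw [← Real.rpow_mul_natCast (by positivity)]
    norm_num
  have hT : √√(B / (a ^ 2 * b ^ 2 * c ^ 3)) ^ 4 = B / (a ^ 2 * b ^ 2 * c ^ 3) := by
    rw [pow_mul _ 2 2, Real.sq_sqrt (by positivity), Real.sq_sqrt (by positivity)]
  rw [← pow_left_inj₀ (by positivity) (by positivity) (by norm_num : 4 ≠ 0), mul_pow, mul_pow,
    hP, hQ, hT]
  field

lemma div_rpow_quarter_eq (hB : 0 < B) (hc : 0 < c) (hd : 0 < d) {e : ℝ} (he : 0 < e) :
    (B / (c * d ^ 2 * e ^ 4)) ^ (1 / 4 : ℝ) =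
      (B / c) ^ (1 / 4 : ℝ) * d ^ (-(1 / 2) : ℝ) / e := by
  rw [← pow_left_inj₀ (by positivity) (by positivity) (by norm_num : 4 ≠ 0), div_pow, mul_pow,
    ← Real.rpow_mul_natCast (by positivity), ← Real.rpow_mul_natCast (by positivity),
    ← Real.rpow_mul_natCast (by positivity)]
  norm_num
  field

lemma rpow_quarter_mul_rpow_third_rpow_quarter {S e : ℝ} (hS : 0 ≤ S) (he : 0 < e) :
    (S / e ^ 4) ^ (1 / 4 : ℝ) * ((S / e ^ 4) ^ (1 / 3 : ℝ)) ^ (1 / 4 : ℝ) =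
      S ^ (1 / 3 : ℝ) * e ^ (-(4 / 3) : ℝ) := by
  rw [← Real.rpow_mul (by positivity), ← Real.rpow_add' (by positivity) (by norm_num),
    Real.div_rpow hS (by positivity), ← Real.rpow_natCast, ← Real.rpow_mul he.le,
    Real.rpow_neg he.le, div_eq_mul_inv]
  norm_num

end Monomials

/-! ### The height -/

lemma hFun_le_one_iff {η : Fin 8 → ℝ} {B : ℝ} (hB : 0 < B) :
    hFun η B ≤ 1 ↔
      |η 1 * η 2 * η 3 * η 4 * η 5 * η 6 * η 7| ≤ B ∧
      η 0 ^ 2 * η 1 ^ 2 * η 2 ^ 3 * η 3 ^ 2 * η 5 ≤ B ∧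
      |η 0 * η 1 * η 2 ^ 2 * η 3 ^ 2 * η 4 ^ 2 * η 5 ^ 2 * η 6| ≤ B ∧
      η 2 * η 3 ^ 2 * η 4 ^ 4 * η 5 ^ 3 * η 6 ^ 2 ≤ B ∧
      |(η 0)⁻¹ * (η 1 * η 6 * η 7 ^ 2 + η 3 * η 4 ^ 3 * η 5 ^ 2 * η 6 ^ 2 * η 7)| ≤ B := by
  simp only [hFun, inv_mul_le_iff₀ hB, mul_one, max_le_iff]

lemma measurable_hFun (B : ℝ) : Measurable fun η => hFun η B := by
  unfold hFun
  fun_prop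

lemma measurableSet_RSet (B : ℝ) : MeasurableSet (RSet B) := by
  have h := measurable_hFun B
  unfold RSet
  measurability

lemma measurableSet_RSet' (B : ℝ) : MeasurableSet (RSet' B) := by
  have h := measurable_hFun B
  unfold RSet'
  measurability

/-- The integrand `η₁⁻¹` of `V0` and `V0'`, cut off to a region `E`. It takes values in `[0, ∞]`, so
that the coordinates can be integrated out one by one without integrability conditions. -/
noncomputable def torsorDensity (E : Set (Fin 8 → ℝ)) : (Fin 8 → ℝ) → ℝ≥0∞ :=
  E.indicator fun η => ‖(η 0)⁻¹‖ₑ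

lemma mem_of_torsorDensity_ne_zero {E : Set (Fin 8 → ℝ)} {η : Fin 8 → ℝ}
    (h : torsorDensity E η ≠ 0) : η ∈ E :=
  mem_of_indicator_ne_zero h

lemma lintegral_torsorDensity {E : Set (Fin 8 → ℝ)} (hE : MeasurableSet E) :
    ∫⁻ η, torsorDensity E η = ∫⁻ η in E, ‖(η 0)⁻¹‖ₑ :=
  lintegral_indicator hE _

/-! ### Integrating out `η₈`, `η₇` and `η₆` -/

section InnerIntegrals

variable {E : Set (Fin 8 → ℝ)} {B a b c d e f g : ℝ}

lemma lintegral_torsorDensity_last_one_le (hE : ∀ η ∈ E, hFun η B ≤ 1) (hB : 0 < B) (ha : 0 < a)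
    (hb : 0 < b) (hg : g ≠ 0) :
    ∫⁻ y : Fin 1 → ℝ, torsorDensity E (a∷b∷c∷d∷e∷f∷g∷y) ≤
      ENNReal.ofReal (4 * √(B / (a * b)) * |g| ^ (-(1 / 2) : ℝ)) := by
  let S : Set ℝ := {x | |b * g * x ^ 2 + d * e ^ 3 * f ^ 2 * g ^ 2 * x| ≤ a * B}
  have hS : MeasurableSet S := measurableSet_le (by fun_prop) measurable_const
  have hsupp : ∀ x (y : Fin 0 → ℝ),
      torsorDensity E (a∷b∷c∷d∷e∷f∷g∷x∷y) ≠ 0 → x ∈ S := fun x y h => by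
    have hx : |a⁻¹ * (b * g * x ^ 2 + d * e ^ 3 * f ^ 2 * g ^ 2 * x)| ≤ B :=
      ((hFun_le_one_iff hB).1 (hE _ (mem_of_torsorDensity_ne_zero h))).2.2.2.2
    rwa [abs_mul, abs_inv, abs_of_pos ha, inv_mul_le_iff₀ ha] at hx
  have hdens : ∀ x, ∫⁻ y : Fin 0 → ℝ, torsorDensity E (a∷b∷c∷d∷e∷f∷g∷x∷y) ≤
      ENNReal.ofReal a⁻¹ := fun x =>
    calc ∫⁻ y : Fin 0 → ℝ, torsorDensity E (a∷b∷c∷d∷e∷f∷g∷x∷y)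
        ≤ ∫⁻ _ : Fin 0 → ℝ, ‖a⁻¹‖ₑ := lintegral_mono fun _ => indicator_le_self _ _ _
      _ = ENNReal.ofReal a⁻¹ := by
        rw [lintegral_const, volume_pi, Measure.pi_univ, Finset.univ_eq_empty, Finset.prod_empty,
          mul_one, Real.enorm_of_nonneg (inv_nonneg.2 ha.le)]
  calc ∫⁻ y : Fin 1 → ℝ, torsorDensity E (a∷b∷c∷d∷e∷f∷g∷y)
      ≤ ENNReal.ofReal a⁻¹ * volume S :=
        lintegral_le_mul_volume_vecCons hS hsupp fun x _ => hdens x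
    _ ≤ ENNReal.ofReal a⁻¹ * ENNReal.ofReal (4 * √(a * B / |b * g|)) := by
        gcongr
        exact volume_abs_quadratic_le (mul_ne_zero hb.ne' hg) (by positivity)
    _ = ENNReal.ofReal (4 * √(B / (a * b)) * |g| ^ (-(1 / 2) : ℝ)) := by
        have hsqrt : a * B / |b * g| = a ^ 2 * (B / (a * b)) * |g|⁻¹ := by
          rw [abs_mul, abs_of_pos hb]
          field
        rw [← ENNReal.ofReal_mul (by positivity), hsqrt, Real.sqrt_mul (by positivity),
          Real.sqrt_mul (by positivity), Real.sqrt_sq ha.le, Real.rpow_neg (abs_nonneg g),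
          ← Real.sqrt_eq_rpow, Real.sqrt_inv]
        congr 1
        field

lemma lintegral_torsorDensity_last_two_le (hE : ∀ η ∈ E, hFun η B ≤ 1) (hB : 0 < B) (ha : 0 < a)
    (hb : 0 < b) {M : ℝ} (hM : 0 ≤ M)
    (hsupp : ∀ g y, torsorDensity E (a∷b∷c∷d∷e∷f∷g∷y) ≠ 0 → |g| ≤ M) :
    ∫⁻ y : Fin 2 → ℝ, torsorDensity E (a∷b∷c∷d∷e∷f∷y) ≤
      ENNReal.ofReal (16 * √(B / (a * b)) * √M) := by
  have hinner : ∀ᵐ g, g ∈ Icc (-M) M →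
      ∫⁻ y : Fin 1 → ℝ, torsorDensity E (a∷b∷c∷d∷e∷f∷g∷y) ≤
        ENNReal.ofReal (4 * √(B / (a * b)) * |g| ^ (-(1 / 2) : ℝ)) := by
    filter_upwards [Measure.ae_ne volume 0] with g hg _
    exact lintegral_torsorDensity_last_one_le hE hB ha hb hg
  calc ∫⁻ y : Fin 2 → ℝ, torsorDensity E (a∷b∷c∷d∷e∷f∷y)
      ≤ ∫⁻ g in Icc (-M) M, ENNReal.ofReal (4 * √(B / (a * b)) * |g| ^ (-(1 / 2) : ℝ)) :=
        lintegral_le_setLIntegral_vecCons measurableSet_Icc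
          (fun g y h => abs_le.1 (hsupp g y h)) hinner
    _ ≤ 2 * ∫⁻ g in Icc 0 M, ENNReal.ofReal (4 * √(B / (a * b)) * g ^ (-(1 / 2) : ℝ)) :=
        setLIntegral_Icc_neg_comp_abs_le
          (fun g => ENNReal.ofReal (4 * √(B / (a * b)) * g ^ (-(1 / 2) : ℝ))) M
    _ = ENNReal.ofReal (16 * √(B / (a * b)) * √M) := by
        rw [setLIntegral_Icc_zero_rpow (by norm_num) (by positivity) hM, ← ENNReal.ofReal_ofNat 2,
          ← ENNReal.ofReal_mul (by norm_num), Real.sqrt_eq_rpow M]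
        congr 1
        norm_num
        ring

lemma abs_le_sqrt_of_hFun_le_one {η : Fin 8 → ℝ} (hB : 0 < B) (hη : hFun η B ≤ 1) (h2 : 0 < η 2)
    (h3 : 0 < η 3) (h4 : 0 < η 4) (h5 : 0 < η 5) :
    |η 6| ≤ √(B / (η 2 * η 3 ^ 2 * η 4 ^ 4) / η 5 ^ 3) := by
  refine Real.abs_le_sqrt ?_
  rw [div_div, le_div_iff₀' (by positivity)]
  exact ((hFun_le_one_iff hB).1 hη).2.2.2.1

lemma lintegral_torsorDensity_last_three_le (hE : ∀ η ∈ E, hFun η B ≤ 1) (hB : 0 < B) (ha : 0 < a)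
    (hb : 0 < b) (hc : 0 < c) (hd : 0 < d) (he : 0 < e) {N : ℝ} (hN : 0 ≤ N)
    (hsupp : ∀ f y, torsorDensity E (a∷b∷c∷d∷e∷f∷y) ≠ 0 → f ∈ Icc 0 N) :
    ∫⁻ y : Fin 3 → ℝ, torsorDensity E (a∷b∷c∷d∷e∷y) ≤
      ENNReal.ofReal (64 * √(B / (a * b)) * (B / (c * d ^ 2 * e ^ 4)) ^ (1 / 4 : ℝ) *
        N ^ (1 / 4 : ℝ)) := by
  set Q := B / (c * d ^ 2 * e ^ 4)
  have hQ0 : 0 ≤ Q := by positivity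
  have hinner : ∀ᵐ f, f ∈ Icc 0 N →
      ∫⁻ y : Fin 2 → ℝ, torsorDensity E (a∷b∷c∷d∷e∷f∷y) ≤
        ENNReal.ofReal (16 * √(B / (a * b)) * Q ^ (1 / 4 : ℝ) * f ^ (-(3 / 4) : ℝ)) := by
    filter_upwards [Measure.ae_ne volume 0] with f hf0 hf
    have hf_pos : 0 < f := hf.1.lt_of_ne' hf0
    refine (lintegral_torsorDensity_last_two_le hE hB ha hb (Real.sqrt_nonneg (Q / f ^ 3))
      fun g y h => abs_le_sqrt_of_hFun_le_one hB (hE _ (mem_of_torsorDensity_ne_zero h))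
        hc hd he hf_pos).trans_eq ?_
    have hsqrt : √(√(Q / f ^ 3)) = Q ^ (1 / 4 : ℝ) * f ^ (-(3 / 4) : ℝ) := by
      rw [Real.sqrt_eq_rpow √_, Real.sqrt_eq_rpow, ← Real.rpow_mul (by positivity),
        Real.div_rpow hQ0 (by positivity), ← Real.rpow_natCast, ← Real.rpow_mul hf_pos.le,
        Real.rpow_neg hf_pos.le, div_eq_mul_inv]
      norm_num
    rw [hsqrt, mul_assoc (16 * _)]
  calc ∫⁻ y : Fin 3 → ℝ, torsorDensity E (a∷b∷c∷d∷e∷y)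
      ≤ ∫⁻ f in Icc 0 N,
          ENNReal.ofReal (16 * √(B / (a * b)) * Q ^ (1 / 4 : ℝ) * f ^ (-(3 / 4) : ℝ)) :=
        lintegral_le_setLIntegral_vecCons measurableSet_Icc hsupp hinner
    _ = ENNReal.ofReal (64 * √(B / (a * b)) * Q ^ (1 / 4 : ℝ) * N ^ (1 / 4 : ℝ)) := by
        rw [setLIntegral_Icc_zero_rpow (by norm_num) (by positivity) hN]
        congr 1
        norm_num
        ring

end InnerIntegrals

/-! ### Integrating out the outer coordinates -/

/-- A common superset of `RSet B` and `RSet' B`: the height condition `h(η; B) ≤ 1` together with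
the constraints shared by the two regions. -/
def heightRegion (B : ℝ) : Set (Fin 8 → ℝ) :=
  {η | (∀ i : Fin 8, i.val ≤ 4 → 1 ≤ η i) ∧
    η 0 ^ 2 * η 1 ^ 2 * η 2 ^ 3 * η 3 ^ 2 ≤ B ∧ 0 ≤ η 5 ∧ hFun η B ≤ 1}

lemma RSet_subset_heightRegion {B : ℝ} (hB : 0 < B) : RSet B ⊆ heightRegion B := by
  rintro η ⟨h1, -, hη⟩
  have h5 : 1 ≤ η 5 := h1 5 le_rfl
  refine ⟨fun i hi => h1 i (by lia), ?_, by linarith, hη⟩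
  have h0 : 0 ≤ η 0 ^ 2 * η 1 ^ 2 * η 2 ^ 3 * η 3 ^ 2 := by
    have h2 : 1 ≤ η 2 := h1 2 (by decide)
    positivity
  exact (le_mul_of_one_le_right h0 h5).trans ((hFun_le_one_iff hB).1 hη).2.1

lemma RSet'_subset_heightRegion (B : ℝ) : RSet' B ⊆ heightRegion B :=
  fun _ ⟨h1, hX, _, h5, hη⟩ => ⟨h1, hX, h5, hη⟩

lemma mem_Icc_of_mem_heightRegion {B : ℝ} {η : Fin 8 → ℝ} (hη : η ∈ heightRegion B) {i : Fin 8}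
    (hi : i.val ≤ 3) : η i ∈ Icc 1 B := by
  obtain ⟨h1, hX, -⟩ := hη
  have hprod : η i ≤ ∏ j, η j ^ (![2, 2, 3, 2, 0, 0, 0, 0] : Fin 8 → ℕ) j :=
    le_prod_pow (fun j hj => h1 j (by decide +revert)) (by decide +revert)
  refine ⟨h1 i (by lia), le_trans ?_ hX⟩
  simpa [Fin.prod_univ_eight] using hprod

section OuterIntegrals

variable {E : Set (Fin 8 → ℝ)} {B k : ℝ}

lemma lintegral_torsorDensity_le_of_last_five (hE : E ⊆ heightRegion B) (hB : 1 ≤ B) (hk : 0 ≤ k)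
    (h : ∀ a ∈ Icc 1 B, ∀ b ∈ Icc 1 B, ∀ c ∈ Icc 1 B,
      ∫⁻ y : Fin 5 → ℝ, torsorDensity E (a∷b∷c∷y) ≤ ENNReal.ofReal (k / a / b / c)) :
    ∫⁻ η, torsorDensity E η ≤ ENNReal.ofReal (k * Real.log B ^ 3) := by
  have hmem : ∀ (i : Fin 8) η, i.val ≤ 3 → torsorDensity E η ≠ 0 → η i ∈ Icc 1 B :=
    fun i η hi hη => mem_Icc_of_mem_heightRegion (hE (mem_of_torsorDensity_ne_zero hη)) hi
  have hlog : 0 ≤ Real.log B := Real.log_nonneg hB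
  have hab : ∀ a ∈ Icc 1 B, ∀ b ∈ Icc 1 B, ∫⁻ y : Fin 6 → ℝ, torsorDensity E (a∷b∷y) ≤
      ENNReal.ofReal (k * Real.log B / a / b) := fun a ha b hb => by
    have ha0 := one_pos.trans_le ha.1
    have hb0 := one_pos.trans_le hb.1
    refine (lintegral_le_ofReal_mul_log (by positivity) hB
      (fun c y hy => hmem 2 (a∷b∷c∷y) (by decide) hy) (h a ha b hb)).trans_eq ?_
    congr 1; ring
  have ha : ∀ a ∈ Icc 1 B, ∫⁻ y : Fin 7 → ℝ, torsorDensity E (a∷y) ≤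
      ENNReal.ofReal (k * Real.log B ^ 2 / a) := fun a ha => by
    have ha0 := one_pos.trans_le ha.1
    refine (lintegral_le_ofReal_mul_log (by positivity) hB
      (fun b y hy => hmem 1 (a∷b∷y) (by decide) hy) (hab a ha)).trans_eq ?_
    congr 1; ring
  refine (lintegral_le_ofReal_mul_log (by positivity) hB
    (fun a y hy => hmem 0 (a∷y) (by decide) hy) ha).trans_eq ?_
  congr 1; ring

lemma lintegral_torsorDensity_le_of_last_four (hE : E ⊆ heightRegion B) (hB : 1 ≤ B) (hk : 0 ≤ k)
    (h : ∀ a ∈ Icc 1 B, ∀ b ∈ Icc 1 B, ∀ c ∈ Icc 1 B, ∀ d ∈ Icc 1 B,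
      ∫⁻ y : Fin 4 → ℝ, torsorDensity E (a∷b∷c∷d∷y) ≤
        ENNReal.ofReal (k / a / b / c / d)) :
    ∫⁻ η, torsorDensity E η ≤ ENNReal.ofReal (k * Real.log B ^ 4) := by
  have hlog : 0 ≤ Real.log B := Real.log_nonneg hB
  refine (lintegral_torsorDensity_le_of_last_five (k := k * Real.log B) hE hB (by positivity)
    fun a ha b hb c hc => ?_).trans_eq (by congr 1; ring)
  have ha0 := one_pos.trans_le ha.1
  have hb0 := one_pos.trans_le hb.1
  have hc0 := one_pos.trans_le hc.1
  refine (lintegral_le_ofReal_mul_log (by positivity) hB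
    (fun d y hy => mem_Icc_of_mem_heightRegion (η := a∷b∷c∷d∷y) (i := 3)
      (hE (mem_of_torsorDensity_ne_zero hy)) le_rfl) (h a ha b hb c hc)).trans_eq ?_
  congr 1; ring

end OuterIntegrals

/-! ### The three sources of error -/

section ErrorRegions

variable {B a b c d e : ℝ}

/-- The part of `RSet B` violating the condition `η₁³η₂³η₃⁴η₄²η₅⁻² ≥ B` of `RSet' B`. -/
def RSetLargeη₅ (B : ℝ) : Set (Fin 8 → ℝ) :=
  RSet B ∩ {η | η 0 ^ 3 * η 1 ^ 3 * η 2 ^ 4 * η 3 ^ 2 * (η 4 ^ 2)⁻¹ < B}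

/-- The part of `RSet' B` with `|η₇| ≤ 1`. -/
def RSetSmallη₇ (B : ℝ) : Set (Fin 8 → ℝ) := RSet' B ∩ {η | |η 6| ≤ 1}

/-- The part of `RSet' B` with `η₆ ≤ 1`. -/
def RSetSmallη₆ (B : ℝ) : Set (Fin 8 → ℝ) := RSet' B ∩ {η | η 5 ≤ 1}

lemma measurableSet_RSetLargeη₅ (B : ℝ) : MeasurableSet (RSetLargeη₅ B) :=
  (measurableSet_RSet B).inter (measurableSet_lt (by fun_prop) measurable_const)

lemma measurableSet_RSetSmallη₇ (B : ℝ) : MeasurableSet (RSetSmallη₇ B) :=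
  (measurableSet_RSet' B).inter (measurableSet_le (by fun_prop) measurable_const)

lemma measurableSet_RSetSmallη₆ (B : ℝ) : MeasurableSet (RSetSmallη₆ B) :=
  (measurableSet_RSet' B).inter (measurableSet_le (by fun_prop) measurable_const)

lemma lintegral_torsorDensity_RSetLargeη₅_last_three_le (hB : 0 < B) (ha : 0 < a) (hb : 0 < b)
    (hc : 0 < c) (hd : 0 < d) (he : 0 < e) :
    ∫⁻ y : Fin 3 → ℝ, torsorDensity (RSetLargeη₅ B) (a∷b∷c∷d∷e∷y) ≤
      ENNReal.ofReal (64 * √(B / (a * b)) * (B / (c * d ^ 2)) ^ (1 / 3 : ℝ) *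
        e ^ (-(4 / 3) : ℝ)) := by
  set Q := B / (c * d ^ 2 * e ^ 4) with hQ
  have hsupp : ∀ f y, torsorDensity (RSetLargeη₅ B) (a∷b∷c∷d∷e∷f∷y) ≠ 0 →
      f ∈ Icc 0 (Q ^ (1 / 3 : ℝ)) := by
    intro f y hy
    obtain ⟨⟨h1, hg, hη⟩, -⟩ := mem_of_torsorDensity_ne_zero hy
    have hf : 1 ≤ f := h1 5 le_rfl
    have hf3 : 1 ≤ √(Q / f ^ 3) :=
      hg.trans (abs_le_sqrt_of_hFun_le_one hB hη hc hd he (one_pos.trans_le hf))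
    rw [Real.one_le_sqrt, one_le_div₀ (by positivity), ← Real.rpow_natCast] at hf3
    rw [one_div]
    exact ⟨by positivity, (Real.le_rpow_inv_iff_of_pos (by positivity) (by positivity)
      (by norm_num)).2 hf3⟩
  refine (lintegral_torsorDensity_last_three_le (fun η hη => hη.1.2.2) hB ha hb hc hd he
    (by positivity) hsupp).trans_eq ?_
  rw [mul_assoc, hQ, ← div_div B (c * d ^ 2),
    rpow_quarter_mul_rpow_third_rpow_quarter (by positivity) he, mul_assoc _ (_ ^ _)]

lemma lintegral_torsorDensity_RSetLargeη₅_last_four_le (hB : 0 < B) (ha : 0 < a) (hb : 0 < b)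
    (hc : 0 < c) (hd : 0 < d) :
    ∫⁻ y : Fin 4 → ℝ, torsorDensity (RSetLargeη₅ B) (a∷b∷c∷d∷y) ≤
      ENNReal.ofReal (192 * B / a / b / c / d) := by
  set S := B / (c * d ^ 2) with hS
  set m := √(a ^ 3 * b ^ 3 * c ^ 4 * d ^ 2 / B) with hm
  have hm0 : 0 < m := by positivity
  have hsupp : ∀ e y, torsorDensity (RSetLargeη₅ B) (a∷b∷c∷d∷e∷y) ≠ 0 → e ∈ Ioi m := by
    intro e y hy
    obtain ⟨⟨h1, -⟩, hlt⟩ := mem_of_torsorDensity_ne_zero hy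
    have he : 1 ≤ e := h1 4 (by decide)
    replace hlt : a ^ 3 * b ^ 3 * c ^ 4 * d ^ 2 * (e ^ 2)⁻¹ < B := hlt
    rw [← div_eq_mul_inv, div_lt_iff₀ (by positivity)] at hlt
    rwa [mem_Ioi, hm, Real.sqrt_lt' (by positivity), div_lt_iff₀' hB]
  calc ∫⁻ y : Fin 4 → ℝ, torsorDensity (RSetLargeη₅ B) (a∷b∷c∷d∷y)
      ≤ ∫⁻ e in Ioi m,
          ENNReal.ofReal (64 * √(B / (a * b)) * S ^ (1 / 3 : ℝ) * e ^ (-(4 / 3) : ℝ)) :=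
        lintegral_le_setLIntegral_vecCons measurableSet_Ioi hsupp (.of_forall fun e he =>
          lintegral_torsorDensity_RSetLargeη₅_last_three_le hB ha hb hc hd (hm0.trans he))
    _ = ENNReal.ofReal (192 * (√(B / (a * b)) * S ^ (1 / 3 : ℝ) * m ^ (-(1 / 3) : ℝ))) := by
        rw [setLIntegral_Ioi_rpow (by norm_num) (by positivity) hm0]
        congr 1
        norm_num
        ring
    _ = ENNReal.ofReal (192 * B / a / b / c / d) := by
        rw [hS, hm, sqrt_mul_rpow_mul_sqrt_rpow_eq hB ha hb hc hd]
        congr 1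
        field

lemma setLIntegral_RSetLargeη₅_le (hB : 1 ≤ B) :
    ∫⁻ η in RSetLargeη₅ B, ‖(η 0)⁻¹‖ₑ ≤ ENNReal.ofReal (192 * B * Real.log B ^ 4) := by
  have hB0 := one_pos.trans_le hB
  rw [← lintegral_torsorDensity (measurableSet_RSetLargeη₅ B)]
  refine lintegral_torsorDensity_le_of_last_four
    (inter_subset_left.trans (RSet_subset_heightRegion hB0)) hB (by positivity)
    fun a ha b hb c hc d hd => ?_
  exact lintegral_torsorDensity_RSetLargeη₅_last_four_le hB0 (one_pos.trans_le ha.1)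
    (one_pos.trans_le hb.1) (one_pos.trans_le hc.1) (one_pos.trans_le hd.1)

lemma lintegral_torsorDensity_RSetSmallη₇_last_three_le (hB : 0 < B) (ha : 0 < a) (hb : 0 < b)
    (hc : 0 < c) (hd : 0 < d) :
    ∫⁻ y : Fin 3 → ℝ, torsorDensity (RSetSmallη₇ B) (a∷b∷c∷d∷e∷y) ≤
      ENNReal.ofReal (16 * √(B / (a * b)) * (B / (a ^ 2 * b ^ 2 * c ^ 3 * d ^ 2))) := by
  have hsupp : ∀ f y, torsorDensity (RSetSmallη₇ B) (a∷b∷c∷d∷e∷f∷y) ≠ 0 →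
      f ∈ Icc 0 (B / (a ^ 2 * b ^ 2 * c ^ 3 * d ^ 2)) := by
    intro f y hy
    obtain ⟨⟨-, -, -, hf, hη⟩, -⟩ := mem_of_torsorDensity_ne_zero hy
    refine ⟨hf, (le_div_iff₀' (by positivity)).2 ?_⟩
    exact ((hFun_le_one_iff hB).1 hη).2.1
  have hinner : ∀ f,
      ∫⁻ y : Fin 2 → ℝ, torsorDensity (RSetSmallη₇ B) (a∷b∷c∷d∷e∷f∷y) ≤
        ENNReal.ofReal (16 * √(B / (a * b))) := fun f => by
    have hg : ∀ g y, torsorDensity (RSetSmallη₇ B) (a∷b∷c∷d∷e∷f∷g∷y) ≠ 0 →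
        |g| ≤ 1 := fun _ _ hy => (mem_of_torsorDensity_ne_zero hy).2
    simpa only [Real.sqrt_one, mul_one] using lintegral_torsorDensity_last_two_le
      (fun η hη => hη.1.2.2.2.2) hB ha hb zero_le_one hg
  refine (lintegral_le_mul_volume_vecCons measurableSet_Icc hsupp fun f _ => hinner f).trans_eq ?_
  rw [Real.volume_Icc, sub_zero, ← ENNReal.ofReal_mul (by positivity)]

lemma lintegral_torsorDensity_RSetSmallη₇_last_four_le (hB : 0 < B) (ha : 0 < a) (hb : 0 < b)
    (hc : 0 < c) (hd : 0 < d) :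
    ∫⁻ y : Fin 4 → ℝ, torsorDensity (RSetSmallη₇ B) (a∷b∷c∷d∷y) ≤
      ENNReal.ofReal (16 * B / a / b / c / d) := by
  set N := B / (a ^ 2 * b ^ 2 * c ^ 3 * d ^ 2) with hN
  set m := √(a ^ 3 * b ^ 3 * c ^ 4 * d ^ 2 / B) with hm
  have hsupp : ∀ e y, torsorDensity (RSetSmallη₇ B) (a∷b∷c∷d∷e∷y) ≠ 0 →
      e ∈ Icc 0 m := by
    intro e y hy
    obtain ⟨⟨h1, -, hB_le, -⟩, -⟩ := mem_of_torsorDensity_ne_zero hy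
    have he : 1 ≤ e := h1 4 le_rfl
    replace hB_le : B ≤ a ^ 3 * b ^ 3 * c ^ 4 * d ^ 2 * (e ^ 2)⁻¹ := hB_le
    rw [← div_eq_mul_inv, le_div_iff₀ (by positivity)] at hB_le
    exact ⟨by linarith, Real.le_sqrt_of_sq_le ((le_div_iff₀' hB).2 hB_le)⟩
  calc ∫⁻ y : Fin 4 → ℝ, torsorDensity (RSetSmallη₇ B) (a∷b∷c∷d∷y)
      ≤ ENNReal.ofReal (16 * √(B / (a * b)) * N) * volume (Icc 0 m) :=
        lintegral_le_mul_volume_vecCons measurableSet_Icc hsupp fun e _ =>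
          lintegral_torsorDensity_RSetSmallη₇_last_three_le hB ha hb hc hd
    _ = ENNReal.ofReal (16 * N * (√(B / (a * b)) * m)) := by
        rw [Real.volume_Icc, sub_zero, ← ENNReal.ofReal_mul (by positivity)]
        congr 1; ring
    _ = ENNReal.ofReal (16 * B / a / b / c / d) := by
        rw [hm, sqrt_mul_sqrt_eq hB ha hb hc hd, hN]
        congr 1
        field

lemma setLIntegral_RSetSmallη₇_le (hB : 1 ≤ B) :
    ∫⁻ η in RSetSmallη₇ B, ‖(η 0)⁻¹‖ₑ ≤ ENNReal.ofReal (16 * B * Real.log B ^ 4) := by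
  have hB0 := one_pos.trans_le hB
  rw [← lintegral_torsorDensity (measurableSet_RSetSmallη₇ B)]
  refine lintegral_torsorDensity_le_of_last_four
    (inter_subset_left.trans (RSet'_subset_heightRegion B)) hB (by positivity)
    fun a ha b hb c hc d hd => ?_
  exact lintegral_torsorDensity_RSetSmallη₇_last_four_le hB0 (one_pos.trans_le ha.1)
    (one_pos.trans_le hb.1) (one_pos.trans_le hc.1) (one_pos.trans_le hd.1)

lemma mem_Icc_four_of_mem_RSet' {η : Fin 8 → ℝ} (hB : 0 < B) (hη : η ∈ RSet' B) :
    η 4 ∈ Icc 1 B := by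
  obtain ⟨h1, hX, hB_le, -⟩ := hη
  have h4 : 1 ≤ η 4 := h1 4 le_rfl
  have hX0 : 0 ≤ η 0 ^ 2 * η 1 ^ 2 * η 2 ^ 3 * η 3 ^ 2 := by
    have h2 : 1 ≤ η 2 := h1 2 (by decide)
    positivity
  have hsq : B * η 4 ^ 2 ≤ B * B :=
    calc B * η 4 ^ 2 ≤ η 0 ^ 3 * η 1 ^ 3 * η 2 ^ 4 * η 3 ^ 2 := by
          rwa [← div_eq_mul_inv, le_div_iff₀ (by positivity)] at hB_le
      _ ≤ η 0 ^ 4 * η 1 ^ 4 * η 2 ^ 6 * η 3 ^ 4 := by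
          have h0 : 1 ≤ η 0 := h1 0 (by decide)
          have h2 : 1 ≤ η 2 := h1 2 (by decide)
          have h3 : 1 ≤ η 3 := h1 3 (by decide)
          have h1 : 1 ≤ η 1 := h1 1 (by decide)
          gcongr <;> norm_num
      _ = (η 0 ^ 2 * η 1 ^ 2 * η 2 ^ 3 * η 3 ^ 2) * (η 0 ^ 2 * η 1 ^ 2 * η 2 ^ 3 * η 3 ^ 2) := by
          ring
      _ ≤ B * B := mul_self_le_mul_self hX0 hX
  exact ⟨h4, (le_self_pow₀ h4 two_ne_zero).trans (le_of_mul_le_mul_left hsq hB)⟩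

lemma lintegral_torsorDensity_RSetSmallη₆_last_four_le (hB : 1 ≤ B) (ha : 0 < a) (hb : 0 < b)
    (hc : 0 < c) (hd : 0 < d) :
    ∫⁻ y : Fin 4 → ℝ, torsorDensity (RSetSmallη₆ B) (a∷b∷c∷d∷y) ≤
      ENNReal.ofReal (64 * √(B / (a * b)) * (B / c) ^ (1 / 4 : ℝ) * Real.log B *
        d ^ (-(1 / 2) : ℝ)) := by
  have hB0 := one_pos.trans_le hB
  have hsupp_f : ∀ e f y, torsorDensity (RSetSmallη₆ B) (a∷b∷c∷d∷e∷f∷y) ≠ 0 →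
      f ∈ Icc 0 1 := fun e f y hy => by
    obtain ⟨⟨-, -, -, hf, -⟩, hf1⟩ := mem_of_torsorDensity_ne_zero hy
    exact ⟨hf, hf1⟩
  have hinner : ∀ e ∈ Icc 1 B,
      ∫⁻ y : Fin 3 → ℝ, torsorDensity (RSetSmallη₆ B) (a∷b∷c∷d∷e∷y) ≤
        ENNReal.ofReal (64 * √(B / (a * b)) * (B / c) ^ (1 / 4 : ℝ) * d ^ (-(1 / 2) : ℝ) / e) := by
    intro e he
    have he0 := one_pos.trans_le he.1
    refine (lintegral_torsorDensity_last_three_le (fun η hη => hη.1.2.2.2.2) hB0 ha hb hc hd he0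
      zero_le_one (hsupp_f e)).trans_eq ?_
    rw [div_rpow_quarter_eq hB0 hc hd he0, Real.one_rpow]
    congr 1; ring
  refine (lintegral_le_ofReal_mul_log (by positivity) hB (fun e y hy =>
    mem_Icc_four_of_mem_RSet' hB0 (mem_of_torsorDensity_ne_zero hy).1) hinner).trans_eq ?_
  congr 1; ring

lemma lintegral_torsorDensity_RSetSmallη₆_last_five_le (hB : 1 ≤ B) (ha : 0 < a) (hb : 0 < b)
    (hc : 0 < c) :
    ∫⁻ y : Fin 5 → ℝ, torsorDensity (RSetSmallη₆ B) (a∷b∷c∷y) ≤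
      ENNReal.ofReal (128 * B * Real.log B / a / b / c) := by
  have hB0 := one_pos.trans_le hB
  have hlog := Real.log_nonneg hB
  set D := √(B / (a ^ 2 * b ^ 2 * c ^ 3)) with hD
  have hsupp : ∀ d y, torsorDensity (RSetSmallη₆ B) (a∷b∷c∷d∷y) ≠ 0 → d ∈ Icc 0 D := by
    intro d y hy
    obtain ⟨⟨h1, hX, -⟩, -⟩ := mem_of_torsorDensity_ne_zero hy
    have hd : 1 ≤ d := h1 3 (by decide)
    exact ⟨by linarith, Real.le_sqrt_of_sq_le ((le_div_iff₀' (by positivity)).2 hX)⟩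
  have hinner : ∀ᵐ d, d ∈ Icc 0 D →
      ∫⁻ y : Fin 4 → ℝ, torsorDensity (RSetSmallη₆ B) (a∷b∷c∷d∷y) ≤
        ENNReal.ofReal (64 * √(B / (a * b)) * (B / c) ^ (1 / 4 : ℝ) * Real.log B *
          d ^ (-(1 / 2) : ℝ)) := by
    filter_upwards [Measure.ae_ne volume 0] with d hd0 hd
    exact lintegral_torsorDensity_RSetSmallη₆_last_four_le hB ha hb hc (hd.1.lt_of_ne' hd0)
  calc ∫⁻ y : Fin 5 → ℝ, torsorDensity (RSetSmallη₆ B) (a∷b∷c∷y)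
      ≤ ∫⁻ d in Icc 0 D, ENNReal.ofReal (64 * √(B / (a * b)) * (B / c) ^ (1 / 4 : ℝ) *
          Real.log B * d ^ (-(1 / 2) : ℝ)) :=
        lintegral_le_setLIntegral_vecCons measurableSet_Icc hsupp hinner
    _ = ENNReal.ofReal (128 * (√(B / (a * b)) * (B / c) ^ (1 / 4 : ℝ) * √D) * Real.log B) := by
        rw [setLIntegral_Icc_zero_rpow (by norm_num) (by positivity) (by positivity),
          Real.sqrt_eq_rpow D]
        congr 1
        norm_num
        ring
    _ = ENNReal.ofReal (128 * B * Real.log B / a / b / c) := by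
        rw [hD, sqrt_mul_rpow_mul_sqrt_sqrt_eq hB0 ha hb hc]
        congr 1
        field

lemma setLIntegral_RSetSmallη₆_le (hB : 1 ≤ B) :
    ∫⁻ η in RSetSmallη₆ B, ‖(η 0)⁻¹‖ₑ ≤ ENNReal.ofReal (128 * B * Real.log B ^ 4) := by
  have hlog := Real.log_nonneg hB
  rw [← lintegral_torsorDensity (measurableSet_RSetSmallη₆ B)]
  refine (lintegral_torsorDensity_le_of_last_five (k := 128 * B * Real.log B)
    (inter_subset_left.trans (RSet'_subset_heightRegion B)) hB (by positivity)
    fun a ha b hb c hc => ?_).trans_eq (by congr 1; ring)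
  exact lintegral_torsorDensity_RSetSmallη₆_last_five_le hB (one_pos.trans_le ha.1)
    (one_pos.trans_le hb.1) (one_pos.trans_le hc.1)

end ErrorRegions

/-! ### Comparison of the two volumes -/

lemma RSet_subset_closedBall {B : ℝ} (hB : 0 < B) : RSet B ⊆ Metric.closedBall 0 B := by
  rintro η ⟨h1, h6, hη⟩
  have habs : ∀ j : Fin 8, j.val ≤ 6 → 1 ≤ |η j| := fun j hj => by
    rcases hj.lt_or_eq with hj | hj
    · exact (h1 j (by lia)).trans (le_abs_self _)
    · rwa [(by lia : j = 6)]
  obtain ⟨hx, -, hg, -⟩ := (hFun_le_one_iff hB).1 hη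
  rw [mem_closedBall_zero_iff, pi_norm_le_iff_of_nonneg hB.le]
  intro i
  rw [Real.norm_eq_abs]
  rcases (by lia : i.val ≤ 6 ∨ i = 7) with hi | rfl
  · have hprod : |η i| ≤ ∏ j, |η j| ^ (![1, 1, 2, 2, 2, 2, 1, 0] : Fin 8 → ℕ) j :=
      le_prod_pow (x := fun j => |η j|) (fun j hj => habs j (by decide +revert))
        (by decide +revert)
    refine le_trans ?_ hg
    simpa [Fin.prod_univ_eight, abs_mul] using hprod
  · have hprod : 1 ≤ |η 1 * η 2 * η 3 * η 4 * η 5 * η 6| := by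
      have hprod : |η 1| ≤ ∏ j, |η j| ^ (![0, 1, 1, 1, 1, 1, 1, 0] : Fin 8 → ℕ) j :=
        le_prod_pow (x := fun j => |η j|) (fun j hj => habs j (by decide +revert)) one_ne_zero
      refine (habs 1 (by decide)).trans ?_
      simpa [Fin.prod_univ_eight, abs_mul] using hprod
    refine le_trans ?_ hx
    rw [abs_mul]
    exact le_mul_of_one_le_left (abs_nonneg _) hprod

lemma integrableOn_RSet {B : ℝ} (hB : 0 < B) :
    IntegrableOn (fun η : Fin 8 → ℝ => (η 0)⁻¹) (RSet B) := by
  have hfin : volume (RSet B) < ∞ :=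
    (measure_mono (RSet_subset_closedBall hB)).trans_lt measure_closedBall_lt_top
  refine Measure.integrableOn_of_bounded (M := 1) hfin.ne
    (by fun_prop : Measurable fun η : Fin 8 → ℝ => (η 0)⁻¹).aestronglyMeasurable ?_
  filter_upwards [ae_restrict_mem (measurableSet_RSet B)] with η hη
  have h0 : 1 ≤ η 0 := hη.1 0 (by decide)
  rw [Real.norm_of_nonneg (by positivity)]
  exact inv_le_one_of_one_le₀ h0

lemma symmDiff_RSet_RSet'_subset {B : ℝ} (hB : 0 < B) :
    RSet B ∆ RSet' B ⊆ RSetLargeη₅ B ∪ RSetSmallη₇ B ∪ RSetSmallη₆ B := by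
  rintro η (⟨hR, hR'⟩ | ⟨hR', hR⟩)
  · obtain ⟨h1, hX, h5, hη⟩ := RSet_subset_heightRegion hB hR
    exact Or.inl (Or.inl ⟨hR, not_le.1 fun h => hR' ⟨h1, hX, h, h5, hη⟩⟩)
  · rcases le_total |η 6| 1 with h6 | h6
    · exact Or.inl (Or.inr ⟨hR', h6⟩)
    · refine Or.inr ⟨hR', (not_lt.1 fun h5 => hR ⟨fun i hi => ?_, h6, hR'.2.2.2.2⟩ : η 5 ≤ 1)⟩
      rcases hi.lt_or_eq with hi | hi
      · exact hR'.1 i (by lia)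
      · exact (by lia : i = 5) ▸ h5.le

lemma setLIntegral_symmDiff_RSet_RSet'_le {B : ℝ} (hB : 1 ≤ B) :
    ∫⁻ η in RSet B ∆ RSet' B, ‖(η 0)⁻¹‖ₑ ≤ ENNReal.ofReal (336 * B * Real.log B ^ 4) := by
  have hB0 := one_pos.trans_le hB
  calc ∫⁻ η in RSet B ∆ RSet' B, ‖(η 0)⁻¹‖ₑ
      ≤ ∫⁻ η in RSetLargeη₅ B ∪ RSetSmallη₇ B ∪ RSetSmallη₆ B, ‖(η 0)⁻¹‖ₑ :=
        lintegral_mono_set (symmDiff_RSet_RSet'_subset hB0)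
    _ ≤ ENNReal.ofReal (192 * B * Real.log B ^ 4) + ENNReal.ofReal (16 * B * Real.log B ^ 4) +
          ENNReal.ofReal (128 * B * Real.log B ^ 4) :=
        (lintegral_union_le _ _ _).trans (add_le_add ((lintegral_union_le _ _ _).trans
          (add_le_add (setLIntegral_RSetLargeη₅_le hB) (setLIntegral_RSetSmallη₇_le hB)))
          (setLIntegral_RSetSmallη₆_le hB))
    _ = ENNReal.ofReal (336 * B * Real.log B ^ 4) := by
        rw [← ENNReal.ofReal_add (by positivity) (by positivity),
          ← ENNReal.ofReal_add (by positivity) (by positivity)]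
        congr 1; ring

theorem V0_eq_V0'_add_error_general {B : ℝ} (hB : 1 ≤ B) :
    |V0 B - V0' B| ≤ 336 * B * Real.log B ^ 4 := by
  have hB0 := one_pos.trans_le hB
  have hbound := setLIntegral_symmDiff_RSet_RSet'_le hB
  have hint := integrableOn_RSet hB0
  have hmeas : Measurable fun η : Fin 8 → ℝ => (η 0)⁻¹ := by fun_prop
  have hint' : IntegrableOn (fun η : Fin 8 → ℝ => (η 0)⁻¹) (RSet' B) :=
    integrableOn_of_lintegral_symmDiff_lt_top hmeas.aestronglyMeasurable hint
      (hbound.trans_lt ENNReal.ofReal_lt_top)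
  rw [← Real.norm_eq_abs, ← ENNReal.ofReal_le_ofReal_iff (by positivity), ofReal_norm]
  exact (enorm_setIntegral_sub_setIntegral_le (measurableSet_RSet B) (measurableSet_RSet' B)
    hint hint').trans hbound

/-- Comparison of the torsor volume with the modified volume:
`V₀(B) = V₀'(B) + O(B (log B)⁴)`. -/
theorem V0_eq_V0'_add_error :
    ∃ K : ℝ, 0 < K ∧ ∀ B : ℝ, 3 ≤ B → |V0 B - V0' B| ≤ K * B * Real.log B ^ 4 :=
  ⟨336, by norm_num, fun _ hB => V0_eq_V0'_add_error_general (by linarith)⟩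
end
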